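/- (Low-order pure multipole expansion for point defects.) Let N = d, let 0 ≤ p < d and J ≥ 0 be integers, and let V ∈ C^K(ℝ^{d×ℛ}) with K ≥ J + 2 satisfy the point symmetry. Let C_{σρ} := ∂²V/∂g_σ∂g_ρ(0), assume H is stable and admits a lattice Green's function 𝒢. Let g : Λ → ℝ^{d×ℛ} have compact support and let ū ∈ 𝓗¹ satisfy δE(ū)[v] = ∑_{ℓ∈Λ}∑_{ρ∈ℛ} g_ρ(ℓ)·D_ρ v(ℓ) for all v ∈ 𝓗ᶜ. Then for any lattice basis 𝒮 there exist symmetric arrays b^{(i,k)} ∈ (ℝ^𝒮)^{⊙i} for 1 ≤ i ≤ p, 1 ≤ k ≤ d, such that the remainder r_{p+1} := ū − ∑_{i=1}^{p}∑_{k=1}^{d} b^{(i,k)} : D_𝒮^i 𝒢_k satisfies |D^j r_{p+1}(ℓ)| ≤ C⟨ℓ⟩^{1−d−p−j} for all ℓ ∈ Λ and j = 1,…,J (with no logarithmic factor). -/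

import Mathlib

noncomputable section

open scoped BigOperators
open MeasureTheory Filter Topology

namespace Defect

abbrev Vec (n : ℕ) : Type := Fin n → ℝ

/-- Euclidean norm of a vector in `ℝ^n`. -/
def enorm {n : ℕ} (v : Vec n) : ℝ := Real.sqrt (∑ i, (v i) ^ 2)

/-- `⟨x⟩ := |x| + 2`. -/
def ang {n : ℕ} (v : Vec n) : ℝ := enorm v + 2

def dotV {n : ℕ} (x y : Vec n) : ℝ := ∑ i, x i * y i

/-- Matrix-vector product for a plain `Fin N → Fin N → ℝ` matrix. -/
def mulV {N : ℕ} (M : Fin N → Fin N → ℝ) (v : Vec N) : Vec N := fun i => ∑ j, M i j * v j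

/-- Euclidean (Frobenius) norm of an `N × N` array. -/
def mnorm {N : ℕ} (M : Fin N → Fin N → ℝ) : ℝ := Real.sqrt (∑ i, ∑ j, (M i j) ^ 2)

/-- The lattice point `A z` for `z ∈ ℤ^d`. -/
def latticePt (d : ℕ) (A : Matrix (Fin d) (Fin d) ℝ) (z : Fin d → ℤ) : Vec d :=
  fun i => ∑ j, A i j * (z j : ℝ)

/-- The Bravais lattice `Λ = A ℤ^d`. -/
def Lattice (d : ℕ) (A : Matrix (Fin d) (Fin d) ℝ) : Set (Vec d) :=
  Set.range (latticePt d A)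

/-- First-order finite difference `D_ρ u (ℓ) = u(ℓ+ρ) - u(ℓ)`. -/
def D1 {d : ℕ} {M : Type} [AddCommGroup M] (ρ : Vec d) (u : Vec d → M) (ℓ : Vec d) : M :=
  u (ℓ + ρ) - u ℓ

/-- Iterated finite difference `D_{ρ₁} ⋯ D_{ρ_j} u (ℓ)` (closed form). -/
def Dmulti {d : ℕ} {M : Type} [AddCommGroup M] [Module ℝ M] {j : ℕ}
    (ρs : Fin j → Vec d) (u : Vec d → M) (ℓ : Vec d) : M :=
  ∑ S : Finset (Fin j), ((-1 : ℝ) ^ (j - S.card)) • u (ℓ + ∑ i ∈ S, ρs i)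

/-- `|Du(ℓ)|²`, the squared Euclidean norm of the stencil of first differences. -/
def Dnorm1Sq {d N : ℕ} (R : Finset (Vec d)) (u : Vec d → Vec N) (ℓ : Vec d) : ℝ :=
  ∑ ρ ∈ R, (enorm (D1 ρ u ℓ)) ^ 2

/-- `|D^j u(ℓ)|`, the Euclidean norm of the array `(D_{ρ⃗} u(ℓ))_{ρ⃗ ∈ R^j}`. -/
def DnormJ {d N : ℕ} (R : Finset (Vec d)) (j : ℕ) (u : Vec d → Vec N) (ℓ : Vec d) : ℝ :=
  Real.sqrt (∑ ρs : Fin j → {x // x ∈ R},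
    (enorm (Dmulti (fun i => (ρs i : Vec d)) u ℓ)) ^ 2)

/-- The linearized lattice operator
`H[u](ℓ) = ∑_{σ,ρ∈R} (C_{σρ} D_ρ u(ℓ-σ) - C_{σρ} D_ρ u(ℓ))`. -/
def Hop (d N : ℕ) (R : Finset (Vec d)) (C : Vec d → Vec d → Fin N → Fin N → ℝ)
    (u : Vec d → Vec N) (ℓ : Vec d) : Vec N :=
  ∑ σ ∈ R, ∑ ρ ∈ R, (mulV (C σ ρ) (D1 ρ u (ℓ - σ)) - mulV (C σ ρ) (D1 ρ u ℓ))

/-- `u ∈ 𝓗¹`. -/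
def InH1 {d N : ℕ} (A : Matrix (Fin d) (Fin d) ℝ) (R : Finset (Vec d))
    (u : Vec d → Vec N) : Prop :=
  Summable fun z : Fin d → ℤ => Dnorm1Sq R u (latticePt d A z)

/-- `u ∈ 𝓗ᶜ` : the stencil `Du` has bounded support on the lattice. -/
def InHc {d N : ℕ} (A : Matrix (Fin d) (Fin d) ℝ) (R : Finset (Vec d))
    (u : Vec d → Vec N) : Prop :=
  ∃ rad : ℝ, ∀ z : Fin d → ℤ, rad ≤ enorm (latticePt d A z) →
    ∀ ρ ∈ R, D1 ρ u (latticePt d A z) = 0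

/-- Stability of the lattice operator `H`. -/
def IsStable (d N : ℕ) (A : Matrix (Fin d) (Fin d) ℝ) (R : Finset (Vec d))
    (C : Vec d → Vec d → Fin N → Fin N → ℝ) : Prop :=
  ∃ c₀ : ℝ, 0 < c₀ ∧ ∀ u : Vec d → Vec N, InHc A R u →
    c₀ * (∑' z : Fin d → ℤ, Dnorm1Sq R u (latticePt d A z)) ≤
      ∑' z : Fin d → ℤ, ∑ σ ∈ R, ∑ ρ ∈ R,
        dotV (D1 σ u (latticePt d A z)) (mulV (C σ ρ) (D1 ρ u (latticePt d A z)))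

/-- `k`-th column of a matrix-valued function. -/
def col {d N : ℕ} (G : Vec d → Fin N → Fin N → ℝ) (k : Fin N) : Vec d → Vec N :=
  fun x i => G x i k

/-- `|D^j 𝒢(ℓ)|` for matrix-valued `𝒢`. -/
def DnormJmat {d N : ℕ} (R : Finset (Vec d)) (j : ℕ)
    (G : Vec d → Fin N → Fin N → ℝ) (ℓ : Vec d) : ℝ :=
  Real.sqrt (∑ k : Fin N, (DnormJ R j (col G k) ℓ) ^ 2)

/-- `𝒢` is a lattice Green's function for `H`. -/
def IsLatticeGreen (d N : ℕ) (A : Matrix (Fin d) (Fin d) ℝ) (R : Finset (Vec d))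
    (C : Vec d → Vec d → Fin N → Fin N → ℝ) (G : Vec d → Fin N → Fin N → ℝ) : Prop :=
  (∀ (k : Fin N) (z : Fin d → ℤ),
      Hop d N R C (col G k) (latticePt d A z) =
        if latticePt d A z = 0 then Pi.single k 1 else 0) ∧
  (∀ j : ℕ, 1 ≤ j → ∃ cj : ℝ, ∀ z : Fin d → ℤ,
      DnormJmat R j G (latticePt d A z) ≤
        cj * ang (latticePt d A z) ^ ((2 : ℝ) - d - j))

/-- A symmetric array `b ∈ (ℝ^{Fin d})^{⊙ i}`. -/
def SymArr {d i : ℕ} (b : (Fin i → Fin d) → ℝ) : Prop :=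
  ∀ (π : Equiv.Perm (Fin i)) (σv : Fin i → Fin d), b (σv ∘ π) = b σv

/-- `b : D_𝒮^i f`, a multipole term built from the basis `s`. -/
def multipole (d N : ℕ) (s : Fin d → Vec d) (i : ℕ) (b : (Fin i → Fin d) → ℝ)
    (f : Vec d → Vec N) : Vec d → Vec N :=
  fun ℓ => ∑ σv : Fin i → Fin d, b σv • Dmulti (fun m => s (σv m)) f ℓ

/-- Iterated partial derivative `∂_{j₁} ⋯ ∂_{j_i} f (x)`. -/
def pderivMulti {d : ℕ} (i : ℕ) (js : Fin i → Fin d) (f : Vec d → ℝ) (x : Vec d) : ℝ :=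
  iteratedFDeriv ℝ i f x (fun m => Pi.single (js m) (1 : ℝ))

/-- `a : ∇^i f (x)` for a tensor `a ∈ (ℝ^d)^{⊗ i}`. -/
def aContract {d : ℕ} (i : ℕ) (a : (Fin i → Fin d) → ℝ) (f : Vec d → ℝ) (x : Vec d) : ℝ :=
  ∑ js : Fin i → Fin d, a js * pderivMulti i js f x

/-- Elementary tensor `σ⃗^⊗` as an array. -/
def tensorPow {d k : ℕ} (σs : Fin k → Vec d) : (Fin k → Fin d) → ℝ :=
  fun js => ∏ m, σs m (js m)

/-- Symmetric tensor product `σ⃗^⊙`. -/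
def symTensor {d k : ℕ} (σs : Fin k → Vec d) : (Fin k → Fin d) → ℝ :=
  fun js => ((k.factorial : ℝ))⁻¹ * ∑ π : Equiv.Perm (Fin k), tensorPow (σs ∘ π) js

/-- A symmetric tensor (array invariant under index permutations). -/
def SymTensor {d k : ℕ} (T : (Fin k → Fin d) → ℝ) : Prop :=
  ∀ (π : Equiv.Perm (Fin k)) (js : Fin k → Fin d), T (js ∘ π) = T js

/-- `∂V/∂g_ρ (gs)` as a vector in `ℝ^N`. -/
def gradV {d N : ℕ} (R : Finset (Vec d)) (V : ({x // x ∈ R} → Vec N) → ℝ)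
    (ρ : {x // x ∈ R}) (gs : {x // x ∈ R} → Vec N) : Vec N :=
  fun i => fderiv ℝ V gs (Pi.single ρ (Pi.single i 1))

/-- The finite-difference stencil `Du(ℓ) = (D_ρ u(ℓ))_{ρ ∈ R}`. -/
def Dstencil {d N : ℕ} (R : Finset (Vec d)) (u : Vec d → Vec N) (ℓ : Vec d) :
    {x // x ∈ R} → Vec N :=
  fun ρ => D1 (ρ : Vec d) u ℓ

/-- `C_{σρ} = ∂²V/∂g_σ ∂g_ρ (0)`. -/
def CofV {d N : ℕ} (R : Finset (Vec d)) (V : ({x // x ∈ R} → Vec N) → ℝ)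
    (σ ρ : Vec d) (i j : Fin N) : ℝ :=
  if hσ : σ ∈ R then
    if hρ : ρ ∈ R then
      iteratedFDeriv ℝ 2 V 0
        ![Pi.single ⟨σ, hσ⟩ (Pi.single i 1), Pi.single ⟨ρ, hρ⟩ (Pi.single j 1)]
    else 0
  else 0

/-- Summand of the first variation `δE(u)[v]` at a site. -/
def deltaEsite {d N : ℕ} (R : Finset (Vec d)) (V : ({x // x ∈ R} → Vec N) → ℝ)
    (u v : Vec d → Vec N) (ℓ : Vec d) : ℝ :=
  ∑ ρ ∈ R.attach, dotV (gradV R V ρ (Dstencil R u ℓ)) (D1 (ρ : Vec d) v ℓ)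

/-- The pointwise atomistic force `δE(u)(ℓ)`. -/
def deltaEpt {d N : ℕ} (R : Finset (Vec d)) (V : ({x // x ∈ R} → Vec N) → ℝ)
    (u : Vec d → Vec N) (ℓ : Vec d) : Vec N :=
  ∑ ρ ∈ R.attach,
    (gradV R V ρ (Dstencil R u (ℓ - (ρ : Vec d))) - gradV R V ρ (Dstencil R u ℓ))

/-- Point symmetry of the site potential. -/
def PointSym {d N : ℕ} (R : Finset (Vec d)) (hRsym : ∀ ρ ∈ R, -ρ ∈ R)
    (V : ({x // x ∈ R} → Vec N) → ℝ) : Prop :=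
  ∀ gs : {x // x ∈ R} → Vec N,
    V (fun ρ => -(gs ⟨-(ρ : Vec d), hRsym _ ρ.2⟩)) = V gs

/-- The Cauchy–Born elasticity tensor `ℂ_{iajb}`. -/
def CB {d N : ℕ} (A : Matrix (Fin d) (Fin d) ℝ) (R : Finset (Vec d))
    (C : Vec d → Vec d → Fin N → Fin N → ℝ)
    (i : Fin N) (a : Fin d) (j : Fin N) (b : Fin d) : ℝ :=
  (|A.det|)⁻¹ * ∑ ρ ∈ R, ∑ σ ∈ R, C ρ σ i j * ρ a * σ b

set_option linter.unusedSectionVars false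
set_option linter.unusedVariables false

set_option linter.unusedSectionVars false
set_option linter.unusedVariables false

section DecCalculus

/-- Finite difference on an additive group. -/
def df {Z E : Type*} [AddCommGroup Z] [AddCommGroup E] (τ : Z) (f : Z → E) : Z → E :=
  fun z => f (z + τ) - f z

/-- Iterated finite difference along a list of directions. -/
def DD {Z E : Type*} [AddCommGroup Z] [AddCommGroup E] : List Z → (Z → E) → Z → E
  | [], f => f
  | a :: l, f => DD l (df a f)

/-- Admissible weights. -/
structure GoodW {Z I : Type*} [AddCommGroup Z] (lam : I → Z → ℝ) : Prop where
  one_le : ∀ i z, 1 ≤ lam i z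
  shift : ∀ τ, ∃ C, 0 ≤ C ∧ ∀ i z, lam i z ≤ C * lam i (z + τ)

/-- Uniform decay of order `s`. -/
def Bd {Z I E : Type*} [NormedAddCommGroup E] (lam : I → Z → ℝ) (s : ℕ) (f : I → Z → E) : Prop :=
  ∃ C, 0 ≤ C ∧ ∀ i z, ‖f i z‖ ≤ C * (lam i z ^ s)⁻¹

/-- Symbol-type decay: each finite difference (up to order `n`) gains one power. -/
def Dec {Z I E : Type*} [AddCommGroup Z] [NormedAddCommGroup E] (lam : I → Z → ℝ) :
    ℕ → ℕ → (I → Z → E) → Prop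
  | 0, s, f => Bd lam s f
  | n + 1, s, f => Bd lam s f ∧ ∀ τ, Dec lam n (s + 1) (fun i => df τ (f i))

variable {Z I E E₁ E₂ : Type*} [AddCommGroup Z]
  [NormedAddCommGroup E] [NormedSpace ℝ E] [NormedAddCommGroup E₁] [NormedSpace ℝ E₁]
  [NormedAddCommGroup E₂] [NormedSpace ℝ E₂] {lam : I → Z → ℝ}

lemma df_add (τ : Z) (f g : Z → E) : df τ (fun z => f z + g z) = fun z => df τ f z + df τ g z := by
  funext z; simp only [df]; abel

lemma df_sub (τ : Z) (f g : Z → E) : df τ (fun z => f z - g z) = fun z => df τ f z - df τ g z := by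
  funext z; simp only [df]; abel

lemma df_neg (τ : Z) (f : Z → E) : df τ (fun z => -f z) = fun z => -df τ f z := by
  funext z; simp only [df]; abel

lemma df_smul (τ : Z) (c : ℝ) (f : Z → E) : df τ (fun z => c • f z) = fun z => c • df τ f z := by
  funext z; simp only [df, smul_sub]

lemma df_sum {κ : Type*} (s : Finset κ) (τ : Z) (f : κ → Z → E) :
    df τ (fun z => ∑ k ∈ s, f k z) = fun z => ∑ k ∈ s, df τ (f k) z := by
  funext z; simp only [df, Finset.sum_sub_distrib]

lemma df_comm (a b : Z) (f : Z → E) : df a (df b f) = df b (df a f) := by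
  funext z; simp only [df, add_right_comm z a b]; abel

lemma df_shift (a b : Z) (f : Z → E) :
    df a (fun z => f (z + b)) = fun z => df a f (z + b) := by
  funext z; simp only [df, add_right_comm z a b]

lemma df_dir_add (a b : Z) (f : Z → E) : df (a + b) f = fun z => df a f (z + b) + df b f z := by
  funext z; simp only [df]
  rw [show z + (a + b) = z + b + a by abel]; abel

lemma df_dir_neg (a : Z) (f : Z → E) : df (-a) f = fun z => -df a f (z + -a) := by
  funext z; simp only [df]
  rw [show z + -a + a = z by abel]; abel

lemma df_dir_zero (f : Z → E) : df 0 f = fun _ => 0 := by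
  funext z; simp [df]

lemma df_const (a : Z) (c : E) : df a (fun _ : Z => c) = fun _ => 0 := by
  funext z; simp [df]

lemma DD_add (l : List Z) : ∀ (f g : Z → E),
    DD l (fun z => f z + g z) = fun z => DD l f z + DD l g z := by
  induction l with
  | nil => intro f g; rfl
  | cons a l ih => intro f g; simp only [DD, df_add, ih]

lemma DD_sub (l : List Z) : ∀ (f g : Z → E),
    DD l (fun z => f z - g z) = fun z => DD l f z - DD l g z := by
  induction l with
  | nil => intro f g; rfl
  | cons a l ih => intro f g; simp only [DD, df_sub, ih]

lemma DD_smul (l : List Z) (c : ℝ) : ∀ (f : Z → E),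
    DD l (fun z => c • f z) = fun z => c • DD l f z := by
  induction l with
  | nil => intro f; rfl
  | cons a l ih => intro f; simp only [DD, df_smul, ih]

lemma DD_zero (l : List Z) : DD l (fun _ => (0 : E)) = fun _ => 0 := by
  induction l with
  | nil => rfl
  | cons a l ih => simp only [DD, df_const, ih]

lemma DD_sum {κ : Type*} (s : Finset κ) (l : List Z) : ∀ (f : κ → Z → E),
    DD l (fun z => ∑ k ∈ s, f k z) = fun z => ∑ k ∈ s, DD l (f k) z := by
  induction l with
  | nil => intro f; rfl
  | cons a l ih => intro f; simp only [DD, df_sum, ih]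

lemma DD_shift (l : List Z) (b : Z) : ∀ (f : Z → E),
    DD l (fun z => f (z + b)) = fun z => DD l f (z + b) := by
  induction l with
  | nil => intro f; rfl
  | cons a l ih => intro f; simp only [DD, df_shift, ih]

lemma DD_df (l : List Z) (b : Z) : ∀ (f : Z → E), DD l (df b f) = df b (DD l f) := by
  induction l with
  | nil => intro f; rfl
  | cons a l ih => intro f; simp only [DD]; rw [df_comm, ih]

lemma DD_comm (l l' : List Z) : ∀ (f : Z → E), DD l (DD l' f) = DD l' (DD l f) := by
  induction l with
  | nil => intro f; rfl
  | cons a l ih => intro f; simp only [DD]; rw [← DD_df, ih]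

lemma DD_append (l l' : List Z) : ∀ (f : Z → E), DD (l ++ l') f = DD l' (DD l f) := by
  induction l with
  | nil => intro f; rfl
  | cons a l ih => intro f; simp only [List.cons_append, DD, ih]

lemma DD_perm {l l' : List Z} (h : l.Perm l') : ∀ (f : Z → E), DD l f = DD l' f := by
  induction h with
  | nil => intro f; rfl
  | cons a _ ih => intro f; simp only [DD, ih]
  | swap a b l => intro f; simp only [DD, df_comm]
  | trans _ _ ih1 ih2 => intro f; rw [ih1, ih2]

/-! ### `Bd` -/

lemma Bd.add {s : ℕ} {f g : I → Z → E} (hf : Bd lam s f) (hg : Bd lam s g) :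
    Bd lam s (fun i z => f i z + g i z) := by
  obtain ⟨C, hC, h⟩ := hf
  obtain ⟨C', hC', h'⟩ := hg
  refine ⟨C + C', by positivity, fun i z => ?_⟩
  calc _ ≤ ‖f i z‖ + ‖g i z‖ := norm_add_le _ _
    _ ≤ _ := by rw [add_mul]; exact add_le_add (h i z) (h' i z)

lemma Bd.neg {s : ℕ} {f : I → Z → E} (hf : Bd lam s f) : Bd lam s (fun i z => -f i z) := by
  simpa [Bd] using hf

lemma Bd.zero (s : ℕ) : Bd lam s (fun _ _ => (0 : E)) := ⟨0, le_rfl, fun i z => by simp⟩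

lemma Bd.bilin (B : E →L[ℝ] E₁ →L[ℝ] E₂) {s t : ℕ} {f : I → Z → E} {g : I → Z → E₁}
    (hw : GoodW lam) (hf : Bd lam s f) (hg : Bd lam t g) :
    Bd lam (s + t) (fun i z => B (f i z) (g i z)) := by
  obtain ⟨C, hC, h⟩ := hf
  obtain ⟨C', hC', h'⟩ := hg
  refine ⟨‖B‖ * C * C', by positivity, fun i z => ?_⟩
  have h0 : 0 < lam i z := lt_of_lt_of_le one_pos (hw.one_le i z)
  calc _ ≤ ‖B‖ * ‖f i z‖ * ‖g i z‖ := B.le_opNorm₂ _ _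
    _ ≤ ‖B‖ * (C * (lam i z ^ s)⁻¹) * (C' * (lam i z ^ t)⁻¹) := by
        gcongr
        · exact h i z
        · exact h' i z
    _ = _ := by rw [pow_add, mul_inv]; ring

lemma Bd.clm (L : E →L[ℝ] E₁) {s : ℕ} {f : I → Z → E}
    (hw : GoodW lam) (hf : Bd lam s f) : Bd lam s (fun i z => L (f i z)) := by
  obtain ⟨C, hC, h⟩ := hf
  refine ⟨‖L‖ * C, by positivity, fun i z => ?_⟩
  calc _ ≤ ‖L‖ * ‖f i z‖ := L.le_opNorm _
    _ ≤ ‖L‖ * (C * (lam i z ^ s)⁻¹) := by gcongr; exact h i z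
    _ = _ := by ring

lemma Bd.shift (hw : GoodW lam) {s : ℕ} {f : I → Z → E} (hf : Bd lam s f) (τ : Z) :
    Bd lam s (fun i z => f i (z + τ)) := by
  obtain ⟨C, hC, h⟩ := hf
  obtain ⟨K, hK, hk⟩ := hw.shift τ
  refine ⟨C * K ^ s, by positivity, fun i z => ?_⟩
  refine (h i (z + τ)).trans ?_
  rw [mul_assoc]
  gcongr
  have h1 : 0 < lam i z := lt_of_lt_of_le one_pos (hw.one_le i z)
  have h2 : 0 < lam i (z + τ) := lt_of_lt_of_le one_pos (hw.one_le i (z + τ))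
  rw [← div_eq_mul_inv, inv_le_iff_one_le_mul₀ (by positivity), div_mul_eq_mul_div,
    one_le_div (by positivity), ← mul_pow]
  gcongr
  exact hk i z

lemma Bd.mono (hw : GoodW lam) {s t : ℕ} {f : I → Z → E} (hf : Bd lam t f) (hst : s ≤ t) :
    Bd lam s f := by
  obtain ⟨C, hC, h⟩ := hf
  refine ⟨C, hC, fun i z => (h i z).trans ?_⟩
  have h1 := hw.one_le i z
  gcongr

lemma Bd.df (hw : GoodW lam) {s : ℕ} {f : I → Z → E} (hf : Bd lam s f) (τ : Z) :
    Bd lam s (fun i => df τ (f i)) := by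
  have := (hf.shift hw τ).add hf.neg
  simp only [← sub_eq_add_neg] at this
  exact this

/-! ### `Dec` -/

lemma Dec.bd {n s : ℕ} {f : I → Z → E} (h : Dec lam n s f) : Bd lam s f := by
  cases n with
  | zero => exact h
  | succ n => exact h.1

lemma Dec.add {n : ℕ} : ∀ {s : ℕ} {f g : I → Z → E}, Dec lam n s f → Dec lam n s g →
    Dec lam n s (fun i z => f i z + g i z) := by
  induction n with
  | zero => intro s f g hf hg; exact Bd.add hf hg
  | succ n ih =>
    intro s f g hf hg
    refine ⟨hf.1.add hg.1, fun τ => ?_⟩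
    simp only [df_add]
    exact ih (hf.2 τ) (hg.2 τ)

lemma Dec.neg {n : ℕ} : ∀ {s : ℕ} {f : I → Z → E}, Dec lam n s f →
    Dec lam n s (fun i z => -f i z) := by
  induction n with
  | zero => intro s f hf; exact Bd.neg hf
  | succ n ih =>
    intro s f hf
    refine ⟨hf.1.neg, fun τ => ?_⟩
    simp only [df_neg]
    exact ih (hf.2 τ)

lemma Dec.sub {n s : ℕ} {f g : I → Z → E} (hf : Dec lam n s f) (hg : Dec lam n s g) :
    Dec lam n s (fun i z => f i z - g i z) := by
  simpa [sub_eq_add_neg] using hf.add hg.neg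

lemma Dec.zero {n : ℕ} : ∀ {s : ℕ}, Dec lam n s (fun _ _ => (0 : E)) := by
  induction n with
  | zero => intro s; exact Bd.zero s
  | succ n ih =>
    intro s
    refine ⟨Bd.zero s, fun τ => ?_⟩
    simp only [df_const]
    exact ih

lemma Dec.sum {κ : Type*} (S : Finset κ) {n s : ℕ} {f : κ → I → Z → E}
    (h : ∀ k ∈ S, Dec lam n s (f k)) : Dec lam n s (fun i z => ∑ k ∈ S, f k i z) := by
  classical
  induction S using Finset.induction_on with
  | empty => simpa using Dec.zero
  | insert a S ha ih =>
    simp only [Finset.sum_insert ha]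
    exact (h a (by simp)).add (ih fun k hk => h k (by simp [hk]))

lemma Dec.shift (hw : GoodW lam) {n : ℕ} : ∀ {s : ℕ} {f : I → Z → E}, Dec lam n s f →
    ∀ τ : Z, Dec lam n s (fun i z => f i (z + τ)) := by
  induction n with
  | zero => intro s f hf τ; exact Bd.shift hw hf τ
  | succ n ih =>
    intro s f hf τ
    refine ⟨hf.1.shift hw τ, fun τ' => ?_⟩
    simp only [df_shift]
    exact ih (hf.2 τ') τ

lemma Dec.mono (hw : GoodW lam) {n : ℕ} : ∀ {s t : ℕ} {f : I → Z → E}, Dec lam n t f → s ≤ t →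
    Dec lam n s f := by
  induction n with
  | zero => intro s t f hf hst; exact Bd.mono hw hf hst
  | succ n ih =>
    intro s t f hf hst
    exact ⟨hf.1.mono hw hst, fun τ' => ih (hf.2 τ') (by omega)⟩

lemma Dec.pred {n : ℕ} : ∀ {s : ℕ} {f : I → Z → E}, Dec lam (n + 1) s f → Dec lam n s f := by
  induction n with
  | zero => intro s f hf; exact hf.1
  | succ n ih => intro s f hf; exact ⟨hf.1, fun τ => ih (hf.2 τ)⟩

lemma Dec.of_le {n m s : ℕ} {f : I → Z → E} (h : Dec lam n s f) (hm : m ≤ n) : Dec lam m s f := by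
  induction hm with
  | refl => exact h
  | step _ ih => exact ih h.pred

lemma Dec.clm (hw : GoodW lam) (L : E →L[ℝ] E₁) {n : ℕ} : ∀ {s : ℕ} {f : I → Z → E},
    Dec lam n s f → Dec lam n s (fun i z => L (f i z)) := by
  induction n with
  | zero => intro s f hf; exact Bd.clm L hw hf
  | succ n ih =>
    intro s f hf
    refine ⟨hf.1.clm L hw, fun τ => ?_⟩
    have := ih (hf.2 τ)
    simp only [df, map_sub] at this
    exact this

lemma Dec.bilin (hw : GoodW lam) (B : E →L[ℝ] E₁ →L[ℝ] E₂) {n : ℕ} :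
    ∀ {s t : ℕ} {f : I → Z → E} {g : I → Z → E₁}, Dec lam n s f → Dec lam n t g →
    Dec lam n (s + t) (fun i z => B (f i z) (g i z)) := by
  induction n with
  | zero => intro s t f g hf hg; exact Bd.bilin B hw hf hg
  | succ n ih =>
    intro s t f g hf hg
    refine ⟨hf.1.bilin B hw hg.1, fun τ => ?_⟩
    have h1 := ih (hf.2 τ) (hg.pred.shift hw τ)
    have h2 := ih hf.pred (hg.2 τ)
    rw [Nat.add_right_comm] at h1
    have h3 := h1.add h2
    convert h3 using 3 with i z
    simp only [df, map_sub, sub_apply]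
    abel

lemma Dec.of_bd (hw : GoodW lam) {n : ℕ} : ∀ {s : ℕ} {f : I → Z → E}, Bd lam (s + n) f →
    Dec lam n s f := by
  induction n with
  | zero => intro s f hf; exact hf
  | succ n ih =>
    intro s f hf
    refine ⟨hf.mono hw (by omega), fun τ => ih ?_⟩
    rw [show s + 1 + n = s + (n + 1) by omega]
    exact hf.df hw τ

lemma Dec.DD {n : ℕ} : ∀ {s : ℕ} {f : I → Z → E}, Dec lam n s f → ∀ l : List Z,
    l.length ≤ n → Bd lam (s + l.length) (fun i => Defect.DD l (f i)) := by
  induction n with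
  | zero =>
    intro s f hf l hl
    obtain rfl : l = [] := List.eq_nil_of_length_eq_zero (by omega)
    exact hf
  | succ n ih =>
    intro s f hf l hl
    cases l with
    | nil => exact hf.1
    | cons a l =>
      have := ih (hf.2 a) l (by simpa using hl)
      rw [List.length_cons, show s + (l.length + 1) = s + 1 + l.length by omega]
      exact this

lemma Dec.of_DD {n : ℕ} : ∀ {s : ℕ} {f : I → Z → E}, (∀ l : List Z,
    l.length ≤ n → Bd lam (s + l.length) (fun i => Defect.DD l (f i))) → Dec lam n s f := by
  induction n with
  | zero => intro s f h; exact h [] (by simp)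
  | succ n ih =>
    intro s f h
    refine ⟨h [] (by simp), fun τ => ih fun l hl => ?_⟩
    have := h (τ :: l) (by simpa using hl)
    rw [List.length_cons, show s + (l.length + 1) = s + 1 + l.length by omega] at this
    exact this

/-- Evaluate a decaying family of multilinear maps on the diagonal. -/
lemma Dec.multilin (hw : GoodW lam) {n t : ℕ} {a : I → Z → E} (ha : Dec lam n t a) (k : ℕ) :
    ∀ {s : ℕ} {T : I → Z → ContinuousMultilinearMap ℝ (fun _ : Fin k => E) E₁},
    Dec lam n s T → Dec lam n (s + k * t) (fun i z => T i z (fun _ => a i z)) := by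
  induction k with
  | zero =>
    intro s T hT
    have := hT.clm hw (continuousMultilinearCurryFin0 ℝ E E₁).toContinuousLinearEquiv.toContinuousLinearMap
    simp only [zero_mul, add_zero]
    convert this using 3 with i z
    simp
    congr 1
    funext j
    exact j.elim0
  | succ k ih =>
    intro s T hT
    have hL := Dec.clm (E₁ := E →L[ℝ] (ContinuousMultilinearMap ℝ (fun _ : Fin k => E) E₁)) hw
      (continuousMultilinearCurryLeftEquiv ℝ (fun _ : Fin (k + 1) => E) E₁).toContinuousLinearEquiv.toContinuousLinearMap hT
    have h2 := hL.bilin hw (ContinuousLinearMap.id ℝ _) ha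
    have h3 := ih h2
    rw [show s + (k + 1) * t = s + t + k * t by ring]
    convert h3 using 3 with i z
    simp
    congr 1
    funext j
    refine Fin.cases ?_ (fun j => ?_) j <;> simp

end DecCalculus

section Taylor

/-- Lattice weights. -/
structure Wt {Z : Type*} [AddCommGroup Z] (d : ℕ) (w : Z → ℝ) : Prop where
  two_le : ∀ z, 2 ≤ w z
  neg : ∀ z, w (-z) = w z
  add : ∀ z y, w (z + y) ≤ w z + w y
  summ : Summable fun z => (w z ^ (d + 1))⁻¹

/-- Every translation is a short path along the generators. -/
def PathProp (E : Type*) [NormedAddCommGroup E] [NormedSpace ℝ E] {Z κ : Type*} [AddCommGroup Z]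
    (w : Z → ℝ) (a : κ → Z) : Prop :=
  ∃ C : ℝ, 1 ≤ C ∧ ∀ m : Z, ∃ (n : ℕ) (ε : Fin n → ℝ) (i : Fin n → κ) (y : Fin n → Z),
    (n : ℝ) ≤ C * w m ∧ (∀ t, |ε t| ≤ 1) ∧ (∀ t, w (y t) ≤ C * w m) ∧
    ∀ (h : Z → E) (z : Z), h (z + m) - h z = ∑ t, ε t • df (a (i t)) h (z + y t)

variable {Z κ E : Type*} [AddCommGroup Z] [NormedAddCommGroup E] [NormedSpace ℝ E]
  {d : ℕ} {w : Z → ℝ}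

lemma Wt.pos (hw : Wt d w) (z : Z) : 0 < w z := lt_of_lt_of_le two_pos (hw.two_le z)

lemma Wt.one_le (hw : Wt d w) (z : Z) : 1 ≤ w z := le_trans one_le_two (hw.two_le z)

lemma Wt.mul (hw : Wt d w) (z y : Z) : w (z + y) ≤ w z * w y := by
  have := hw.add z y
  have h1 := hw.two_le z
  have h2 := hw.two_le y
  nlinarith

lemma Wt.mul' (hw : Wt d w) (z y : Z) : w z ≤ w y * w (z + y) := by
  have := hw.mul (z + y) (-y)
  rw [hw.neg, add_neg_cancel_right] at this
  linarith

lemma Wt.add' (hw : Wt d w) (z y : Z) : w z ≤ w (z + y) + w y := by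
  have := hw.add (z + y) (-y)
  rwa [hw.neg, add_neg_cancel_right] at this

lemma Wt.sub' (hw : Wt d w) (z y : Z) : w z ≤ w (z - y) + w y := by
  have := hw.add (z - y) y
  rwa [sub_add_cancel] at this

lemma Wt.good (hw : Wt d w) : GoodW (fun _ : Unit => w) :=
  ⟨fun _ z => hw.one_le z, fun τ => ⟨w τ, (hw.pos τ).le, fun _ z => hw.mul' z τ⟩⟩

lemma Wt.good_min (hw : Wt d w) : GoodW (fun z m : Z => min (w m) (w z)) := by
  refine ⟨fun i z => le_min (hw.one_le _) (hw.one_le _), fun τ =>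
    ⟨w τ, (hw.pos τ).le, fun z m => ?_⟩⟩
  rw [mul_min_of_nonneg _ _ (hw.pos τ).le]
  refine min_le_min (hw.mul' m τ) ?_
  have := hw.one_le τ
  have := hw.pos z
  nlinarith

lemma Wt.summ' (hw : Wt d w) {s : ℕ} (hs : d + 1 ≤ s) : Summable fun z => (w z ^ s)⁻¹ := by
  refine Summable.of_nonneg_of_le (fun z => ?_) (fun z => ?_) hw.summ
  · have := hw.pos z; positivity
  · have := hw.one_le z
    gcongr

/-- Discrete Taylor expansion. -/
lemma taylor_disc [Fintype κ] [DecidableEq κ] (hw : Wt d w) {a : κ → Z} (hp : PathProp E w a)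
    (p : ℕ) :
    ∃ (C : ℝ) (T : Finset (List κ)) (c : List κ → Z → ℝ), 1 ≤ C ∧ (∀ σ ∈ T, σ.length < p) ∧
      (∀ σ ∈ T, ∀ m, |c σ m| ≤ C * w m ^ σ.length) ∧
      ∀ (h : Z → E) (B : ℝ) (z m : Z), 0 ≤ B →
        (∀ l : List κ, l.length = p → ∀ y, w y ≤ C * w m → ‖DD (l.map a) h (z + y)‖ ≤ B) →
        ‖h (z + m) - ∑ σ ∈ T, c σ m • DD (σ.map a) h z‖ ≤ C * w m ^ p * B := by
  obtain ⟨C₀, hC₀, hpath⟩ := hp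
  induction p with
  | zero =>
    refine ⟨1, ∅, fun _ _ => 0, le_rfl, by simp, by simp, fun h B z m _ hB => ?_⟩
    have := hB [] rfl m (by simp)
    simpa [DD] using this
  | succ p ih =>
    obtain ⟨C, T, c, hC, hT, hc, H⟩ := ih
    choose n ε i y hn hε hy hh using hpath
    refine ⟨C * C₀ ^ (p + 1) , insert [] ((Finset.univ ×ˢ T).image fun x : κ × List κ => x.1 :: x.2),
      fun σ m => match σ with
        | [] => 1
        | k :: σ => ∑ t, if i m t = k then ε m t * c σ (y m t) else 0, ?_, ?_, ?_, ?_⟩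
    · nlinarith [one_le_pow₀ hC₀ (n := p + 1)]
    · intro σ hσ
      simp only [Finset.mem_insert, Finset.mem_image, Finset.mem_product, Finset.mem_univ,
        true_and, Prod.exists] at hσ
      rcases hσ with rfl | ⟨k, σ, hσ, rfl⟩
      · simp
      · have := hT σ hσ
        simp; omega
    · intro σ hσ m
      have hwm := hw.pos m
      simp only [Finset.mem_insert, Finset.mem_image, Finset.mem_product, Finset.mem_univ,
        true_and, Prod.exists] at hσ
      rcases hσ with rfl | ⟨k, σ, hσ, rfl⟩
      · simp
        nlinarith [one_le_pow₀ hC₀ (n := p + 1)]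
      · simp only [List.length_cons]
        have hlen := hT σ hσ
        calc _ ≤ ∑ t, |if i m t = k then ε m t * c σ (y m t) else 0| :=
              Finset.abs_sum_le_sum_abs _ _
          _ ≤ ∑ t : Fin (n m), C * (C₀ * w m) ^ σ.length := by
              refine Finset.sum_le_sum fun t _ => ?_
              have h1 : |c σ (y m t)| ≤ C * (C₀ * w m) ^ σ.length := by
                refine (hc σ hσ _).trans ?_
                have := hw.pos (y m t)
                gcongr
                exact hy m t
              split_ifs
              · rw [abs_mul]
                calc _ ≤ 1 * |c σ (y m t)| := by gcongr; exact hε m t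
                  _ ≤ _ := by rw [one_mul]; exact h1
              · rw [abs_zero]; positivity
          _ = n m * (C * (C₀ * w m) ^ σ.length) := by simp
          _ ≤ (C₀ * w m) * (C * (C₀ * w m) ^ σ.length) := by
              gcongr; exact hn m
          _ = C * C₀ ^ (σ.length + 1) * w m ^ (σ.length + 1) := by ring
          _ ≤ _ := by
              gcongr
    · intro h B z m hB0 hB
      have hwm := hw.pos m
      rw [Finset.sum_insert (by simp), Finset.sum_image (by
        rintro ⟨k, σ⟩ _ ⟨k', σ'⟩ _ hkk
        simpa using hkk)]
      simp only [List.map_nil, DD, one_smul, List.map_cons]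
      rw [Finset.sum_product]
      have key : h (z + m) - (h z + ∑ k : κ, ∑ σ ∈ T,
          (∑ t, if i m t = k then ε m t * c σ (y m t) else 0) • DD (σ.map a) (df (a k) h) z)
          = ∑ t, ε m t • (df (a (i m t)) h (z + y m t) -
              ∑ σ ∈ T, c σ (y m t) • DD (σ.map a) (df (a (i m t)) h) z) := by
        rw [← sub_sub, hh m h z]
        simp only [smul_sub, Finset.sum_sub_distrib]
        congr 1
        simp only [Finset.sum_smul, Finset.smul_sum]
        calc _ = ∑ k : κ, ∑ t, ∑ σ ∈ T, (if i m t = k then ε m t * c σ (y m t) else 0) •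
                DD (σ.map a) (df (a k) h) z := by
              refine Finset.sum_congr rfl fun k _ => Finset.sum_comm
          _ = ∑ t, ∑ k : κ, ∑ σ ∈ T, (if i m t = k then ε m t * c σ (y m t) else 0) •
                DD (σ.map a) (df (a k) h) z := Finset.sum_comm
          _ = _ := by
              refine Finset.sum_congr rfl fun t _ => ?_
              rw [Finset.sum_eq_single (i m t)]
              · simp [mul_smul]
              · intro k _ hk
                simp [hk.symm]
              · simp
      rw [key]
      calc _ ≤ ∑ t, ‖ε m t • (df (a (i m t)) h (z + y m t) -
              ∑ σ ∈ T, c σ (y m t) • DD (σ.map a) (df (a (i m t)) h) z)‖ := norm_sum_le _ _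
        _ ≤ ∑ t : Fin (n m), C * (C₀ * w m) ^ p * B := by
            refine Finset.sum_le_sum fun t _ => ?_
            rw [norm_smul, Real.norm_eq_abs]
            have h1 := H (df (a (i m t)) h) B z (y m t) hB0 (by
              intro l hl y' hy'
              refine hB (i m t :: l) (by simp [hl]) y' (hy'.trans ?_)
              calc C * w (y m t) ≤ C * (C₀ * w m) := by gcongr; exact hy m t
                _ = C * C₀ ^ 1 * w m := by ring
                _ ≤ _ := by
                  gcongr
                  · omega)
            calc _ ≤ 1 * (C * w (y m t) ^ p * B) := by
                  gcongr
                  exact hε m t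
              _ ≤ _ := by
                  rw [one_mul]
                  have := hw.pos (y m t)
                  gcongr
                  exact hy m t
        _ = n m * (C * (C₀ * w m) ^ p * B) := by simp
        _ ≤ (C₀ * w m) * (C * (C₀ * w m) ^ p * B) := by
            gcongr; exact hn m
        _ = _ := by ring

end Taylor

section Conv

/-- Discrete convolution. -/
def conv {Z E : Type*} [AddCommGroup Z] [NormedAddCommGroup E] [NormedSpace ℝ E]
    (F : Z → ℝ) (K : Z → E) (z : Z) : E := ∑' m, F m • K (z - m)

/-- Existence of smooth cutoffs at all scales. -/
def CutProp {Z : Type*} [AddCommGroup Z] (w : Z → ℝ) : Prop :=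
  ∃ χ : Z → Z → ℝ, (∀ n, Dec (fun z m => min (w m) (w z)) n 0 χ) ∧
    (∀ z m, χ z m ≠ 0 → w (z - m) ≤ w z / 2) ∧
    ∃ c, 0 < c ∧ ∀ z m, w (z - m) < c * w z → χ z m = 1

variable {Z κ E : Type*} [AddCommGroup Z] [NormedAddCommGroup E] [NormedSpace ℝ E]
  [CompleteSpace E] {d : ℕ} {w : Z → ℝ}

lemma conv_summable {F : Z → ℝ} {K : Z → E} (hF : Summable F) (hK : ∃ C, ∀ z, ‖K z‖ ≤ C) (z : Z) :
    Summable fun m => F m • K (z - m) := by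
  obtain ⟨C, hC⟩ := hK
  refine Summable.of_norm_bounded (g := fun m => |F m| * C) (hF.abs.mul_right C) fun m => ?_
  rw [norm_smul, Real.norm_eq_abs]
  gcongr
  exact hC _

lemma bdd_df {K : Z → E} (hK : ∃ C, ∀ z, ‖K z‖ ≤ C) (τ : Z) : ∃ C, ∀ z, ‖df τ K z‖ ≤ C := by
  obtain ⟨C, hC⟩ := hK
  exact ⟨C + C, fun z => (norm_sub_le _ _).trans (add_le_add (hC _) (hC _))⟩

lemma summable_df {F : Z → ℝ} (hF : Summable F) (τ : Z) : Summable (df τ F) := by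
  refine Summable.sub ?_ hF
  exact (Equiv.addRight τ).summable_iff.2 hF

lemma df_conv {F : Z → ℝ} {K : Z → E} (hF : Summable F) (hK : ∃ C, ∀ z, ‖K z‖ ≤ C) (τ : Z) :
    df τ (conv F K) = conv F (df τ K) := by
  funext z
  simp only [df, conv]
  rw [← Summable.tsum_sub (conv_summable hF hK _) (conv_summable hF hK _)]
  refine tsum_congr fun m => ?_
  rw [← smul_sub, show z + τ - m = z - m + τ by abel]

lemma conv_df {F : Z → ℝ} {K : Z → E} (hF : Summable F) (hK : ∃ C, ∀ z, ‖K z‖ ≤ C) (τ : Z) :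
    conv (df τ F) K = conv F (df τ K) := by
  funext z
  simp only [df, conv, sub_smul, smul_sub]
  have h1 : Summable fun m => F (m + τ) • K (z - m) :=
    conv_summable ((Equiv.addRight τ).summable_iff.2 hF) hK z
  have h2 : Summable fun m => F m • K (z - m + τ) := by
    have := conv_summable hF hK (z + τ)
    refine this.congr fun m => ?_
    rw [show z + τ - m = z - m + τ by abel]
  rw [Summable.tsum_sub h1 (conv_summable hF hK z), Summable.tsum_sub h2 (conv_summable hF hK z)]
  congr 1
  rw [← (Equiv.addRight τ).tsum_eq (fun m => F m • K (z - m + τ))]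
  refine tsum_congr fun m => ?_
  simp only [Equiv.coe_addRight]
  rw [show z - (m + τ) + τ = z - m by abel]

lemma bdd_DD (l : List Z) : ∀ {K : Z → E}, (∃ C, ∀ z, ‖K z‖ ≤ C) → ∃ C, ∀ z, ‖DD l K z‖ ≤ C := by
  induction l with
  | nil => intro K hK; exact hK
  | cons a l ih => intro K hK; exact ih (bdd_df hK a)

lemma DD_conv {F : Z → ℝ} (hF : Summable F) (l : List Z) : ∀ {K : Z → E},
    (∃ C, ∀ z, ‖K z‖ ≤ C) → DD l (conv F K) = conv F (DD l K) := by
  induction l with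
  | nil => intro K hK; rfl
  | cons a l ih => intro K hK; simp only [DD]; rw [df_conv hF hK, ih (bdd_df hK a)]

lemma conv_DD (l : List Z) : ∀ {F : Z → ℝ} (hF : Summable F) {K : Z → E},
    (∃ C, ∀ z, ‖K z‖ ≤ C) → conv (DD l F) K = conv F (DD l K) := by
  induction l with
  | nil => intro F hF K hK; rfl
  | cons a l ih =>
    intro F hF K hK
    simp only [DD]
    rw [ih (summable_df hF a) hK, conv_df hF (bdd_DD l hK), DD_df]

lemma DD_ne_zero (hw : Wt d w) (l : List Z) : ∃ W : ℝ, 1 ≤ W ∧ ∀ (f : Z → E) (m : Z),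
    DD l f m ≠ 0 → ∃ y, w y ≤ W ∧ f (m + y) ≠ 0 := by
  induction l with
  | nil => exact ⟨w 0, hw.one_le 0, fun f m h => ⟨0, le_rfl, by simpa [DD] using h⟩⟩
  | cons a l ih =>
    obtain ⟨W, hW, H⟩ := ih
    refine ⟨W * w a, one_le_mul_of_one_le_of_one_le hW (hw.one_le a), fun f m h => ?_⟩
    obtain ⟨y, hy, h⟩ := H (df a f) m h
    by_cases h0 : f (m + y) = 0
    · refine ⟨y + a, (hw.mul y a).trans ?_, ?_⟩
      · have := hw.pos a
        gcongr
      · simp only [df, h0, sub_zero] at h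
        rwa [← add_assoc]
    · exact ⟨y, hy.trans (le_mul_of_one_le_right (by linarith) (hw.one_le a)), h0⟩

lemma Dec.to_min (hw : Wt d w) {n : ℕ} : ∀ {s : ℕ} {f : Z → E},
    Dec (fun _ : Unit => w) n s (fun _ => f) →
    Dec (fun z m : Z => min (w m) (w z)) n s (fun _ => f) := by
  have key : ∀ {s : ℕ} {f : Z → E}, Bd (fun _ : Unit => w) s (fun _ => f) →
      Bd (fun z m : Z => min (w m) (w z)) s (fun _ => f) := by
    rintro s f ⟨C, hC, h⟩
    refine ⟨C, hC, fun z m => (h () m).trans ?_⟩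
    have h1 : 0 < min (w m) (w z) := lt_min (hw.pos _) (hw.pos _)
    gcongr
    exact min_le_left _ _
  induction n with
  | zero => intro s f hf; exact key hf
  | succ n ih => intro s f hf; exact ⟨key hf.1, fun τ => ih (hf.2 τ)⟩

lemma Bd.bdd (hw : Wt d w) {s : ℕ} {f : Z → E} (h : Bd (fun _ : Unit => w) s (fun _ => f)) :
    ∃ C, ∀ z, ‖f z‖ ≤ C := by
  obtain ⟨C, hC, h⟩ := h
  refine ⟨C, fun z => (h () z).trans ?_⟩
  have := one_le_pow₀ (hw.one_le z) (n := s)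
  exact mul_le_of_le_one_right hC (inv_le_one_of_one_le₀ this)

lemma Bd.summable (hw : Wt d w) {s : ℕ} {f : Z → ℝ} (h : Bd (fun _ : Unit => w) s (fun _ => f))
    (hs : d + 1 ≤ s) : Summable f := by
  obtain ⟨C, hC, h⟩ := h
  exact Summable.of_norm_bounded ((hw.summ' hs).mul_left C) fun z => h () z

lemma partA (hw : Wt d w) (hd : 2 ≤ d) {K : Z → E}
    (hK : ∀ n, Dec (fun _ : Unit => w) n (d - 1) (fun _ => K))
    {F : Z → ℝ} {n : ℕ} (hF : Dec (fun _ : Unit => w) n (2 * d) (fun _ => F))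
    {χ : Z → Z → ℝ} (hχ : ∀ n, Dec (fun z m => min (w m) (w z)) n 0 χ)
    (hχ0 : ∀ z m, χ z m ≠ 0 → w (z - m) ≤ w z / 2)
    (l₁ l₂ : List Z) (h₁ : l₁.length ≤ n) (h₂ : 1 ≤ l₂.length) (h₂' : l₂.length ≤ 2) :
    Bd (fun _ : Unit => w) (2 * d + l₁.length + l₂.length - 2)
      (fun _ z => conv (fun m => χ z m * F m) (DD (l₁ ++ l₂) K) z) := by
  have hΦ : Dec (fun z m => min (w m) (w z)) n (0 + 2 * d) (fun z m => χ z m * F m) :=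
    Dec.bilin hw.good_min (ContinuousLinearMap.mul ℝ ℝ) (hχ n) (Dec.to_min hw hF)
  obtain ⟨C₁, hC₁, hb⟩ := hΦ.DD l₁ h₁
  obtain ⟨C₂, hC₂, hk⟩ := (hK 2).DD l₂ h₂'
  obtain ⟨W, hW, hsupp⟩ := DD_ne_zero (E := ℝ) hw l₁
  have hKb : ∃ C, ∀ z, ‖K z‖ ≤ C := (hK 0).bd.bdd hw
  obtain ⟨Cχ, hCχ, hχb⟩ := (hχ 0).bd
  have hFs : Summable F := hF.bd.summable hw (by omega)
  set e := l₂.length with he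
  set q := l₁.length with hq
  have hS := hw.summ
  set S := ∑' z, (w z ^ (d + 1))⁻¹ with hSdef
  have hterm : ∀ z m, ‖DD l₁ (fun m => χ z m * F m) m • DD l₂ K (z - m)‖ ≤
      C₁ * ((2 * W) ^ (2 * d + q)) * (C₂ * W ^ (2 - e)) *
        (w z ^ (2 * d + q + e - 2))⁻¹ * (w (z - m) ^ (d + 1))⁻¹ := by
    intro z m
    have hz := hw.pos z
    have hm := hw.pos m
    have hzm := hw.pos (z - m)
    by_cases h0 : DD l₁ (fun m => χ z m * F m) m = 0
    · rw [h0, zero_smul, norm_zero]; positivity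
    obtain ⟨y, hy, hne⟩ := hsupp _ _ h0
    have hy0 := hw.pos y
    have hne' : χ z (m + y) ≠ 0 := left_ne_zero_of_mul hne
    have h3 := hχ0 _ _ hne'
    have h4 : w z / 2 ≤ w (m + y) := by
      have := hw.sub' z (m + y); linarith
    have h5 : w z / (2 * W) ≤ w m := by
      rw [div_le_iff₀ (by positivity)]
      have := hw.mul m y
      have : w m * w y ≤ w m * W := by gcongr
      linarith
    have h6 : w (z - m) ≤ W * w z := by
      have h7 := hw.mul' (z - m) (-y)
      rw [hw.neg, show z - m + -y = z - (m + y) by abel] at h7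
      have hq0 := hw.pos (z - (m + y))
      calc _ ≤ w y * w (z - (m + y)) := h7
        _ ≤ W * (w z / 2) := by gcongr
        _ ≤ _ := by nlinarith
    have h7 : w z / (2 * W) ≤ min (w m) (w z) := by
      refine le_min h5 ?_
      rw [div_le_iff₀ (by positivity)]
      nlinarith
    have h8 : ‖DD l₁ (fun m => χ z m * F m) m‖ ≤ C₁ * ((2 * W) ^ (2 * d + q)) *
        (w z ^ (2 * d + q))⁻¹ := by
      refine (hb z m).trans ?_
      rw [zero_add, mul_assoc]
      gcongr
      rw [← div_eq_mul_inv, inv_le_comm₀ (by positivity) (by positivity), inv_div, ← div_pow]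
      gcongr
    have h9 : ‖DD l₂ K (z - m)‖ ≤ C₂ * W ^ (2 - e) * w z ^ (2 - e) * (w (z - m) ^ (d + 1))⁻¹ := by
      refine (hk () (z - m)).trans ?_
      rw [mul_assoc C₂, mul_assoc C₂, ← mul_pow]
      gcongr
      calc (w (z - m) ^ (d - 1 + e))⁻¹ = w (z - m) ^ (2 - e) * (w (z - m) ^ (d + 1))⁻¹ := by
            have h10 : w (z - m) ^ (d + 1) = w (z - m) ^ (d - 1 + e) * w (z - m) ^ (2 - e) := by
              rw [← pow_add]; congr 1; omega
            rw [h10]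
            field_simp
        _ ≤ _ := by gcongr
    rw [norm_smul]
    calc _ ≤ (C₁ * ((2 * W) ^ (2 * d + q)) * (w z ^ (2 * d + q))⁻¹) *
          (C₂ * W ^ (2 - e) * w z ^ (2 - e) * (w (z - m) ^ (d + 1))⁻¹) := by gcongr
      _ = _ := by
          have : w z ^ (2 * d + q) = w z ^ (2 * d + q + e - 2) * w z ^ (2 - e) := by
            rw [← pow_add]; congr 1; omega
          rw [this]
          field_simp
  refine ⟨C₁ * ((2 * W) ^ (2 * d + q)) * (C₂ * W ^ (2 - e)) * S, ?_, ?_⟩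
  · have : 0 ≤ S := tsum_nonneg fun z => by have := hw.pos z; positivity
    positivity
  intro _ z
  have hΦs : Summable fun m => χ z m * F m := by
    refine Summable.of_norm_bounded (hFs.abs.mul_left Cχ) fun m => ?_
    rw [norm_mul]
    have := hχb z m
    simp only [pow_zero, inv_one, mul_one] at this
    exact mul_le_mul_of_nonneg_right this (norm_nonneg _)
  have heq : conv (fun m => χ z m * F m) (DD (l₁ ++ l₂) K) z =
      conv (DD l₁ (fun m => χ z m * F m)) (DD l₂ K) z := by
    rw [conv_DD l₁ hΦs (bdd_DD l₂ hKb), DD_append, DD_comm]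
  show ‖conv (fun m => χ z m * F m) (DD (l₁ ++ l₂) K) z‖ ≤ _
  rw [heq]
  have hs2 : HasSum (fun m => (w (z - m) ^ (d + 1))⁻¹) S :=
    (Equiv.subLeft z).hasSum_iff.2 hS.hasSum
  have := tsum_of_norm_bounded (hs2.mul_left (C₁ * ((2 * W) ^ (2 * d + q)) * (C₂ * W ^ (2 - e)) *
        (w z ^ (2 * d + q + e - 2))⁻¹)) (hterm z)
  refine this.trans (le_of_eq ?_)
  ring

end Conv

section Conv2

variable {Z κ E : Type*} [AddCommGroup Z] [NormedAddCommGroup E] [NormedSpace ℝ E]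
  [CompleteSpace E] {d : ℕ} {w : Z → ℝ}

lemma partB [Fintype κ] (hw : Wt d w) {a : κ → Z} {p : ℕ} {C : ℝ}
    {T : Finset (List κ)} {c : List κ → Z → ℝ} (hC : 1 ≤ C) (hT : ∀ σ ∈ T, σ.length < p)
    (hc : ∀ σ ∈ T, ∀ m, |c σ m| ≤ C * w m ^ σ.length)
    (H : ∀ (h : Z → E) (B : ℝ) (z m : Z), 0 ≤ B →
        (∀ l : List κ, l.length = p → ∀ y, w y ≤ C * w m → ‖DD (l.map a) h (z + y)‖ ≤ B) →
        ‖h (z + m) - ∑ σ ∈ T, c σ m • DD (σ.map a) h z‖ ≤ C * w m ^ p * B)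
    {χ : Z → Z → ℝ} {X : ℝ} (hX : ∀ z m, |χ z m| ≤ X)
    (hχ0 : ∀ z m, χ z m ≠ 0 → w (z - m) ≤ w z / 2)
    {cc : ℝ} (hcc : 0 < cc) (hcut : ∀ z m, w (z - m) < cc * w z → χ z m = 1)
    {D : ℕ} {K : Z → E}
    (hK : ∀ l : List Z, Bd (fun _ : Unit => w) (D + l.length) (fun _ => DD l K)) :
    ∃ C', 0 ≤ C' ∧ ∀ z m, ‖(1 - χ z m) • K (z - m) - ∑ σ ∈ T, c σ (-m) • DD (σ.map a) K z‖ ≤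
      C' * w m ^ p * (w z ^ (D + p))⁻¹ := by
  choose b hb0 hb using hK
  have hfin : {l : List κ | l.length = p}.Finite := List.finite_length_eq κ p
  set B₀ : ℝ := ∑ l ∈ hfin.toFinset, b (l.map a) with hB₀
  have hB₀' : 0 ≤ B₀ := Finset.sum_nonneg fun l _ => hb0 _
  have hB : ∀ l : List κ, l.length = p → ∀ z, ‖DD (l.map a) K z‖ ≤ B₀ * (w z ^ (D + p))⁻¹ := by
    intro l hl z
    have h1 := hb (l.map a) () z
    have h0 := hw.pos z
    rw [List.length_map, hl] at h1
    refine h1.trans ?_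
    gcongr
    exact Finset.single_le_sum (f := fun l => b (l.map a)) (fun l _ => hb0 _)
      (hfin.mem_toFinset.2 hl)
  have hC0 : 0 < C := by linarith
  set k : ℝ := 1 / (4 * C) with hk
  have hk0 : 0 < k := by positivity
  have hk1 : k ≤ 1 := by
    rw [hk, div_le_one (by positivity)]; linarith
  have hX0 : 0 ≤ X := (abs_nonneg _).trans (hX 0 0)
  set C₁ : ℝ := C * (B₀ * 2 ^ (D + p)) with hC₁
  set C₂ : ℝ := (1 + X) * (b [] * (cc ^ D)⁻¹) * (k ^ p)⁻¹ with hC₂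
  set C₃ : ℝ := ∑ σ ∈ T, C * b (σ.map a) * (k ^ p)⁻¹ with hC₃
  have hC₁0 : 0 ≤ C₁ := by positivity
  have hbn := hb0 []
  have hC₂0 : 0 ≤ C₂ := by positivity
  have hC₃0 : 0 ≤ C₃ := Finset.sum_nonneg fun σ _ => by have := hb0 (σ.map a); positivity
  refine ⟨C₁ + (C₂ + C₃), by positivity, fun z m => ?_⟩
  have hz := hw.pos z
  have hm := hw.pos m
  have hzm := hw.pos (z - m)
  by_cases hcase : w m ≤ k * w z
  · have h1 : C * w m ≤ w z / 4 := by
      calc C * w m ≤ C * (k * w z) := by gcongr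
        _ = _ := by rw [hk]; field_simp
    have h1' : w m ≤ w z / 4 := by nlinarith
    have hχz : χ z m = 0 := by
      by_contra h
      have := hχ0 z m h
      have := hw.sub' z m
      linarith
    have := H K (B₀ * 2 ^ (D + p) * (w z ^ (D + p))⁻¹) z (-m) (by positivity) (by
      intro l hl y hy
      rw [hw.neg] at hy
      refine (hB l hl _).trans ?_
      have h2 := hw.add' z y
      have h3 : w z / 2 ≤ w (z + y) := by linarith
      rw [mul_assoc]
      gcongr
      rw [← div_eq_mul_inv, inv_le_comm₀ (by have := hw.pos (z + y); positivity) (by positivity),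
        inv_div, ← div_pow]
      gcongr)
    rw [hχz, sub_zero, one_smul, sub_eq_add_neg z m]
    refine this.trans ?_
    rw [hw.neg]
    have : C * w m ^ p * (B₀ * 2 ^ (D + p) * (w z ^ (D + p))⁻¹) =
      C₁ * w m ^ p * (w z ^ (D + p))⁻¹ := by rw [hC₁]; ring
    rw [this]
    gcongr
    linarith
  · push Not at hcase
    set Y : ℝ := w m / (k * w z) with hY
    have hY1 : 1 ≤ Y := by rw [hY, one_le_div (by positivity)]; exact hcase.le
    have hYm : w m = k * w z * Y := by rw [hY]; field_simp
    have hYp : Y ^ p * (w z ^ D)⁻¹ = (k ^ p)⁻¹ * (w m ^ p * (w z ^ (D + p))⁻¹) := by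
      rw [hYm, pow_add, mul_pow, mul_pow]; field_simp
    have e1 : ‖(1 - χ z m) • K (z - m)‖ ≤ C₂ * (w m ^ p * (w z ^ (D + p))⁻¹) := by
      by_cases h : w (z - m) < cc * w z
      · rw [hcut z m h, sub_self, zero_smul, norm_zero]; positivity
      push Not at h
      rw [norm_smul]
      have h1 : ‖1 - χ z m‖ ≤ 1 + X := by
        refine (norm_sub_le _ _).trans ?_
        have := hX z m
        simp only [norm_one, Real.norm_eq_abs]; linarith
      have h2 : ‖K (z - m)‖ ≤ b [] * (cc ^ D)⁻¹ * (Y ^ p * (w z ^ D)⁻¹) := by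
        have h3 := hb [] () (z - m)
        simp only [DD, List.length_nil, add_zero] at h3
        refine h3.trans ?_
        calc b [] * (w (z - m) ^ D)⁻¹ ≤ b [] * ((cc * w z) ^ D)⁻¹ := by gcongr
          _ = b [] * (cc ^ D)⁻¹ * (1 * (w z ^ D)⁻¹) := by rw [mul_pow, mul_inv]; ring
          _ ≤ _ := by gcongr; exact one_le_pow₀ hY1
      calc _ ≤ (1 + X) * (b [] * (cc ^ D)⁻¹ * (Y ^ p * (w z ^ D)⁻¹)) := by gcongr
        _ = _ := by rw [hYp, hC₂]; ring
    have e2 : ‖∑ σ ∈ T, c σ (-m) • DD (σ.map a) K z‖ ≤ C₃ * (w m ^ p * (w z ^ (D + p))⁻¹) := by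
      rw [hC₃, Finset.sum_mul]
      refine norm_sum_le_of_le _ fun σ hσ => ?_
      rw [norm_smul, Real.norm_eq_abs]
      have h1 := hc σ hσ (-m)
      have h2 := hb (σ.map a) () z
      rw [hw.neg] at h1
      rw [List.length_map] at h2
      have h4 := hb0 (σ.map a)
      have h3 : w m ^ σ.length * (w z ^ (D + σ.length))⁻¹ ≤ Y ^ p * (w z ^ D)⁻¹ := by
        calc w m ^ σ.length * (w z ^ (D + σ.length))⁻¹ =
              k ^ σ.length * Y ^ σ.length * (w z ^ D)⁻¹ := by
              rw [hYm, pow_add, mul_pow, mul_pow]; field_simp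
          _ ≤ 1 * Y ^ p * (w z ^ D)⁻¹ := by
              gcongr
              · exact pow_le_one₀ hk0.le hk1
              · exact (hT σ hσ).le
          _ = _ := by ring
      calc _ ≤ (C * w m ^ σ.length) * (b (σ.map a) * (w z ^ (D + σ.length))⁻¹) := by gcongr
        _ = C * b (σ.map a) * (w m ^ σ.length * (w z ^ (D + σ.length))⁻¹) := by ring
        _ ≤ C * b (σ.map a) * (Y ^ p * (w z ^ D)⁻¹) := by gcongr
        _ = _ := by rw [hYp]; ring
    calc _ ≤ _ := norm_sub_le _ _
      _ ≤ C₂ * (w m ^ p * (w z ^ (D + p))⁻¹) + C₃ * (w m ^ p * (w z ^ (D + p))⁻¹) :=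
          add_le_add e1 e2
      _ = (0 + (C₂ + C₃)) * w m ^ p * (w z ^ (D + p))⁻¹ := by ring
      _ ≤ _ := by gcongr

lemma conv_expand [Fintype κ] [DecidableEq κ] (hw : Wt d w) (hd : 2 ≤ d) {a : κ → Z}
    (hpath : PathProp E w a) (hcutp : CutProp w) {p : ℕ} (hp : p + 1 ≤ d) {K : Z → E}
    (hK : ∀ n, Dec (fun _ : Unit => w) n (d - 1) (fun _ => K))
    {F : Z → ℝ} {n : ℕ} (hF : Dec (fun _ : Unit => w) n (2 * d) (fun _ => F)) :
    ∃ (T : Finset (List κ)) (M : List κ → ℝ), (∀ σ ∈ T, σ.length < p) ∧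
      ∀ l : List Z, 1 ≤ l.length → l.length ≤ n + 2 →
        Bd (fun _ : Unit => w) (d - 1 + p + l.length)
          (fun _ => DD l (fun z => conv F K z - ∑ σ ∈ T, M σ • DD (σ.map a) K z)) := by
  obtain ⟨C, T, c, hC, hT, hc, H⟩ := taylor_disc hw hpath p
  obtain ⟨χ, hχ, hχ0, cc, hcc, hcut⟩ := hcutp
  obtain ⟨X, hX0, hX⟩ := (hχ 0).bd
  have hX' : ∀ z m, |χ z m| ≤ X := fun z m => by simpa using hX z m
  have hFb := hF.bd
  have hFs : Summable F := hFb.summable hw (by omega)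
  have hKb : ∃ C, ∀ z, ‖K z‖ ≤ C := (hK 0).bd.bdd hw
  obtain ⟨CF, hCF, hFb⟩ := hFb
  have hFw : ∀ q, q ≤ p → ∀ m, |F m| * w m ^ q ≤ CF * (w m ^ (d + 1))⁻¹ := by
    intro q hq m
    have hm := hw.pos m
    have h1 := hw.one_le m
    have := hFb () m
    rw [Real.norm_eq_abs] at this
    calc _ ≤ CF * (w m ^ (2 * d))⁻¹ * w m ^ q := by gcongr
      _ = CF * (w m ^ (2 * d - q))⁻¹ := by
        have : w m ^ (2 * d) = w m ^ (2 * d - q) * w m ^ q := by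
          rw [← pow_add]; congr 1; omega
        rw [this]; field_simp
      _ ≤ _ := by
        gcongr
        omega
  have hMs : ∀ σ ∈ T, Summable fun m => F m * c σ (-m) := by
    intro σ hσ
    refine Summable.of_norm_bounded (hw.summ.mul_left (C * CF)) fun m => ?_
    rw [norm_mul, Real.norm_eq_abs, Real.norm_eq_abs]
    have h1 := hc σ hσ (-m)
    rw [hw.neg] at h1
    calc _ ≤ |F m| * (C * w m ^ σ.length) := by gcongr
      _ = C * (|F m| * w m ^ σ.length) := by ring
      _ ≤ C * (CF * (w m ^ (d + 1))⁻¹) := by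
        exact mul_le_mul_of_nonneg_left (hFw _ (hT σ hσ).le m) (by linarith)
      _ = _ := by ring
  refine ⟨T, fun σ => ∑' m, F m * c σ (-m), hT, fun l hl1 hl2 => ?_⟩
  set Kj := DD l K with hKj
  have hKjb := bdd_DD l hKb
  have hKjd : ∀ l' : List Z, Bd (fun _ : Unit => w) (d - 1 + l.length + l'.length)
      (fun _ => DD l' Kj) := by
    intro l'
    have := (hK (l ++ l').length).DD (l ++ l') le_rfl
    rw [List.length_append, ← add_assoc] at this
    simpa only [DD_append] using this
  obtain ⟨C', hC', hB⟩ := partB hw hC hT hc H hX' hχ0 hcc hcut hKjd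
  -- far part
  have hfar : Bd (fun _ : Unit => w) (d - 1 + p + l.length) (fun _ z =>
      ∑' m, F m • ((1 - χ z m) • Kj (z - m) - ∑ σ ∈ T, c σ (-m) • DD (σ.map a) Kj z)) := by
    refine ⟨C' * CF * ∑' m, (w m ^ (d + 1))⁻¹, ?_, fun _ z => ?_⟩
    · have : 0 ≤ ∑' m, (w m ^ (d + 1))⁻¹ :=
        tsum_nonneg fun m => by have := hw.pos m; positivity
      positivity
    have hz := hw.pos z
    refine (tsum_of_norm_bounded (hw.summ.hasSum.mul_left
      (C' * CF * (w z ^ (d - 1 + p + l.length))⁻¹)) fun m => ?_).trans (le_of_eq (by ring))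
    rw [norm_smul, Real.norm_eq_abs]
    have hm := hw.pos m
    calc _ ≤ |F m| * (C' * w m ^ p * (w z ^ (d - 1 + l.length + p))⁻¹) := by
            gcongr; exact hB z m
      _ = C' * (w z ^ (d - 1 + p + l.length))⁻¹ * (|F m| * w m ^ p) := by
          rw [add_right_comm (d - 1)]; ring
      _ ≤ C' * (w z ^ (d - 1 + p + l.length))⁻¹ * (CF * (w m ^ (d + 1))⁻¹) := by
          exact mul_le_mul_of_nonneg_left (hFw p le_rfl m) (by positivity)
      _ = _ := by ring
  have hnear : Bd (fun _ : Unit => w) (d - 1 + p + l.length)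
      (fun _ z => conv (fun m => χ z m * F m) Kj z) := by
    have h1 := partA hw hd hK hF hχ hχ0 (l.take (l.length - 2)) (l.drop (l.length - 2))
      (by simp; omega) (by simp; omega) (by simp; omega)
    rw [List.take_append_drop] at h1
    refine h1.mono hw.good ?_
    simp only [List.length_take, List.length_drop]
    omega
  have key : (fun _ : Unit => DD l
        (fun z => conv F K z - ∑ σ ∈ T, (∑' m, F m * c σ (-m)) • DD (σ.map a) K z)) =
      fun _ z => conv (fun m => χ z m * F m) Kj z +
      ∑' m, F m • ((1 - χ z m) • Kj (z - m) - ∑ σ ∈ T, c σ (-m) • DD (σ.map a) Kj z) := by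
    funext _ z
    rw [DD_sub, DD_sum, DD_conv hFs l hKb]
    simp only [DD_smul]
    have hχF : Summable fun m => χ z m * F m := by
      refine Summable.of_norm_bounded (hFs.abs.mul_left X) fun m => ?_
      rw [norm_mul]
      exact mul_le_mul_of_nonneg_right (hX' z m) (norm_nonneg _)
    have s1 := conv_summable hχF hKjb z
    have s2 := conv_summable hFs hKjb z
    have s3 : ∀ σ ∈ T, Summable fun m => (F m * c σ (-m)) • DD (σ.map a) Kj z :=
      fun σ hσ => (hMs σ hσ).smul_const _
    have s4 := summable_sum s3
    have e1 : ∀ m, F m • ((1 - χ z m) • Kj (z - m) - ∑ σ ∈ T, c σ (-m) • DD (σ.map a) Kj z) =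
        F m • Kj (z - m) - (χ z m * F m) • Kj (z - m) -
          ∑ σ ∈ T, (F m * c σ (-m)) • DD (σ.map a) Kj z := by
      intro m
      rw [smul_sub, Finset.smul_sum]
      simp only [smul_smul, ← sub_smul]
      congr 2
      ring
    simp only [e1]
    rw [Summable.tsum_sub (s2.sub s1) s4, Summable.tsum_sub s2 s1, Summable.tsum_finsetSum s3]
    have e2 : ∀ σ ∈ T, (∑' m, F m * c σ (-m)) • DD l (DD (σ.map a) K) z =
        ∑' m, (F m * c σ (-m)) • DD (σ.map a) Kj z := by
      intro σ hσ
      rw [(hMs σ hσ).tsum_smul_const, DD_comm]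
    rw [Finset.sum_congr rfl e2]
    simp only [conv]
    rw [← hKj]
    abel
  rw [key]
  exact hnear.add hfar

end Conv2

section MP

variable {Z κ ι E : Type*} [AddCommGroup Z] [NormedAddCommGroup E] [NormedSpace ℝ E]
  {d : ℕ} {w : Z → ℝ}

/-- The multipole space. -/
def SpS (a : κ → Z) (p : ℕ) (h : ι → Z → E) : Submodule ℝ (Z → E) :=
  Submodule.span ℝ {f | ∃ (σ : List κ) (k : ι), 1 ≤ σ.length ∧ σ.length ≤ p ∧
    f = DD (σ.map a) (h k)}

lemma Bd.smul' {s : ℕ} {f : Z → E} (c : ℝ) (h : Bd (fun _ : Unit => w) s (fun _ => f)) :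
    Bd (fun _ : Unit => w) s (fun _ z => c • f z) := by
  obtain ⟨C, hC, h⟩ := h
  refine ⟨|c| * C, by positivity, fun i z => ?_⟩
  rw [norm_smul, Real.norm_eq_abs, mul_assoc]
  exact mul_le_mul_of_nonneg_left (h i z) (abs_nonneg _)

/-- The remainder space. -/
def RemS (w : Z → ℝ) (s J : ℕ) : Submodule ℝ (Z → E) where
  carrier := {r | ∀ l : List Z, 1 ≤ l.length → l.length ≤ J →
    Bd (fun _ : Unit => w) (s + l.length) (fun _ => DD l r)}
  add_mem' := by
    intro f g hf hg l h1 h2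
    have : DD l (f + g) = fun z => DD l f z + DD l g z := DD_add l f g
    rw [this]
    exact (hf l h1 h2).add (hg l h1 h2)
  zero_mem' := by
    intro l h1 h2
    have : DD l (0 : Z → E) = fun _ => 0 := DD_zero l
    rw [this]
    exact ⟨0, le_rfl, fun i z => by simp⟩
  smul_mem' := by
    intro c f hf l h1 h2
    have : DD l (c • f) = fun z => c • DD l f z := DD_smul l c f
    rw [this]
    exact (hf l h1 h2).smul' c

lemma DD_mem (hw : Wt d w) {a : κ → Z} (hpath : PathProp E w a) {p J s : ℕ} {h : ι → Z → E}
    (hh : ∀ k τ n, Dec (fun _ : Unit => w) n s (fun _ => df τ (h k))) (k : ι) :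
    ∀ l : List Z, 1 ≤ l.length → DD l (h k) ∈ SpS a p h ⊔ RemS w (s + p) J := by
  have big : ∀ l : List Z, p + 1 ≤ l.length → DD l (h k) ∈ SpS a p h ⊔ RemS w (s + p) J := by
    intro l hl
    refine Submodule.mem_sup_right ?_
    intro l' h1 h2
    obtain _ | ⟨τ, l⟩ := l
    · simp at hl
    have := (hh k τ (l ++ l').length).DD (l ++ l') le_rfl
    rw [DD_append] at this
    refine this.mono hw.good ?_
    simp at hl ⊢
    omega
  obtain ⟨C, hC, hpath⟩ := hpath
  have main : ∀ e q : ℕ, p + 1 ≤ q + e → 1 ≤ q → ∀ (l' : List Z) (σ : List κ),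
      σ.length + l'.length = q → DD (σ.map a ++ l') (h k) ∈ SpS a p h ⊔ RemS w (s + p) J := by
    intro e
    induction e with
    | zero =>
      intro q hq _ l' σ hl
      refine big _ ?_
      simp; omega
    | succ e ihe =>
      intro q hq hq1 l'
      induction l' with
      | nil =>
        intro σ hl
        by_cases hp : σ.length ≤ p
        · refine Submodule.mem_sup_left (Submodule.subset_span ⟨σ, k, ?_, hp, ?_⟩)
          · simp at hl; omega
          · simp
        · refine big _ ?_
          simp; omega
      | cons τ l' ihl =>
        intro σ hl
        obtain ⟨n, ε, i, y, -, -, -, hf⟩ := hpath τ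
        set f := DD (σ.map a) (h k) with hfdef
        have e1 : df τ f = fun z => ∑ t, ε t • (df (a (i t)) f z + df (y t) (df (a (i t)) f) z) := by
          funext z
          show f (z + τ) - f z = _
          rw [hf]
          refine Finset.sum_congr rfl fun t _ => ?_
          congr 1
          simp only [df]; abel
        have e2 : DD (σ.map a ++ τ :: l') (h k) = ∑ t, ε t • (DD ((σ ++ [i t]).map a ++ l') (h k) +
            DD ((σ ++ [i t]).map a ++ y t :: l') (h k)) := by
          rw [DD_append, ← hfdef]
          simp only [DD]
          rw [e1, DD_sum]
          funext z
          rw [Finset.sum_apply]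
          refine Finset.sum_congr rfl fun t _ => ?_
          rw [DD_smul, DD_add]
          simp only [Pi.smul_apply, Pi.add_apply, List.map_append, List.map_cons, List.map_nil,
            DD_append, DD]
          rfl
        rw [e2]
        refine Submodule.sum_mem _ fun t _ => Submodule.smul_mem _ _ (Submodule.add_mem _ ?_ ?_)
        · refine ihl _ ?_
          simp at hl ⊢; omega
        · refine ihe (q + 1) (by omega) (by omega) _ _ ?_
          simp at hl ⊢; omega
  intro l hl
  have := main (p + 1) l.length (by omega) hl l [] (by simp)
  simpa using this

lemma conv_mem [CompleteSpace E] [Fintype κ] [DecidableEq κ] (hw : Wt d w) (hd : 2 ≤ d)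
    {a : κ → Z}
    (hpath : PathProp E w a) (hcutp : CutProp w) {p : ℕ} (hp : p + 1 ≤ d) {h : ι → Z → E}
    (hh : ∀ k τ n, Dec (fun _ : Unit => w) n (d - 1) (fun _ => df τ (h k))) (k : ι) (ρ : Z)
    {F : Z → ℝ} {n : ℕ} (hF : Dec (fun _ : Unit => w) n (2 * d) (fun _ => F)) :
    conv F (df ρ (h k)) ∈ SpS a p h ⊔ RemS w (d - 1 + p) (n + 2) := by
  obtain ⟨T, M, hT, hr⟩ := conv_expand hw hd hpath hcutp hp (hh k ρ) hF
  have : conv F (df ρ (h k)) = (∑ σ ∈ T, M σ • DD (ρ :: σ.map a) (h k)) +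
      (fun z => conv F (df ρ (h k)) z - ∑ σ ∈ T, M σ • DD (σ.map a) (df ρ (h k)) z) := by
    funext z
    simp [DD]
  rw [this]
  refine Submodule.add_mem _ (Submodule.sum_mem _ fun σ _ => Submodule.smul_mem _ _ ?_) ?_
  · exact DD_mem hw hpath hh k _ (by simp)
  · exact Submodule.mem_sup_right hr

end MP

section Uniq

variable {Z ι E : Type*} [AddCommGroup Z] [NormedAddCommGroup E] [NormedSpace ℝ E]
  [Fintype ι] {d : ℕ} {w : Z → ℝ}

/-- weak form of the operator. -/
def Lw (r : ι → Z) (β : ι → ι → E →L[ℝ] E →L[ℝ] ℝ) (e : E) (u : Z → E) (z : Z) : ℝ :=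
  ∑ σ, ∑ ρ, (β σ ρ e (df (r ρ) u (z - r σ)) - β σ ρ e (df (r ρ) u z))

/-- Stability in weak form. -/
def StabW (r : ι → Z) (β : ι → ι → E →L[ℝ] E →L[ℝ] ℝ) : Prop :=
  ∃ c₀ : ℝ, 0 < c₀ ∧ ∀ u : Z → E, (Function.support u).Finite →
    c₀ * ∑' z, ∑ ρ, ‖df (r ρ) u z‖ ^ 2 ≤ ∑' z, ∑ σ, ∑ ρ, β σ ρ (df (r σ) u z) (df (r ρ) u z)

lemma df_supp_finite {u : Z → E} (hu : (Function.support u).Finite) (τ : Z) :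
    (Function.support (df τ u)).Finite := by
  have h1 : (Function.support fun z => u (z + τ)).Finite := by
    have : (Function.support fun z => u (z + τ)) = (fun z => z + τ) ⁻¹' Function.support u := rfl
    rw [this]
    exact hu.preimage (add_left_injective τ).injOn
  refine (h1.union hu).subset ?_
  exact Function.support_sub (fun z => u (z + τ)) u

lemma summable_shift {X : Type*} [NormedAddCommGroup X] {f : Z → X} (hf : Summable f) (τ : Z) :
    Summable fun z => f (z + τ) := (Equiv.addRight τ).summable_iff.2 hf

lemma tsum_shift {X : Type*} [NormedAddCommGroup X] (f : Z → X) (τ : Z) :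
    ∑' z, f (z + τ) = ∑' z, f z := (Equiv.addRight τ).tsum_eq f

lemma summable_df_sq {v : Z → E} (hv : Summable fun z => ‖v z‖ ^ 2) (τ : Z) :
    Summable fun z => ‖df τ v z‖ ^ 2 := by
  have h1 : Summable fun z => ‖v (z + τ)‖ ^ 2 :=
    summable_shift (f := fun z => ‖v z‖ ^ 2) hv τ
  refine Summable.of_nonneg_of_le (fun z => by positivity) (fun z => ?_)
    ((h1.add hv).mul_left 2)
  have := norm_sub_le (v (z + τ)) (v z)
  have h2 := norm_nonneg (df τ v z)
  simp only [df] at *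
  nlinarith [sq_nonneg (‖v (z + τ)‖ - ‖v z‖)]

lemma sum_by_parts (r : ι → Z) (β : ι → ι → E →L[ℝ] E →L[ℝ] ℝ) {u v : Z → E}
    (hu : (Function.support u).Finite) :
    ∑' z, ∑ σ, ∑ ρ, β σ ρ (df (r σ) u z) (df (r ρ) v z) = ∑' z, Lw r β (u z) v z := by
  have key : ∀ σ ρ, Summable (fun z => β σ ρ (u (z + r σ)) (df (r ρ) v z)) ∧
      Summable (fun z => β σ ρ (u z) (df (r ρ) v z)) ∧
      Summable (fun z => β σ ρ (u z) (df (r ρ) v (z - r σ))) ∧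
      ∑' z, β σ ρ (u (z + r σ)) (df (r ρ) v z) = ∑' z, β σ ρ (u z) (df (r ρ) v (z - r σ)) := by
    intro σ ρ
    have h2 : Summable (fun z => β σ ρ (u z) (df (r ρ) v z)) := by
      refine summable_of_hasFiniteSupport (hu.subset fun z hz => ?_)
      intro h0; simp [h0] at hz
    have h3 : Summable (fun z => β σ ρ (u z) (df (r ρ) v (z - r σ))) := by
      refine summable_of_hasFiniteSupport (hu.subset fun z hz => ?_)
      intro h0; simp [h0] at hz
    refine ⟨?_, h2, h3, ?_⟩
    · have := summable_shift h3 (r σ)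
      simpa only [add_sub_cancel_right] using this
    · have := tsum_shift (fun z => β σ ρ (u z) (df (r ρ) v (z - r σ))) (r σ)
      simpa only [add_sub_cancel_right] using this
  have l : ∀ σ ρ, Summable (fun z => β σ ρ (df (r σ) u z) (df (r ρ) v z)) := fun σ ρ => by
    refine ((key σ ρ).1.sub (key σ ρ).2.1).congr fun z => ?_
    rw [show df (r σ) u z = u (z + r σ) - u z from rfl, map_sub, sub_apply]
  simp only [Lw]
  rw [Summable.tsum_finsetSum fun σ _ => summable_sum fun ρ _ => l σ ρ,
    Summable.tsum_finsetSum fun σ _ => summable_sum fun ρ _ => (key σ ρ).2.2.1.sub (key σ ρ).2.1]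
  refine Finset.sum_congr rfl fun σ _ => ?_
  rw [Summable.tsum_finsetSum fun ρ _ => l σ ρ,
    Summable.tsum_finsetSum fun ρ _ => (key σ ρ).2.2.1.sub (key σ ρ).2.1]
  refine Finset.sum_congr rfl fun ρ _ => ?_
  obtain ⟨h1, h2, h3, h4⟩ := key σ ρ
  rw [Summable.tsum_sub h3 h2, ← h4, ← Summable.tsum_sub h1 h2]
  refine tsum_congr fun z => ?_
  rw [show df (r σ) u z = u (z + r σ) - u z from rfl, map_sub, sub_apply]

lemma uniq_df (r : ι → Z) (β : ι → ι → E →L[ℝ] E →L[ℝ] ℝ) (hst : StabW r β) {v : Z → E}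
    (hv : Summable fun z => ‖v z‖ ^ 2) (hL : ∀ e z, Lw r β e v z = 0) (ρ : ι) (z : Z) :
    df (r ρ) v z = 0 := by
  classical
  obtain ⟨c₀, hc₀, hst⟩ := hst
  set vS : Finset Z → Z → E := fun S z => if z ∈ S then v z else 0 with hvS
  have hfin : ∀ S, (Function.support (vS S)).Finite := by
    intro S
    refine S.finite_toSet.subset fun z hz => ?_
    by_contra h
    have : z ∉ S := h
    simp [hvS, this] at hz
  have hlim0 : ∀ z, Tendsto (fun S => vS S z) atTop (𝓝 (v z)) := by
    intro z
    refine tendsto_const_nhds.congr' ?_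
    filter_upwards [eventually_ge_atTop ({z} : Finset Z)] with S hS
    have : z ∈ S := hS (Finset.mem_singleton_self z)
    simp [hvS, this]
  have hlim : ∀ τ z, Tendsto (fun S => df τ (vS S) z) atTop (𝓝 (df τ v z)) :=
    fun τ z => (hlim0 _).sub (hlim0 _)
  have hbd0 : ∀ S z, ‖vS S z‖ ≤ ‖v z‖ := by
    intro S z
    by_cases h : z ∈ S <;> simp [hvS, h]
  set m : Z → Z → ℝ := fun τ z => ‖v (z + τ)‖ + ‖v z‖ with hm
  have hbd : ∀ S τ z, ‖df τ (vS S) z‖ ≤ m τ z := fun S τ z =>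
    (norm_sub_le _ _).trans (add_le_add (hbd0 _ _) (hbd0 _ _))
  have hbdv : ∀ τ z, ‖df τ v z‖ ≤ m τ z := fun τ z => norm_sub_le _ _
  have hm0 : ∀ τ z, 0 ≤ m τ z := fun τ z => by positivity
  have hmsq : ∀ τ, Summable fun z => m τ z ^ 2 := by
    intro τ
    have h1 : Summable fun z => ‖v (z + τ)‖ ^ 2 := summable_shift (f := fun z => ‖v z‖ ^ 2) hv τ
    refine Summable.of_nonneg_of_le (fun z => by positivity) (fun z => ?_)
      ((h1.add hv).mul_left 2)
    simp only [hm]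
    nlinarith [sq_nonneg (‖v (z + τ)‖ - ‖v z‖)]
  have hmm : ∀ τ τ', Summable fun z => m τ z * m τ' z := by
    intro τ τ'
    refine Summable.of_nonneg_of_le (fun z => mul_nonneg (hm0 _ _) (hm0 _ _)) (fun z => ?_)
      ((hmsq τ).add (hmsq τ'))
    nlinarith [sq_nonneg (m τ z - m τ' z), sq_nonneg (m τ z), sq_nonneg (m τ' z)]
  have hsum1 : ∀ S, Summable fun z => ∑ σ, ∑ ρ, β σ ρ (df (r σ) (vS S) z) (df (r ρ) (vS S) z) := by
    intro S
    refine summable_sum fun σ _ => summable_sum fun ρ _ => ?_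
    refine summable_of_hasFiniteSupport ((df_supp_finite (hfin S) (r σ)).subset fun z hz => ?_)
    intro h0; simp [h0] at hz
  have hsum2 : ∀ S, Summable fun z => ∑ σ, ∑ ρ, β σ ρ (df (r σ) (vS S) z) (df (r ρ) v z) := by
    intro S
    refine summable_sum fun σ _ => summable_sum fun ρ _ => ?_
    refine summable_of_hasFiniteSupport ((df_supp_finite (hfin S) (r σ)).subset fun z hz => ?_)
    intro h0; simp [h0] at hz
  have hB : ∀ S, ∑' z, ∑ σ, ∑ ρ, β σ ρ (df (r σ) (vS S) z) (df (r ρ) (vS S) z) =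
      ∑' z, ∑ σ, ∑ ρ, β σ ρ (df (r σ) (vS S) z) (df (r ρ) (vS S) z - df (r ρ) v z) := by
    intro S
    have h0 := sum_by_parts r β (u := vS S) (v := v) (hfin S)
    simp only [hL, tsum_zero] at h0
    have h1 := Summable.tsum_sub (hsum1 S) (hsum2 S)
    rw [h0, sub_zero] at h1
    rw [← h1]
    refine tsum_congr fun z => ?_
    simp only [map_sub, Finset.sum_sub_distrib]
  have hdc : Tendsto (fun S => ∑' z, ∑ σ, ∑ ρ, β σ ρ (df (r σ) (vS S) z)
      (df (r ρ) (vS S) z - df (r ρ) v z)) atTop (𝓝 (∑' z : Z, 0)) := by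
    refine tendsto_tsum_of_dominated_convergence
      (bound := fun z => ∑ σ, ∑ ρ, 2 * ‖β σ ρ‖ * (m (r σ) z * m (r ρ) z)) ?_ ?_ ?_
    · exact summable_sum fun σ _ => summable_sum fun ρ _ => (hmm _ _).mul_left _
    · intro z
      have : (0 : ℝ) = ∑ σ : ι, ∑ ρ : ι, β σ ρ (df (r σ) v z) 0 := by simp
      rw [this]
      refine tendsto_finsetSum _ fun σ _ => tendsto_finsetSum _ fun ρ _ => ?_
      have h1 : Tendsto (fun S => df (r ρ) (vS S) z - df (r ρ) v z) atTop (𝓝 0) := by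
        have := (hlim (r ρ) z).sub_const (df (r ρ) v z)
        rwa [sub_self] at this
      have h2 := ((β σ ρ).continuous₂.tendsto (df (r σ) v z, (0 : E))).comp
        ((hlim (r σ) z).prodMk_nhds h1)
      exact h2
    · refine Eventually.of_forall fun S z => ?_
      refine norm_sum_le_of_le _ fun σ _ => norm_sum_le_of_le _ fun ρ _ => ?_
      refine ((β σ ρ).le_opNorm₂ _ _).trans ?_
      have h1 := hbd S (r σ) z
      have h2 : ‖df (r ρ) (vS S) z - df (r ρ) v z‖ ≤ 2 * m (r ρ) z := by
        refine (norm_sub_le _ _).trans ?_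
        have := hbd S (r ρ) z
        have := hbdv (r ρ) z
        linarith
      calc _ ≤ ‖β σ ρ‖ * m (r σ) z * (2 * m (r ρ) z) := by
            have := hm0 (r σ) z
            gcongr
        _ = _ := by ring
  rw [tsum_zero] at hdc
  have hle : ∀ S, c₀ * ‖df (r ρ) (vS S) z‖ ^ 2 ≤ ∑' z, ∑ σ, ∑ ρ, β σ ρ (df (r σ) (vS S) z)
      (df (r ρ) (vS S) z - df (r ρ) v z) := by
    intro S
    rw [← hB]
    refine le_trans ?_ (hst (vS S) (hfin S))
    gcongr
    have hs : Summable fun z => ∑ ρ, ‖df (r ρ) (vS S) z‖ ^ 2 := by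
      refine summable_sum fun ρ _ => ?_
      refine summable_of_hasFiniteSupport ((df_supp_finite (hfin S) (r ρ)).subset fun z hz => ?_)
      intro h0; simp [h0] at hz
    refine le_trans ?_ (hs.le_tsum z fun y _ => by positivity)
    exact Finset.single_le_sum (f := fun ρ => ‖df (r ρ) (vS S) z‖ ^ 2) (fun _ _ => by positivity)
      (Finset.mem_univ ρ)
  have h1 : Tendsto (fun S => c₀ * ‖df (r ρ) (vS S) z‖ ^ 2) atTop
      (𝓝 (c₀ * ‖df (r ρ) v z‖ ^ 2)) := ((hlim (r ρ) z).norm.pow 2).const_mul c₀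
  have h2 := le_of_tendsto_of_tendsto' h1 hdc hle
  have h3 : ‖df (r ρ) v z‖ ^ 2 ≤ 0 := by
    by_contra h
    push Not at h
    nlinarith
  have h4 : ‖df (r ρ) v z‖ = 0 := by nlinarith [norm_nonneg (df (r ρ) v z)]
  exact norm_eq_zero.1 h4

lemma gen_ind (r : ι → Z) (hgen : AddSubgroup.closure (Set.range r) = ⊤) {P : Z → Prop}
    (h0 : P 0) (hr : ∀ ρ, P (r ρ)) (hadd : ∀ a b, P a → P b → P (a + b)) (hneg : ∀ a, P a → P (-a))
    (τ : Z) : P τ := by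
  have : τ ∈ AddSubgroup.closure (Set.range r) := by rw [hgen]; trivial
  induction this using AddSubgroup.closure_induction with
  | mem x hx => obtain ⟨ρ, rfl⟩ := hx; exact hr ρ
  | zero => exact h0
  | add x y _ _ hx hy => exact hadd _ _ hx hy
  | neg x _ hx => exact hneg _ hx

lemma uniq_zero [Infinite Z] (r : ι → Z) (hgen : AddSubgroup.closure (Set.range r) = ⊤)
    (β : ι → ι → E →L[ℝ] E →L[ℝ] ℝ) (hst : StabW r β) {v : Z → E}
    (hv : Summable fun z => ‖v z‖ ^ 2) (hL : ∀ e z, Lw r β e v z = 0) (z : Z) : v z = 0 := by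
  have h1 := uniq_df r β hst hv hL
  have h2 : ∀ τ, df τ v = fun _ => 0 := by
    intro τ
    induction τ using gen_ind r hgen with
    | h0 => exact df_dir_zero v
    | hr ρ => funext z; exact h1 ρ z
    | hadd a b ha hb => rw [df_dir_add, ha, hb]; simp
    | hneg a ha => rw [df_dir_neg, ha]; simp
  have h3 : ∀ y, v y = v 0 := by
    intro y
    have := congrFun (h2 y) 0
    simp only [df, zero_add] at this
    exact sub_eq_zero.1 this
  simp only [h3] at hv ⊢
  have h4 := (summable_const_iff (‖v 0‖ ^ 2)).1 hv
  have h5 : ‖v 0‖ = 0 := by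
    exact pow_eq_zero_iff (two_ne_zero) |>.1 h4
  exact norm_eq_zero.1 h5

lemma sq_tsum_le {α : Type*} {F x : α → ℝ} (hF0 : ∀ m, 0 ≤ F m) (hF : Summable F)
    (h1 : Summable fun m => F m * x m) (h2 : Summable fun m => F m * x m ^ 2) :
    (∑' m, F m * x m) ^ 2 ≤ (∑' m, F m + 1) * ∑' m, F m * x m ^ 2 := by
  set A := ∑' m, F m with hA
  set t := ∑' m, F m * x m with ht
  set q := ∑' m, F m * x m ^ 2 with hq
  have hA0 : 0 ≤ A := tsum_nonneg hF0
  have h3 : HasSum (fun m => F m * (x m - t / (A + 1)) ^ 2)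
      (q - 2 * (t / (A + 1)) * t + (t / (A + 1)) ^ 2 * A) := by
    have := (h2.hasSum.sub (h1.hasSum.mul_left (2 * (t / (A + 1))))).add
      (hF.hasSum.mul_left ((t / (A + 1)) ^ 2))
    refine this.congr_fun ?_ |> id
    intro m; ring
  have h4 : 0 ≤ q - 2 * (t / (A + 1)) * t + (t / (A + 1)) ^ 2 * A :=
    h3.nonneg fun m => mul_nonneg (hF0 m) (sq_nonneg _)
  set s := t / (A + 1) with hs
  have h5 : t = s * (A + 1) := by rw [hs]; field_simp
  rw [h5] at h4 ⊢
  have h6 : s ^ 2 * (A + 1) ≤ q := by nlinarith [sq_nonneg s]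
  nlinarith

lemma young [CompleteSpace E] {F : Z → ℝ} {K : Z → E} (hF : Summable F)
    (hKb : ∃ C, ∀ z, ‖K z‖ ≤ C)
    (hK : Summable fun z => ‖K z‖ ^ 2) : Summable fun z => ‖conv F K z‖ ^ 2 := by
  have hFa := hF.abs
  have hp : Summable fun x : Z × Z => |F x.1| * ‖K x.2‖ ^ 2 :=
    Summable.mul_of_nonneg hFa hK (fun _ => abs_nonneg _) (fun _ => by positivity)
  let eqv : Z × Z ≃ Z × Z :=
    { toFun := fun x => (x.2, x.1 - x.2)
      invFun := fun x => (x.1 + x.2, x.1)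
      left_inv := fun x => by simp
      right_inv := fun x => by simp }
  have hp2 : Summable fun x : Z × Z => |F x.2| * ‖K (x.1 - x.2)‖ ^ 2 :=
    (eqv.summable_iff (f := fun x : Z × Z => |F x.1| * ‖K x.2‖ ^ 2)).2 hp
  have h1 : Summable fun z => ∑' m, |F m| * ‖K (z - m)‖ ^ 2 := hp2.prod
  refine Summable.of_nonneg_of_le (fun z => by positivity) (fun z => ?_)
    (h1.mul_left (∑' m, |F m| + 1))
  have s1 : Summable fun m => |F m| * ‖K (z - m)‖ := by
    obtain ⟨C, hC⟩ := hKb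
    refine Summable.of_nonneg_of_le (fun m => by positivity) (fun m => ?_) (hFa.mul_right C)
    gcongr
    exact hC _
  refine le_trans ?_ (sq_tsum_le (fun m => abs_nonneg _) hFa s1 (hp2.prod_factor z))
  gcongr
  refine (norm_tsum_le_tsum_norm ?_).trans (le_of_eq ?_)
  · simpa only [norm_smul, Real.norm_eq_abs] using s1
  · simp only [norm_smul, Real.norm_eq_abs]

end Uniq

section Repr

variable {Z ι E : Type*} [AddCommGroup Z] [NormedAddCommGroup E] [NormedSpace ℝ E]
  [Fintype ι] {d : ℕ} {w : Z → ℝ}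

lemma Lw_sub (r : ι → Z) (β : ι → ι → E →L[ℝ] E →L[ℝ] ℝ) (e : E) (u v : Z → E) (z : Z) :
    Lw r β e (fun z => u z - v z) z = Lw r β e u z - Lw r β e v z := by
  simp only [Lw, df_sub, map_sub, ← Finset.sum_sub_distrib]
  refine Finset.sum_congr rfl fun σ _ => Finset.sum_congr rfl fun ρ _ => ?_
  ring

lemma Lw_sum {α : Type*} (s : Finset α) (r : ι → Z) (β : ι → ι → E →L[ℝ] E →L[ℝ] ℝ) (e : E)
    (u : α → Z → E) (z : Z) :
    Lw r β e (fun z => ∑ i ∈ s, u i z) z = ∑ i ∈ s, Lw r β e (u i) z := by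
  simp only [Lw, df_sum, map_sum, ← Finset.sum_sub_distrib]
  rw [Finset.sum_comm (s := s)]
  refine Finset.sum_congr rfl fun σ _ => ?_
  rw [Finset.sum_comm (s := s)]

lemma Lw_df (r : ι → Z) (β : ι → ι → E →L[ℝ] E →L[ℝ] ℝ) (e : E) (τ : Z) (u : Z → E) (z : Z) :
    Lw r β e (df τ u) z = df τ (Lw r β e u) z := by
  have h1 : df τ (Lw r β e u) z = Lw r β e u (z + τ) - Lw r β e u z := rfl
  rw [h1]
  simp only [Lw, ← Finset.sum_sub_distrib]
  refine Finset.sum_congr rfl fun σ _ => Finset.sum_congr rfl fun ρ _ => ?_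
  rw [df_comm (r ρ) τ]
  have h2 : ∀ y, df τ (df (r ρ) u) y = df (r ρ) u (y + τ) - df (r ρ) u y := fun _ => rfl
  rw [h2, h2, map_sub, map_sub, show z + τ - r σ = z - r σ + τ by abel]
  ring

lemma Lw_conv [CompleteSpace E] (r : ι → Z) (β : ι → ι → E →L[ℝ] E →L[ℝ] ℝ) (e : E)
    {F : Z → ℝ} {K : Z → E}
    (hF : Summable F) (hK : ∃ C, ∀ z, ‖K z‖ ≤ C) (z : Z) :
    Lw r β e (conv F K) z = ∑' m, F m * Lw r β e K (z - m) := by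
  have key : ∀ (L : E →L[ℝ] ℝ) ρ y, HasSum (fun m => F m * L (df (r ρ) K (y - m)))
      (L (df (r ρ) (conv F K) y)) := by
    intro L ρ y
    rw [df_conv hF hK]
    have := L.hasSum (conv_summable hF (bdd_df hK (r ρ)) y).hasSum
    simpa only [map_smul, smul_eq_mul, conv] using this
  have : HasSum (fun m => F m * Lw r β e K (z - m)) (Lw r β e (conv F K) z) := by
    simp only [Lw, Finset.mul_sum]
    refine hasSum_sum fun σ _ => hasSum_sum fun ρ _ => ?_
    simp only [mul_sub]
    refine HasSum.sub ?_ (key _ _ _)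
    have := key (β σ ρ e) ρ (z - r σ)
    refine this.congr_fun ?_ |> id
    intro m
    rw [show z - m - r σ = z - r σ - m by abel]
  exact this.tsum_eq.symm

lemma tsum_delta [DecidableEq Z] (F : Z → ℝ) (z : Z) (c : ℝ) :
    ∑' m, F m * (if z - m = 0 then c else 0) = F z * c := by
  rw [tsum_eq_single z]
  · simp
  · intro m hm
    rw [if_neg, mul_zero]
    intro h
    exact hm (sub_eq_zero.1 h).symm

lemma df_sq_all (r : ι → Z) (hgen : AddSubgroup.closure (Set.range r) = ⊤) {u : Z → E}
    (hu : ∀ ρ, Summable fun z => ‖df (r ρ) u z‖ ^ 2) (τ : Z) :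
    Summable fun z => ‖df τ u z‖ ^ 2 := by
  induction τ using gen_ind r hgen with
  | h0 => simp only [df_dir_zero]; simp
  | hr ρ => exact hu ρ
  | hadd a b ha hb =>
    have h1 := summable_shift ha b
    refine Summable.of_nonneg_of_le (fun z => by positivity) (fun z => ?_)
      ((h1.add hb).mul_left 2)
    rw [df_dir_add]
    have := norm_add_le (df a u (z + b)) (df b u z)
    have h2 := norm_nonneg (df a u (z + b) + df b u z)
    nlinarith [sq_nonneg (‖df a u (z + b)‖ - ‖df b u z‖)]
  | hneg a ha =>
    have h1 := summable_shift ha (-a)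
    refine h1.congr fun z => ?_
    rw [df_dir_neg, norm_neg]

lemma Bd.sq_summable (hw : Wt d w) {s : ℕ} {f : Z → E}
    (h : Bd (fun _ : Unit => w) s (fun _ => f))
    (hs : d + 1 ≤ 2 * s) : Summable fun z => ‖f z‖ ^ 2 := by
  obtain ⟨C, hC, h⟩ := h
  refine Summable.of_nonneg_of_le (fun z => by positivity) (fun z => ?_)
    ((hw.summ' hs).mul_left (C ^ 2))
  have h1 := h () z
  calc ‖f z‖ ^ 2 ≤ (C * (w z ^ s)⁻¹) ^ 2 := by gcongr
    _ = _ := by rw [mul_pow, inv_pow, ← pow_mul, mul_comm s]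

lemma repr_formula [Infinite Z] [DecidableEq Z] (hw : Wt d w) (hd : 2 ≤ d) {N : ℕ} (r : ι → Z)
    (hgen : AddSubgroup.closure (Set.range r) = ⊤)
    (β : ι → ι → (Fin N → ℝ) →L[ℝ] (Fin N → ℝ) →L[ℝ] ℝ) (hst : StabW r β)
    {G : Fin N → Z → (Fin N → ℝ)}
    (hG : ∀ k e z, Lw r β e (G k) z = if z = 0 then e k else 0)
    (hGd : ∀ k τ n, Dec (fun _ : Unit => w) n (d - 1) (fun _ => df τ (G k)))
    {u : Z → (Fin N → ℝ)} (hu : ∀ ρ, Summable fun z => ‖df (r ρ) u z‖ ^ 2)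
    {F : ι → Fin N → Z → ℝ} (hF : ∀ ρ k, Summable (F ρ k))
    (hequ : ∀ e z, Lw r β e u z = ∑ ρ, ∑ k, e k * (F ρ k (z - r ρ) - F ρ k z)) (τ : Z) :
    df τ u = fun z => ∑ ρ, ∑ k, conv (F ρ k) (df τ (df (-r ρ) (G k))) z := by
  set U : Z → (Fin N → ℝ) := fun z => ∑ ρ, ∑ k, conv (F ρ k) (df (-r ρ) (G k)) z with hU
  have hKb : ∀ ρ k, ∃ C, ∀ z, ‖df (-r ρ) (G k) z‖ ≤ C := fun ρ k => (hGd k (-r ρ) 0).bd.bdd hw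
  have hdU : ∀ τ, df τ U = fun z => ∑ ρ, ∑ k, conv (F ρ k) (df τ (df (-r ρ) (G k))) z := by
    intro τ
    rw [hU, df_sum]
    funext z
    refine Finset.sum_congr rfl fun ρ _ => ?_
    rw [df_sum]
    refine Finset.sum_congr rfl fun k _ => ?_
    rw [df_conv (hF ρ k) (hKb ρ k)]
  rw [← hdU]
  have hLU : ∀ e z, Lw r β e U z = ∑ ρ, ∑ k, e k * (F ρ k (z - r ρ) - F ρ k z) := by
    intro e z
    rw [hU, Lw_sum]
    refine Finset.sum_congr rfl fun ρ _ => ?_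
    rw [Lw_sum]
    refine Finset.sum_congr rfl fun k _ => ?_
    rw [Lw_conv r β e (hF ρ k) (hKb ρ k)]
    have e1 : ∀ m, F ρ k m * Lw r β e (df (-r ρ) (G k)) (z - m) =
        F ρ k m * (if (z - r ρ) - m = 0 then e k else 0) -
        F ρ k m * (if z - m = 0 then e k else 0) := by
      intro m
      rw [Lw_df]
      have : ∀ y, df (-r ρ) (Lw r β e (G k)) y = Lw r β e (G k) (y + -r ρ) - Lw r β e (G k) y :=
        fun _ => rfl
      rw [this, hG, hG, mul_sub, show z - m + -r ρ = z - r ρ - m by abel]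
    simp only [e1]
    have s1 : ∀ y, Summable fun m => F ρ k m * (if y - m = 0 then e k else 0) := by
      intro y
      refine summable_of_hasFiniteSupport ((Set.finite_singleton y).subset fun m hm => ?_)
      by_contra h
      have : ¬ (y - m = 0) := fun h' => h (sub_eq_zero.1 h').symm
      simp [this] at hm
    rw [Summable.tsum_sub (s1 _) (s1 _), tsum_delta, tsum_delta]
    ring
  have hUsq : ∀ τ, Summable fun z => ‖df τ U z‖ ^ 2 := by
    intro τ
    have key : ∀ ρ k, Summable fun z => ‖conv (F ρ k) (df τ (df (-r ρ) (G k))) z‖ ^ 2 := by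
      intro ρ k
      have h1 := ((hGd k (-r ρ) 1).2 τ).bd
      exact young (hF ρ k) (h1.bdd hw) (h1.sq_summable hw (by omega))
    rw [hdU]
    refine Summable.of_nonneg_of_le (fun z => by positivity) (fun z => ?_)
      ((summable_sum fun ρ (_ : ρ ∈ Finset.univ) =>
        summable_sum fun k (_ : k ∈ Finset.univ) => key ρ k).mul_left
          (Fintype.card ι * Fintype.card (Fin N) : ℝ))
    have h2 : ‖∑ ρ, ∑ k, conv (F ρ k) (df τ (df (-r ρ) (G k))) z‖ ≤
        ∑ x : ι × Fin N, ‖conv (F x.1 x.2) (df τ (df (-r x.1) (G x.2))) z‖ := by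
      rw [← Fintype.sum_prod_type']
      exact norm_sum_le _ _
    calc _ ≤ (∑ x : ι × Fin N, ‖conv (F x.1 x.2) (df τ (df (-r x.1) (G x.2))) z‖) ^ 2 := by
          gcongr
      _ ≤ (Finset.univ : Finset (ι × Fin N)).card *
          ∑ x : ι × Fin N, ‖conv (F x.1 x.2) (df τ (df (-r x.1) (G x.2))) z‖ ^ 2 :=
          sq_sum_le_card_mul_sum_sq
      _ = _ := by
          rw [Finset.card_univ, Fintype.card_prod, Fintype.sum_prod_type]
          push_cast
          rfl
  have huv : ∀ z, df τ (fun z => u z - U z) z = 0 := by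
    refine uniq_zero r hgen β hst ?_ ?_
    · rw [df_sub]
      refine Summable.of_nonneg_of_le (fun z => by positivity) (fun z => ?_)
        (((df_sq_all r hgen hu τ).add (hUsq τ)).mul_left 2)
      have := norm_sub_le (df τ u z) (df τ U z)
      have h2 := norm_nonneg (df τ u z - df τ U z)
      nlinarith [sq_nonneg (‖df τ u z‖ - ‖df τ U z‖)]
    · intro e z
      have : (Lw r β e fun z => u z - U z) = fun _ => 0 := by
        funext y
        rw [Lw_sub, hequ, hLU, sub_self]
      rw [Lw_df, this, df_const]
  funext z
  have := huv z
  rw [df_sub] at this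
  exact sub_eq_zero.1 this

end Repr

section Basic

variable {Z : Type*} [AddCommGroup Z] {d : ℕ} {w : Z → ℝ}

lemma hasSum_fin_if [DecidableEq Z] (f : Z → ℝ) (Q : Finset Z) :
    HasSum (fun m => if m ∈ Q then f m else 0) (∑ m ∈ Q, f m) := by
  have h : HasSum (fun m => if m ∈ Q then f m else 0) (∑ m ∈ Q, if m ∈ Q then f m else 0) :=
    hasSum_sum_of_ne_finset_zero (fun m hm => by simp [hm])
  rwa [Finset.sum_congr rfl (fun m hm => if_pos hm)] at h

lemma tail_small {f : Z → ℝ} (hf : Summable f) {ε : ℝ} (hε : 0 < ε) [DecidableEq Z] :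
    ∃ Q : Finset Z, ∃ t, t ≤ ε ∧ HasSum (fun m => if m ∈ Q then 0 else f m) t := by
  obtain ⟨Q, hQ⟩ := (hf.hasSum.eventually (lt_mem_nhds
    (show ∑' m, f m - ε < ∑' m, f m by linarith))).exists
  refine ⟨Q, ∑' m, f m - ∑ m ∈ Q, f m, by linarith, ?_⟩
  have h1 : HasSum (fun m => if m ∈ Q then f m else 0) (∑ m ∈ Q, f m) := hasSum_fin_if f Q
  have h2 := hf.hasSum.sub h1
  refine h2.congr_fun ?_ |> id
  intro m
  by_cases h : m ∈ Q <;> simp [h]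

set_option maxHeartbeats 1000000 in
lemma basic_decay (hw : Wt d w) (hd : 2 ≤ d) {M : Z → ℝ} (hM0 : ∀ z, 0 ≤ M z)
    (hMs : Summable fun z => M z ^ 2) {C : ℝ} (hC : 0 ≤ C)
    (hM : ∀ z, M z ≤ C * ∑' m, ((w m ^ (2 * d))⁻¹ + M m ^ 2) * (w (z - m) ^ d)⁻¹) :
    ∃ C', 0 ≤ C' ∧ ∀ z, M z ≤ C' * (w z ^ d)⁻¹ := by
  classical
  have hB := hw.summ' (s := 2 * d) (by omega)
  set B := ∑' z, (w z ^ (2 * d))⁻¹ with hBdef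
  have hB0 : 0 ≤ B := tsum_nonneg fun z => by have := hw.pos z; positivity
  set A := ∑' z, M z ^ 2 with hAdef
  have hA0 : 0 ≤ A := tsum_nonneg fun z => by positivity
  set D : ℝ := C * 2 ^ d with hD
  have hD0 : 0 ≤ D := by positivity
  set θ : ℝ := 1 / (4 * (D + 1) * (B + 1)) with hθ
  have hθ0 : 0 < θ := by positivity
  set ε : ℝ := θ / (4 * (D + 1)) with hε
  have hε0 : 0 < ε := by positivity
  obtain ⟨Q, t, ht, hQ⟩ := tail_small hMs hε0
  set A₃ := ∑ m ∈ Q, M m ^ 2 * w m ^ d with hA₃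
  have hA₃0 : 0 ≤ A₃ := Finset.sum_nonneg fun m _ => by have := hw.pos m; positivity
  have hQ3 : HasSum (fun m => if m ∈ Q then M m ^ 2 * w m ^ d else 0) A₃ :=
    hasSum_fin_if (fun m => M m ^ 2 * w m ^ d) Q
  have hsmall : D * (θ * B + θ⁻¹ * t) ≤ 1 / 2 := by
    have h1 : D * (θ * B) ≤ 1 / 4 := by
      rw [hθ]
      rw [show D * (1 / (4 * (D + 1) * (B + 1)) * B) = D * B / (4 * (D + 1) * (B + 1)) by ring,
        div_le_iff₀ (by positivity)]
      nlinarith [mul_nonneg hD0 hB0]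
    have h2 : D * (θ⁻¹ * t) ≤ 1 / 4 := by
      calc D * (θ⁻¹ * t) ≤ D * (θ⁻¹ * ε) := by gcongr
        _ = D / (4 * (D + 1)) := by rw [hε]; field_simp
        _ ≤ 1 / 4 := by rw [div_le_iff₀ (by positivity)]; linarith
    linarith
  set C₀ : ℝ := D * ((B + A) + (B + B + A₃)) with hC₀
  have hC₀0 : 0 ≤ C₀ := by positivity
  have hMb : ∀ z, M z ≤ A + 1 := by
    intro z
    have := hMs.le_tsum z fun y _ => by positivity
    nlinarith [hM0 z]
  have main : ∀ T : ℝ, 1 ≤ T → ∀ z, M z * min (w z) T ^ d ≤ 2 * C₀ := by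
    intro T hT
    set ω : Z → ℝ := fun z => min (w z) T with hω
    have hω1 : ∀ z, 0 < ω z := fun z => lt_min (hw.pos z) (by linarith)
    have hωw : ∀ z, ω z ≤ w z := fun z => min_le_left _ _
    have hωadd : ∀ z m, ω z ≤ ω (z - m) + ω m := by
      intro z m
      simp only [hω]
      have := hw.sub' z m
      have h2 := hw.pos m
      have h3 := hw.pos (z - m)
      rcases min_cases (w (z - m)) T with h | h <;> rcases min_cases (w m) T with h' | h' <;>
      rcases min_cases (w z) T with h'' | h'' <;> linarith
    have hbdd : BddAbove (Set.range fun z => M z * ω z ^ d) := by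
      refine ⟨(A + 1) * T ^ d, ?_⟩
      rintro _ ⟨z, rfl⟩
      have h1 := hMb z
      have h2 := hω1 z
      have h3 : ω z ≤ T := min_le_right _ _
      show M z * ω z ^ d ≤ _
      gcongr
    set S := ⨆ z, M z * ω z ^ d with hS
    have hle : ∀ z, M z * ω z ^ d ≤ S := fun z => le_ciSup hbdd z
    have hS0 : 0 ≤ S := (mul_nonneg (hM0 0) (pow_nonneg (hω1 0).le d)).trans (hle 0)
    have step : ∀ z, M z * ω z ^ d ≤ C₀ + S / 2 := by
      intro z
      have hsB : HasSum (fun m => (w (z - m) ^ (2 * d))⁻¹) B :=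
        (Equiv.subLeft z).hasSum_iff.2 hB.hasSum
      have hmaj := ((hB.hasSum.add hMs.hasSum).add (((hB.hasSum.add hsB).add hQ3).add
        (((hsB.mul_left θ).add (hQ.mul_left θ⁻¹)).mul_left S))).mul_left ((2 : ℝ) ^ d)
      have hterm : ∀ m, ‖((w m ^ (2 * d))⁻¹ + M m ^ 2) * (w (z - m) ^ d)⁻¹ * ω z ^ d‖ ≤
          2 ^ d * (((w m ^ (2 * d))⁻¹ + M m ^ 2) + ((((w m ^ (2 * d))⁻¹ + (w (z - m) ^ (2 * d))⁻¹)
            + (if m ∈ Q then M m ^ 2 * w m ^ d else 0)) + S * (θ * (w (z - m) ^ (2 * d))⁻¹ +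
              θ⁻¹ * (if m ∈ Q then 0 else M m ^ 2)))) := by
        intro m
        have p1 := hw.pos m
        have p2 := hw.pos (z - m)
        have p3 := hω1 z
        have p4 := hω1 m
        have p5 := hω1 (z - m)
        have p6 := hM0 m
        set v := (w (z - m) ^ d)⁻¹ with hv
        have hv0 : 0 < v := by positivity
        have hv1 : v ≤ 1 := inv_le_one_of_one_le₀ (one_le_pow₀ (hw.one_le _))
        set x := (w m ^ d)⁻¹ with hx
        have hx0 : 0 < x := by positivity
        have hv2 : (w (z - m) ^ (2 * d))⁻¹ = v ^ 2 := by rw [hv, inv_pow, ← pow_mul, mul_comm]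
        have hx2 : (w m ^ (2 * d))⁻¹ = x ^ 2 := by rw [hx, inv_pow, ← pow_mul, mul_comm]
        rw [hv2, hx2, Real.norm_of_nonneg (by positivity), mul_assoc]
        have q1 : ω z ^ d ≤ 2 ^ d * (ω (z - m) ^ d + ω m ^ d) := by
          calc ω z ^ d ≤ (ω (z - m) + ω m) ^ d := by gcongr; exact hωadd z m
            _ ≤ 2 ^ (d - 1) * (ω (z - m) ^ d + ω m ^ d) := add_pow_le p5.le p4.le d
            _ ≤ _ := by gcongr <;> first | norm_num | omega
        have q2 : v * ω (z - m) ^ d ≤ 1 := by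
          rw [hv, inv_mul_le_iff₀ (by positivity), mul_one]
          gcongr; exact hωw _
        have q3 : x * ω m ^ d ≤ 1 := by
          rw [hx, inv_mul_le_iff₀ (by positivity), mul_one]
          gcongr; exact hωw _
        have q4 : M m ^ 2 * (v * ω m ^ d) ≤ (if m ∈ Q then M m ^ 2 * w m ^ d else 0) +
            S * (θ * v ^ 2 + θ⁻¹ * (if m ∈ Q then 0 else M m ^ 2)) := by
          by_cases hmQ : m ∈ Q
          · simp only [hmQ, if_true]
            have : v * ω m ^ d ≤ 1 * w m ^ d := by gcongr; exact hωw _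
            have h5 : 0 ≤ S * (θ * v ^ 2 + θ⁻¹ * 0) := by positivity
            have h6 := mul_le_mul_of_nonneg_left this (sq_nonneg (M m))
            rw [one_mul] at h6
            linarith
          · simp only [hmQ, if_false, zero_add]
            have h6 : M m * v ≤ θ * v ^ 2 + θ⁻¹ * M m ^ 2 := by
              have h7 : 0 ≤ θ⁻¹ * (M m - θ * v) ^ 2 := by positivity
              have h8 : θ⁻¹ * (M m - θ * v) ^ 2 = θ⁻¹ * M m ^ 2 - 2 * (M m * v) + θ * v ^ 2 := by
                field_simp; ring
              have h9 : 0 ≤ M m * v := by positivity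
              linarith
            calc M m ^ 2 * (v * ω m ^ d) = (M m * ω m ^ d) * (M m * v) := by ring
              _ ≤ S * (M m * v) := by gcongr; exact hle m
              _ ≤ _ := by gcongr
        have q5 : x ^ 2 * (v * ω m ^ d) ≤ x ^ 2 + v ^ 2 := by
          have : x ^ 2 * (v * ω m ^ d) = (x * ω m ^ d) * (x * v) := by ring
          rw [this]
          have h3 : (x * ω m ^ d) * (x * v) ≤ 1 * (x * v) := by gcongr
          nlinarith [sq_nonneg (x - v), sq_nonneg x, sq_nonneg v]
        calc (x ^ 2 + M m ^ 2) * (v * ω z ^ d)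
            ≤ (x ^ 2 + M m ^ 2) * (v * (2 ^ d * (ω (z - m) ^ d + ω m ^ d))) := by gcongr
          _ = 2 ^ d * ((x ^ 2 + M m ^ 2) * (v * ω (z - m) ^ d) +
              (x ^ 2 * (v * ω m ^ d) + M m ^ 2 * (v * ω m ^ d))) := by ring
          _ ≤ 2 ^ d * ((x ^ 2 + M m ^ 2) * 1 + ((x ^ 2 + v ^ 2) +
              ((if m ∈ Q then M m ^ 2 * w m ^ d else 0) +
            S * (θ * v ^ 2 + θ⁻¹ * (if m ∈ Q then 0 else M m ^ 2))))) := by gcongr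
          _ = _ := by ring
      have h1 := (Real.le_norm_self _).trans (tsum_of_norm_bounded hmaj hterm)
      rw [tsum_mul_right] at h1
      have h2 := hM z
      have h3 : 0 ≤ ω z ^ d := by have := hω1 z; positivity
      calc M z * ω z ^ d ≤ (C * ∑' m, ((w m ^ (2 * d))⁻¹ + M m ^ 2) * (w (z - m) ^ d)⁻¹) * ω z ^ d := by
            gcongr
        _ = C * ((∑' m, ((w m ^ (2 * d))⁻¹ + M m ^ 2) * (w (z - m) ^ d)⁻¹) * ω z ^ d) := by ring
        _ ≤ C * (2 ^ d * (B + A + (B + B + A₃ + S * (θ * B + θ⁻¹ * t)))) := by gcongr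
        _ = C₀ + S * (D * (θ * B + θ⁻¹ * t)) := by rw [hC₀, hD]; ring
        _ ≤ C₀ + S * (1 / 2) := by gcongr
        _ = _ := by ring
    have hSle : S ≤ C₀ + S / 2 := ciSup_le step
    intro z
    have := hle z
    linarith
  refine ⟨2 * C₀, by positivity, fun z => ?_⟩
  have h1 := main (w z) (hw.one_le z) z
  rw [min_self] at h1
  have := hw.pos z
  rwa [← div_eq_mul_inv, le_div_iff₀ (by positivity)]

end Basic

section Nonlin

variable {X : Type*} [NormedAddCommGroup X] [NormedSpace ℝ X] [ProperSpace X]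

lemma taylor_bound {φ : X → ℝ} (n : ℕ) (hφ : ContDiff ℝ ((n + 2 : ℕ) : ℕ∞) φ)
    (h0 : φ 0 = 0) (h1 : fderiv ℝ φ 0 = 0) (B : ℝ) :
    ∃ C, 0 ≤ C ∧ ∀ x, ‖x‖ ≤ B →
      ‖φ x - ∑ k ∈ Finset.range n, ((k + 2).factorial : ℝ)⁻¹ •
        iteratedFDeriv ℝ (k + 2) φ 0 (fun _ => x)‖ ≤ C * ‖x‖ ^ (n + 2) := by
  have hc : Continuous (iteratedFDeriv ℝ (n + 2) φ) :=
    hφ.continuous_iteratedFDeriv (by exact_mod_cast le_rfl)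
  obtain ⟨C, hC⟩ := (isCompact_closedBall (0 : X) B).exists_bound_of_continuousOn
    hc.continuousOn
  refine ⟨((n + 1).factorial : ℝ)⁻¹ * max C 0, by positivity, fun x hx => ?_⟩
  have key := map_add_eq_sum_add_integral_iteratedFDeriv (f := φ) (x := 0) (y := x) (n := n + 1)
    (fun t _ => (hφ.contDiffAt).of_le (by norm_cast))
  rw [Finset.sum_range_succ', Finset.sum_range_succ'] at key
  have h1' : iteratedFDeriv ℝ (0 + 1) φ 0 (fun _ => x) = 0 := by
    change iteratedFDeriv ℝ 1 φ 0 (fun _ => x) = 0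
    rw [iteratedFDeriv_one_apply, h1]; rfl
  rw [h1'] at key
  simp only [zero_add, iteratedFDeriv_zero_apply, h0] at key
  rw [key]
  have e : ∀ P Q : ℝ, P + (((Nat.factorial 1 : ℕ) : ℝ)⁻¹ • (0 : ℝ)) +
     ((Nat.factorial 0 : ℕ) : ℝ)⁻¹ • (0:ℝ) + Q - P = Q := by intros; simp
  have e2 := e (∑ k ∈ Finset.range n, ((k + 2).factorial : ℝ)⁻¹ •
        iteratedFDeriv ℝ (k + 2) φ 0 (fun _ => x)) (((n + 1).factorial : ℝ)⁻¹ •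
        ∫ t in (0 : ℝ)..1, (1 - t) ^ (n + 1) • iteratedFDeriv ℝ (n + 1 + 1) φ (t • x) (fun _ => x))
  refine (congrArg norm e2).le.trans ?_
  rw [norm_smul, Real.norm_of_nonneg (by positivity), mul_assoc]
  refine mul_le_mul_of_nonneg_left ?_ (by positivity)
  have := intervalIntegral.norm_integral_le_of_norm_le_const (a := (0:ℝ)) (b := 1)
    (f := fun t : ℝ => (1 - t) ^ (n + 1) • iteratedFDeriv ℝ (n + 1 + 1) φ (t • x) (fun _ => x))
    (C := max C 0 * ‖x‖ ^ (n + 2)) ?_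
  · simpa using this
  · intro t ht
    rw [Set.uIoc_of_le zero_le_one] at ht
    rw [norm_smul]
    have ht1 : ‖(1 - t) ^ (n + 1)‖ ≤ 1 := by
      rw [norm_pow, Real.norm_of_nonneg (by linarith [ht.2])]
      exact pow_le_one₀ (by linarith [ht.2]) (by linarith [ht.1])
    have hm : ‖t • x‖ ≤ B := by
      rw [norm_smul, Real.norm_of_nonneg ht.1.le]
      exact (mul_le_of_le_one_left (norm_nonneg _) ht.2).trans hx
    have h3 := (iteratedFDeriv ℝ (n + 1 + 1) φ (t • x)).le_opNorm (fun _ => x)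
    simp only [Finset.prod_const, Finset.card_univ, Fintype.card_fin] at h3
    have h4 : ‖iteratedFDeriv ℝ (n + 1 + 1) φ (t • x)‖ ≤ max C 0 :=
      (hC _ (by simpa using hm)).trans (le_max_left _ _)
    calc _ ≤ 1 * ‖iteratedFDeriv ℝ (n + 1 + 1) φ (t • x) (fun _ => x)‖ :=
          mul_le_mul_of_nonneg_right ht1 (norm_nonneg _)
      _ ≤ _ := by
          rw [one_mul]
          exact h3.trans (mul_le_mul_of_nonneg_right h4 (by positivity))

lemma quad_bound {φ : X → ℝ} (hφ : ContDiff ℝ ((2 : ℕ) : ℕ∞) φ)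
    (h0 : φ 0 = 0) (h1 : fderiv ℝ φ 0 = 0) (B : ℝ) :
    ∃ C, 0 ≤ C ∧ ∀ x, ‖x‖ ≤ B → ‖φ x‖ ≤ C * ‖x‖ ^ 2 := by
  have := taylor_bound 0 hφ h0 h1 B
  simpa using this

variable {Z I : Type*} [AddCommGroup Z] {lam : I → Z → ℝ}

lemma nonlin_dec (hw : GoodW lam) {φ : X → ℝ} (n : ℕ) (hφ : ContDiff ℝ ((n + 2 : ℕ) : ℕ∞) φ)
    (h0 : φ 0 = 0) (h1 : fderiv ℝ φ 0 = 0) {d : ℕ} (hd : 1 ≤ d) {a : I → Z → X}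
    (ha : Dec lam n d a) : Dec lam n (2 * d) (fun i z => φ (a i z)) := by
  obtain ⟨A, hA, hAa⟩ := ha.bd
  have hb : ∀ i z, ‖a i z‖ ≤ A := fun i z => (hAa i z).trans
    (mul_le_of_le_one_right hA (inv_le_one_of_one_le₀ (one_le_pow₀ (hw.one_le i z))))
  obtain ⟨C, hC, hT⟩ := taylor_bound n hφ h0 h1 A
  have hsum : Dec lam n (2 * d) (fun i z => ∑ k ∈ Finset.range n, ((k + 2).factorial : ℝ)⁻¹ •
        iteratedFDeriv ℝ (k + 2) φ 0 (fun _ => a i z)) := by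
    refine Dec.sum _ fun k hk => ?_
    have hT : Dec lam n 0 (fun (_ : I) (_ : Z) => ((k + 2).factorial : ℝ)⁻¹ •
        iteratedFDeriv ℝ (k + 2) φ 0) := by
      refine Dec.of_DD fun l hl => ?_
      cases l with
      | nil =>
        refine ⟨‖((k + 2).factorial : ℝ)⁻¹ • iteratedFDeriv ℝ (k + 2) φ 0‖, norm_nonneg _, ?_⟩
        intro i z; simp [Defect.DD]
      | cons b l =>
        simp only [Defect.DD, df_const]
        have : Defect.DD l (fun _ : Z => (0 : ContinuousMultilinearMap ℝ (fun _ : Fin (k+2) => X) ℝ))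
          = fun _ => 0 := by
            have := DD_zero (E := ContinuousMultilinearMap ℝ (fun _ : Fin (k+2) => X) ℝ) l
            exact this
        rw [this]
        exact Bd.zero _
    have := Dec.multilin hw ha (k + 2) hT
    refine (this.mono hw (s := 2 * d) ?_)
    rw [zero_add]; gcongr; omega
  have hrem : Dec lam n (2 * d) (fun i z => φ (a i z) -
      ∑ k ∈ Finset.range n, ((k + 2).factorial : ℝ)⁻¹ •
        iteratedFDeriv ℝ (k + 2) φ 0 (fun _ => a i z)) := by
    refine Dec.of_bd hw (Bd.mono hw (t := d * (n + 2)) ?_ (by nlinarith))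
    refine ⟨C * A ^ (n + 2), by positivity, fun i z => (hT _ (hb i z)).trans ?_⟩
    rw [mul_assoc]
    refine mul_le_mul_of_nonneg_left ?_ hC
    refine (pow_le_pow_left₀ (norm_nonneg _) (hAa i z) _).trans ?_
    rw [mul_pow, inv_pow, ← pow_mul]
  have := hrem.add hsum
  simpa only [sub_add_cancel] using this

end Nonlin

section Boot

variable {Z ι κ E : Type*} [AddCommGroup Z] [NormedAddCommGroup E] [NormedSpace ℝ E]
  [Fintype ι] {d : ℕ} {w : Z → ℝ}

lemma Bd.pi {I : Type*} {lam : I → Z → ℝ} (hw : GoodW lam) {s : ℕ} {a : I → Z → (ι → E)}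
    (h : ∀ ρ, Bd lam s (fun i z => a i z ρ)) : Bd lam s a := by
  choose C hC hb using h
  refine ⟨∑ ρ, C ρ, Finset.sum_nonneg fun ρ _ => hC ρ, fun i z => ?_⟩
  have hp : 0 ≤ (lam i z ^ s)⁻¹ := by have := hw.one_le i z; positivity
  refine (pi_norm_le_iff_of_nonneg
    (mul_nonneg (Finset.sum_nonneg fun ρ _ => hC ρ) hp)).2 fun ρ => (hb ρ i z).trans ?_
  exact mul_le_mul_of_nonneg_right
    (Finset.single_le_sum (f := C) (fun ρ _ => hC ρ) (Finset.mem_univ ρ)) hp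

lemma Dec.pi {I : Type*} {lam : I → Z → ℝ} (hw : GoodW lam) {n : ℕ} :
    ∀ {s : ℕ} {a : I → Z → (ι → E)},
    (∀ ρ, Dec lam n s (fun i z => a i z ρ)) → Dec lam n s a := by
  induction n with
  | zero => intro s a h; exact Bd.pi hw h
  | succ n ih =>
    intro s a h
    exact ⟨Bd.pi hw fun ρ => (h ρ).1, fun τ => ih fun ρ => (h ρ).2 τ⟩

lemma conv_le {F f : Z → ℝ} {K : Z → E} {C C' : ℝ} (hw : Wt d w) (hf : Summable f)
    (hf0 : ∀ m, 0 ≤ f m) (hC : 0 ≤ C) (hC' : 0 ≤ C') (hF : ∀ m, |F m| ≤ C * f m)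
    (hK : ∀ z, ‖K z‖ ≤ C' * (w z ^ d)⁻¹) (z : Z) :
    ‖conv F K z‖ ≤ C * C' * ∑' m, f m * (w (z - m) ^ d)⁻¹ := by
  have hs : Summable fun m => f m * (w (z - m) ^ d)⁻¹ := by
    refine Summable.of_nonneg_of_le (fun m => ?_) (fun m => ?_) hf
    · have := hw.pos (z - m); have := hf0 m; positivity
    · exact mul_le_of_le_one_right (hf0 m)
        (inv_le_one_of_one_le₀ (one_le_pow₀ (hw.one_le _)))
  rw [← tsum_mul_left]
  refine tsum_of_norm_bounded (hs.mul_left (C * C')).hasSum fun m => ?_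
  rw [norm_smul, Real.norm_eq_abs]
  calc _ ≤ (C * f m) * (C' * (w (z - m) ^ d)⁻¹) :=
        mul_le_mul (hF m) (hK _) (norm_nonneg _) (mul_nonneg hC (hf0 m))
    _ = _ := by ring

variable [Infinite Z] [DecidableEq Z] [Fintype κ] [DecidableEq κ]

lemma rep_mem (hw : Wt d w) (hd : 2 ≤ d) {N : ℕ} (r : ι → Z)
    (hgen : AddSubgroup.closure (Set.range r) = ⊤)
    (β : ι → ι → (Fin N → ℝ) →L[ℝ] (Fin N → ℝ) →L[ℝ] ℝ) (hst : StabW r β)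
    {G : Fin N → Z → (Fin N → ℝ)}
    (hG : ∀ k e z, Lw r β e (G k) z = if z = 0 then e k else 0)
    (hGd : ∀ k τ n, Dec (fun _ : Unit => w) n (d - 1) (fun _ => df τ (G k)))
    {u : Z → (Fin N → ℝ)} (hu : ∀ ρ, Summable fun z => ‖df (r ρ) u z‖ ^ 2)
    {F : ι → Fin N → Z → ℝ} {n : ℕ}
    (hF : ∀ ρ k, Dec (fun _ : Unit => w) n (2 * d) (fun _ => F ρ k))
    (hequ : ∀ e z, Lw r β e u z = ∑ ρ, ∑ k, e k * (F ρ k (z - r ρ) - F ρ k z))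
    {a : κ → Z} (hpath : PathProp (Fin N → ℝ) w a) (hcutp : CutProp w) {p : ℕ} (hp : p + 1 ≤ d) :
    u ∈ SpS a p G ⊔ RemS w (d - 1 + p) (n + 2) := by
  have hFs : ∀ ρ k, Summable (F ρ k) := fun ρ k => (hF ρ k).bd.summable hw (by omega)
  have hrep := repr_formula hw hd r hgen β hst hG hGd hu hFs hequ
  set U : Z → (Fin N → ℝ) := ∑ ρ, ∑ k, conv (F ρ k) (df (-r ρ) (G k)) with hU
  have hUz : U = fun z => ∑ ρ, ∑ k, conv (F ρ k) (df (-r ρ) (G k)) z := by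
    funext z; simp only [hU, Finset.sum_apply]
  have hdU : ∀ τ, df τ U = df τ u := by
    intro τ
    rw [hrep τ, hUz, df_sum]
    funext z
    refine Finset.sum_congr rfl fun ρ _ => ?_
    rw [df_sum]
    refine Finset.sum_congr rfl fun k _ => ?_
    rw [df_conv (hFs ρ k) ((hGd k (-r ρ) 0).bd.bdd hw)]
  have h1 : U ∈ SpS a p G ⊔ RemS w (d - 1 + p) (n + 2) :=
    Submodule.sum_mem _ fun ρ _ => Submodule.sum_mem _ fun k _ =>
      conv_mem hw hd hpath hcutp hp hGd k (-r ρ) (hF ρ k)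
  have h2 : u - U ∈ (RemS w (d - 1 + p) (n + 2) : Submodule ℝ (Z → (Fin N → ℝ))) := by
    intro l hl _
    cases l with
    | nil => simp at hl
    | cons b l =>
      have e : df b (u - U) = fun _ => 0 := by
        have := df_sub b u U
        rw [hdU] at this
        change df b (fun z => u z - U z) = _
        rw [this]; funext z; exact sub_self _
      have : DD (b :: l) (u - U) = fun _ => 0 := by
        simp only [DD]; rw [e, DD_zero]
      rw [this]; exact Bd.zero _
  have := Submodule.add_mem _ h1 (Submodule.mem_sup_right (S := SpS a p G) h2)
  simpa using this

theorem bootstrap (hw : Wt d w) (hd : 2 ≤ d) {N : ℕ} (r : ι → Z)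
    (hgen : AddSubgroup.closure (Set.range r) = ⊤)
    (β : ι → ι → (Fin N → ℝ) →L[ℝ] (Fin N → ℝ) →L[ℝ] ℝ) (hst : StabW r β)
    {G : Fin N → Z → (Fin N → ℝ)}
    (hG : ∀ k e z, Lw r β e (G k) z = if z = 0 then e k else 0)
    (hGd : ∀ k τ n, Dec (fun _ : Unit => w) n (d - 1) (fun _ => df τ (G k)))
    {u : Z → (Fin N → ℝ)} (hu : ∀ ρ, Summable fun z => ‖df (r ρ) u z‖ ^ 2)
    (n : ℕ) {Φ : ι → Fin N → (ι → Fin N → ℝ) → ℝ}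
    (hΦ : ∀ ρ k, ContDiff ℝ ((n + 2 : ℕ) : ℕ∞) (Φ ρ k)) (hΦ0 : ∀ ρ k, Φ ρ k 0 = 0)
    (hΦ1 : ∀ ρ k, fderiv ℝ (Φ ρ k) 0 = 0) {g : ι → Fin N → Z → ℝ}
    (hg : ∀ ρ k n, Dec (fun _ : Unit => w) n (2 * d) (fun _ => g ρ k))
    (hequ : ∀ e z, Lw r β e u z = ∑ ρ, ∑ k, e k *
      ((g ρ k (z - r ρ) - Φ ρ k (fun ρ' => df (r ρ') u (z - r ρ))) -
        (g ρ k z - Φ ρ k (fun ρ' => df (r ρ') u z))))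
    {a : κ → Z} (hpath : PathProp (Fin N → ℝ) w a) (hcutp : CutProp w) {p : ℕ} (hp : p + 1 ≤ d) :
    u ∈ SpS a p G ⊔ RemS w (d - 1 + p) (n + 2) := by
  set A : Z → (ι → Fin N → ℝ) := fun z ρ => df (r ρ) u z with hA
  set F : ι → Fin N → Z → ℝ := fun ρ k z => g ρ k z - Φ ρ k (A z) with hF
  have hequ' : ∀ e z, Lw r β e u z = ∑ ρ, ∑ k, e k * (F ρ k (z - r ρ) - F ρ k z) := hequ
  have hM2 : Summable fun z => ‖A z‖ ^ 2 := by
    refine Summable.of_nonneg_of_le (fun z => by positivity) (fun z => ?_)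
      (summable_sum (f := fun ρ z => ‖df (r ρ) u z‖ ^ 2) (s := Finset.univ) fun ρ _ => hu ρ)
    have h1 : ‖A z‖ ≤ Real.sqrt (∑ ρ, ‖df (r ρ) u z‖ ^ 2) := by
      refine (pi_norm_le_iff_of_nonneg (Real.sqrt_nonneg _)).2 fun ρ => ?_
      refine Real.le_sqrt_of_sq_le ?_
      exact Finset.single_le_sum (f := fun ρ => ‖df (r ρ) u z‖ ^ 2) (fun ρ _ => by positivity)
        (Finset.mem_univ ρ)
    calc ‖A z‖ ^ 2 ≤ _ := pow_le_pow_left₀ (norm_nonneg _) h1 2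
      _ = _ := Real.sq_sqrt (Finset.sum_nonneg fun _ _ => by positivity)
  -- basic decay
  have hbase : Dec (fun _ : Unit => w) 0 d (fun _ => A) := by
    have hB : ∀ z, ‖A z‖ ≤ 1 + ∑' z, ‖A z‖ ^ 2 := by
      intro z
      have := hM2.le_tsum z (fun _ _ => by positivity)
      nlinarith [sq_nonneg (‖A z‖ - 1), norm_nonneg (A z)]
    set f : Z → ℝ := fun m => (w m ^ (2 * d))⁻¹ + ‖A m‖ ^ 2 with hf
    have hf0 : ∀ m, 0 ≤ f m := fun m => by have := hw.pos m; positivity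
    have hfs : Summable f := (hw.summ' (by omega)).add hM2
    have hFb : ∀ ρ k, ∃ C, 0 ≤ C ∧ ∀ m, |F ρ k m| ≤ C * f m := by
      intro ρ k
      obtain ⟨C1, hC1, h1⟩ := (hg ρ k 0).bd
      obtain ⟨C2, hC2, h2⟩ := quad_bound ((hΦ ρ k).of_le (by exact_mod_cast (by omega : 2 ≤ n + 2)))
        (hΦ0 ρ k) (hΦ1 ρ k) (1 + ∑' z, ‖A z‖ ^ 2)
      refine ⟨C1 + C2, by positivity, fun m => ?_⟩
      have h3 := h1 () m
      have h4 := h2 _ (hB m)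
      have h5 : |F ρ k m| ≤ ‖g ρ k m‖ + ‖Φ ρ k (A m)‖ := by
        rw [← Real.norm_eq_abs]; exact norm_sub_le _ _
      have h6 : 0 ≤ (w m ^ (2 * d))⁻¹ := by have := hw.pos m; positivity
      have h7 : 0 ≤ ‖A m‖ ^ 2 := by positivity
      simp only [hf]
      nlinarith [mul_nonneg hC1 h7, mul_nonneg hC2 h6]
    choose C hC hFb using hFb
    have hFs : ∀ ρ k, Summable (F ρ k) := fun ρ k =>
      Summable.of_norm_bounded (hfs.mul_left (C ρ k)) (hFb ρ k)
    have hrep := repr_formula hw hd r hgen β hst hG hGd hu hFs hequ'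
    have hKb : ∀ ρ' ρ k, ∃ C, 0 ≤ C ∧ ∀ z, ‖df (r ρ') (df (-r ρ) (G k)) z‖ ≤ C * (w z ^ d)⁻¹ := by
      intro ρ' ρ k
      obtain ⟨C, hC, h⟩ := ((hGd k (-r ρ) 1).2 (r ρ')).bd
      refine ⟨C, hC, fun z => ?_⟩
      have := h () z
      rwa [show d - 1 + 1 = d by omega] at this
    choose C' hC' hKb using hKb
    set S : Z → ℝ := fun z => ∑' m, f m * (w (z - m) ^ d)⁻¹ with hS
    have hS0 : ∀ z, 0 ≤ S z := fun z => tsum_nonneg fun m => by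
      have := hw.pos (z - m); have := hf0 m; positivity
    have hCs : ∀ ρ', 0 ≤ ∑ ρ, ∑ k, C ρ k * C' ρ' ρ k := fun ρ' => Finset.sum_nonneg fun ρ _ =>
      Finset.sum_nonneg fun k _ => mul_nonneg (hC _ _) (hC' _ _ _)
    have hdu : ∀ ρ' z, ‖df (r ρ') u z‖ ≤ (∑ ρ, ∑ k, C ρ k * C' ρ' ρ k) * S z := by
      intro ρ' z
      rw [hrep (r ρ'), Finset.sum_mul]
      refine (norm_sum_le _ _).trans (Finset.sum_le_sum fun ρ _ => ?_)
      rw [Finset.sum_mul]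
      refine (norm_sum_le _ _).trans (Finset.sum_le_sum fun k _ => ?_)
      exact conv_le hw hfs hf0 (hC ρ k) (hC' ρ' ρ k) (hFb ρ k) (hKb ρ' ρ k) z
    obtain ⟨C'', hC'', h⟩ := basic_decay hw hd (M := fun z => ‖A z‖) (fun z => norm_nonneg _) hM2
      (C := ∑ ρ', ∑ ρ, ∑ k, C ρ k * C' ρ' ρ k) (Finset.sum_nonneg fun ρ' _ => hCs ρ') (by
        intro z
        change ‖A z‖ ≤ _ * S z
        refine (pi_norm_le_iff_of_nonneg
          (mul_nonneg (Finset.sum_nonneg fun ρ' _ => hCs ρ') (hS0 z))).2 fun ρ' => ?_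
        refine (hdu ρ' z).trans (mul_le_mul_of_nonneg_right ?_ (hS0 z))
        exact Finset.single_le_sum (f := fun ρ' => ∑ ρ, ∑ k, C ρ k * C' ρ' ρ k)
          (fun ρ' _ => hCs ρ') (Finset.mem_univ ρ'))
    exact ⟨C'', hC'', fun _ z => h z⟩
  have hFd : ∀ j, j ≤ n → Dec (fun _ : Unit => w) j d (fun _ => A) →
      ∀ ρ k, Dec (fun _ : Unit => w) j (2 * d) (fun _ => F ρ k) := by
    intro j hj hAj ρ k
    refine (hg ρ k j).sub (nonlin_dec hw.good j ((hΦ ρ k).of_le ?_) (hΦ0 ρ k) (hΦ1 ρ k)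
      (by omega) hAj)
    exact_mod_cast (by omega : j + 2 ≤ n + 2)
  have hind : ∀ j, j ≤ n → Dec (fun _ : Unit => w) j d (fun _ => A) := by
    intro j
    induction j with
    | zero => intro _; exact hbase
    | succ j ih =>
      intro hj
      have := rep_mem hw hd r hgen β hst hG hGd hu (hFd j (by omega) (ih (by omega))) hequ'
        hpath hcutp (p := 0) (by omega)
      have hbot : SpS a 0 G = ⊥ := by
        rw [SpS, Submodule.span_eq_bot]
        rintro f ⟨σ, k, h1, h2, _⟩
        omega
      rw [hbot, bot_sup_eq] at this
      refine Dec.pi hw.good fun ρ => Dec.of_DD fun l hl => ?_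
      have h3 := this (r ρ :: l) (by simp) (by simp; omega)
      simp only [DD, List.length_cons] at h3
      rwa [show d - 1 + 0 + (l.length + 1) = d + l.length by omega] at h3
  exact rep_mem hw hd r hgen β hst hG hGd hu (hFd n le_rfl (hind n le_rfl)) hequ' hpath hcutp hp

end Boot

section Weight

variable {d : ℕ} (A : Matrix (Fin d) (Fin d) ℝ)

lemma enorm_eq {n : ℕ} (v : Vec n) : Defect.enorm v = ‖WithLp.toLp 2 v‖ := by
  rw [EuclideanSpace.norm_eq]
  simp [Defect.enorm]

lemma enorm_nonneg {n : ℕ} (v : Vec n) : 0 ≤ Defect.enorm v := Real.sqrt_nonneg _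

lemma enorm_neg {n : ℕ} (v : Vec n) : Defect.enorm (-v) = Defect.enorm v := by
  simp [Defect.enorm]

lemma enorm_zero {n : ℕ} : Defect.enorm (0 : Vec n) = 0 := by simp [Defect.enorm]

lemma enorm_add_le {n : ℕ} (v u : Vec n) :
    Defect.enorm (v + u) ≤ Defect.enorm v + Defect.enorm u := by
  simp only [enorm_eq, WithLp.toLp_add]; exact norm_add_le _ _

lemma abs_le_enorm {n : ℕ} (v : Vec n) (i : Fin n) : |v i| ≤ Defect.enorm v := by
  refine Real.abs_le_sqrt ?_
  exact Finset.single_le_sum (f := fun i => v i ^ 2) (fun i _ => by positivity) (Finset.mem_univ i)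

lemma norm_le_enorm {n : ℕ} (v : Vec n) : ‖v‖ ≤ Defect.enorm v :=
  (pi_norm_le_iff_of_nonneg (enorm_nonneg v)).2 fun i => abs_le_enorm v i

lemma enorm_sq {n : ℕ} (v : Vec n) : Defect.enorm v ^ 2 = ∑ i, v i ^ 2 :=
  Real.sq_sqrt (Finset.sum_nonneg fun _ _ => by positivity)

lemma enorm_sq_le {n : ℕ} (v : Vec n) : Defect.enorm v ^ 2 ≤ n * ‖v‖ ^ 2 := by
  rw [enorm_sq]
  refine (Finset.sum_le_card_nsmul _ _ (‖v‖ ^ 2) fun i _ => ?_).trans (by simp)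
  rw [← sq_abs]
  exact pow_le_pow_left₀ (abs_nonneg _) (norm_le_pi_norm v i) 2

lemma pt_add (z y : Fin d → ℤ) : latticePt d A (z + y) = latticePt d A z + latticePt d A y := by
  funext i; simp [latticePt, mul_add, Finset.sum_add_distrib]

lemma pt_neg (z : Fin d → ℤ) : latticePt d A (-z) = -latticePt d A z := by
  funext i; simp [latticePt]

lemma pt_zero : latticePt d A 0 = 0 := by
  funext i; simp [latticePt]

lemma pt_sub (z y : Fin d → ℤ) : latticePt d A (z - y) = latticePt d A z - latticePt d A y := by
  rw [sub_eq_add_neg, pt_add, pt_neg, sub_eq_add_neg]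

/-- the lattice embedding as a homomorphism -/
def ptHom : (Fin d → ℤ) →+ Vec d where
  toFun := latticePt d A
  map_zero' := pt_zero A
  map_add' := pt_add A

variable {A}

lemma coord_le (hA : IsUnit A.det) : ∃ C : ℝ, 1 ≤ C ∧ ∀ (z : Fin d → ℤ) i,
    |(z i : ℝ)| ≤ C * Defect.enorm (latticePt d A z) := by
  refine ⟨1 + ∑ i, ∑ j, |A⁻¹ i j|, by
    have : 0 ≤ ∑ i, ∑ j, |A⁻¹ i j| := by positivity
    linarith, fun z i => ?_⟩
  have h1 : (fun i => (z i : ℝ)) = A⁻¹.mulVec (latticePt d A z) := by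
    have : latticePt d A z = A.mulVec (fun i => (z i : ℝ)) := rfl
    rw [this, Matrix.mulVec_mulVec, Matrix.nonsing_inv_mul _ hA, Matrix.one_mulVec]
  have h2 : (z i : ℝ) = ∑ j, A⁻¹ i j * latticePt d A z j := congrFun h1 i
  rw [h2]
  refine (Finset.abs_sum_le_sum_abs _ _).trans ?_
  calc ∑ j, |A⁻¹ i j * latticePt d A z j| ≤ ∑ j, |A⁻¹ i j| * Defect.enorm (latticePt d A z) := by
        refine Finset.sum_le_sum fun j _ => ?_
        rw [abs_mul]
        exact mul_le_mul_of_nonneg_left (abs_le_enorm _ _) (abs_nonneg _)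
    _ = (∑ j, |A⁻¹ i j|) * Defect.enorm (latticePt d A z) := by rw [Finset.sum_mul]
    _ ≤ _ := by
        refine mul_le_mul_of_nonneg_right ?_ (enorm_nonneg _)
        have := Finset.single_le_sum (f := fun i => ∑ j, |A⁻¹ i j|)
          (fun i _ => by positivity) (Finset.mem_univ i)
        linarith

lemma pt_inj (hA : IsUnit A.det) : Function.Injective (latticePt d A) := by
  intro z y h
  obtain ⟨C, hC, hc⟩ := coord_le hA
  funext i
  have h0 : latticePt d A (z - y) = 0 := by rw [pt_sub, h, sub_self]
  have := hc (z - y) i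
  rw [h0, enorm_zero, mul_zero] at this
  have h3 : ((z - y) i : ℝ) = 0 := abs_eq_zero.1 (le_antisymm this (abs_nonneg _))
  have h4 : (z - y) i = 0 := by exact_mod_cast h3
  exact sub_eq_zero.1 h4

lemma pt_eq_zero (hA : IsUnit A.det) (z : Fin d → ℤ) : latticePt d A z = 0 ↔ z = 0 := by
  rw [← pt_zero A]; exact (pt_inj hA).eq_iff

lemma finite_ball (hA : IsUnit A.det) (rad : ℝ) :
    {z : Fin d → ℤ | Defect.enorm (latticePt d A z) < rad}.Finite := by
  obtain ⟨C, hC, hc⟩ := coord_le hA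
  refine (Set.finite_Icc (fun _ : Fin d => -⌈C * rad⌉) (fun _ => ⌈C * rad⌉)).subset ?_
  intro z hz
  have hz' : Defect.enorm (latticePt d A z) < rad := hz
  have h1 : ∀ i, |(z i : ℝ)| ≤ ⌈C * rad⌉ := fun i => by
    refine (hc z i).trans (le_trans ?_ (Int.le_ceil _))
    exact mul_le_mul_of_nonneg_left hz'.le (by linarith)
  have h2 : ∀ i, |z i| ≤ ⌈C * rad⌉ := fun i => by exact_mod_cast h1 i
  exact ⟨fun i => (abs_le.1 (h2 i)).1, fun i => (abs_le.1 (h2 i)).2⟩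

lemma exists_rad {S : Set (Fin d → ℤ)} (hS : S.Finite) : ∃ rad : ℝ, ∀ z,
    rad ≤ Defect.enorm (latticePt d A z) → z ∉ S := by
  refine ⟨1 + ∑ z ∈ hS.toFinset, Defect.enorm (latticePt d A z), fun z hz hzS => ?_⟩
  have := Finset.single_le_sum (f := fun z => Defect.enorm (latticePt d A z))
    (fun z _ => enorm_nonneg _) (hS.mem_toFinset.2 hzS)
  linarith

lemma ang_wt (hd : 2 ≤ d) (hA : IsUnit A.det) : Wt d (fun z => ang (latticePt d A z)) := by
  refine ⟨fun z => ?_, fun z => ?_, fun z y => ?_, ?_⟩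
  · have := enorm_nonneg (latticePt d A z); simp only [ang]; linarith
  · simp only [ang, pt_neg, enorm_neg]
  · have := enorm_add_le (latticePt d A z) (latticePt d A y)
    simp only [ang, pt_add]; linarith
  · obtain ⟨C, hC, hc⟩ := coord_le hA
    let b := Pi.basisFun ℝ (Fin d)
    let L := Submodule.span ℤ (Set.range b)
    have hfin : Module.finrank ℤ L = d := by
      rw [ZLattice.rank ℝ L]; simp
    have hs := ZLattice.summable_norm_sub_inv_pow L (d + 1) (by omega) (fun _ => (1 / 2 : ℝ))
    have hmem : ∀ z : Fin d → ℤ, (fun i => (z i : ℝ)) ∈ L := by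
      intro z
      have : (fun i => (z i : ℝ)) = ∑ i, z i • b i := by
        funext j
        simp [b, Finset.sum_apply, Pi.single_apply]
      rw [this]
      exact Submodule.sum_mem _ fun i _ => Submodule.smul_mem _ _ (Submodule.subset_span ⟨i, rfl⟩)
    let e : (Fin d → ℤ) → L := fun z => ⟨_, hmem z⟩
    have he : Function.Injective e := by
      intro z y h
      have h1 := congrArg Subtype.val h
      funext i
      have h2 : (z i : ℝ) = (y i : ℝ) := congrFun h1 i
      exact_mod_cast h2
    have hs2 := (hs.comp_injective he).mul_left (C ^ (d + 1))
    refine Summable.of_nonneg_of_le (fun z => ?_) (fun z => ?_) hs2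
    · have := enorm_nonneg (latticePt d A z); simp only [ang]; positivity
    · have he0 := enorm_nonneg (latticePt d A z)
      have h3 : ‖(e z : Fin d → ℝ) - (fun _ => (1 / 2 : ℝ) : Fin d → ℝ)‖ ≤ C * ang (latticePt d A z) := by
        refine (pi_norm_le_iff_of_nonneg (by simp only [ang]; positivity)).2 fun i => ?_
        have h4 : ((e z : Fin d → ℝ) - (fun _ => (1 / 2 : ℝ) : Fin d → ℝ)) i = (z i : ℝ) - 1 / 2 := rfl
        rw [h4, Real.norm_eq_abs]
        have h5 := hc z i
        have h6 : |(z i : ℝ) - 1 / 2| ≤ |(z i : ℝ)| + |1 / 2| := abs_sub _ _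
        rw [abs_of_pos (by norm_num : (0:ℝ) < 1 / 2)] at h6
        simp only [ang]
        nlinarith
      have h7 : 0 < ‖(e z : Fin d → ℝ) - (fun _ => (1 / 2 : ℝ) : Fin d → ℝ)‖ := by
        rw [norm_pos_iff]
        intro h
        have h8 : (z ⟨0, by omega⟩ : ℝ) - 1 / 2 = 0 := congrFun h ⟨0, by omega⟩
        have h9 : (2 * z ⟨0, by omega⟩ : ℝ) = 1 := by linarith
        have h10 : 2 * z ⟨0, by omega⟩ = 1 := by exact_mod_cast h9
        omega
      change _ ≤ C ^ (d + 1) * ‖(e z : Fin d → ℝ) - (fun _ => (1 / 2 : ℝ) : Fin d → ℝ)‖⁻¹ ^ (d + 1)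
      rw [← mul_pow, ← inv_pow]
      refine pow_le_pow_left₀ (by simp only [ang]; positivity) ?_ _
      rw [inv_le_iff_one_le_mul₀ (by simp only [ang]; positivity), ← div_eq_mul_inv,
        div_mul_eq_mul_div, one_le_div h7]
      exact h3

end Weight

section Path

variable {Z κ E : Type*} [AddCommGroup Z] [NormedAddCommGroup E] [NormedSpace ℝ E]
  {d : ℕ} {w : Z → ℝ}

/-- Path along the generators, list version. -/
def PathL (E : Type*) [NormedAddCommGroup E] [NormedSpace ℝ E] (w : Z → ℝ) (a : κ → Z) (n : ℕ)
    (B : ℝ) (m : Z) : Prop :=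
  ∃ l : List (ℝ × κ × Z), l.length = n ∧ (∀ t ∈ l, |t.1| ≤ 1 ∧ w t.2.2 ≤ B) ∧
    ∀ (h : Z → E) (z : Z), h (z + m) - h z =
      (l.map fun t => t.1 • df (a t.2.1) h (z + t.2.2)).sum

lemma PathL.zero (a : κ → Z) (B : ℝ) : PathL E w a 0 B 0 :=
  ⟨[], rfl, by simp, fun h z => by simp⟩

lemma PathL.mono {a : κ → Z} {n : ℕ} {B B' : ℝ} {m : Z} (h : PathL E w a n B m) (hB : B ≤ B') :
    PathL E w a n B' m := by
  obtain ⟨l, h1, h2, h3⟩ := h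
  exact ⟨l, h1, fun t ht => ⟨(h2 t ht).1, (h2 t ht).2.trans hB⟩, h3⟩

lemma PathL.comp (hw : Wt d w) {a : κ → Z} {n n' : ℕ} {B B' : ℝ} {m m' : Z}
    (h : PathL E w a n B m) (h' : PathL E w a n' B' m') {B'' : ℝ} (hB : B ≤ B'')
    (hB' : B' + w m ≤ B'') : PathL E w a (n + n') B'' (m + m') := by
  obtain ⟨l, h1, h2, h3⟩ := h
  obtain ⟨l', h1', h2', h3'⟩ := h'
  refine ⟨l ++ l'.map (fun t => (t.1, t.2.1, m + t.2.2)), by simp [h1, h1'], ?_, fun f z => ?_⟩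
  · intro t ht
    rcases List.mem_append.1 ht with ht | ht
    · exact ⟨(h2 t ht).1, (h2 t ht).2.trans hB⟩
    · obtain ⟨t', ht', rfl⟩ := List.mem_map.1 ht
      refine ⟨(h2' t' ht').1, ?_⟩
      have := hw.add m t'.2.2
      have := (h2' t' ht').2
      simp only
      linarith
  · rw [List.map_append, List.sum_append, ← h3 f z, List.map_map]
    have := h3' f (z + m)
    have e : ((fun t : ℝ × κ × Z => t.1 • df (a t.2.1) f (z + t.2.2)) ∘
        fun t => (t.1, t.2.1, m + t.2.2)) =
        fun t : ℝ × κ × Z => t.1 • df (a t.2.1) f (z + m + t.2.2) := by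
      funext t; simp only [Function.comp, add_assoc]
    rw [e, ← this, add_assoc]; abel

lemma PathL.single (a : κ → Z) (i : κ) {B : ℝ} (h : w 0 ≤ B) : PathL E w a 1 B (a i) := by
  refine ⟨[(1, i, 0)], rfl, ?_, fun f z => by simp [df]⟩
  intro t ht
  rw [List.mem_singleton] at ht
  subst ht
  simpa using h

lemma PathL.single_neg (a : κ → Z) (i : κ) {B : ℝ} (h : w (-a i) ≤ B) :
    PathL E w a 1 B (-a i) := by
  refine ⟨[(-1, i, -a i)], rfl, ?_, fun f z => by simp [df]⟩
  intro t ht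
  rw [List.mem_singleton] at ht
  subst ht
  simpa using h

lemma Wt.w0 (hw : Wt d w) (y : Z) : w 0 ≤ 2 * w y := by
  have h := hw.add y (-y)
  rw [add_neg_cancel, hw.neg] at h
  linarith

lemma Wt.nsmul (hw : Wt d w) (y : Z) (k : ℕ) : w (k • y) ≤ (k + 2) * w y := by
  induction k with
  | zero => simpa using hw.w0 y
  | succ k ih =>
    have h := hw.add (k • y) y
    rw [succ_nsmul]; push_cast
    linarith

lemma Wt.zsmul (hw : Wt d w) (y : Z) (c : ℤ) : w (c • y) ≤ (c.natAbs + 2) * w y := by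
  rcases Int.natAbs_eq c with h | h
  · nth_rewrite 1 [h]; rw [natCast_zsmul]; exact hw.nsmul y _
  · nth_rewrite 1 [h]; rw [neg_smul, natCast_zsmul, hw.neg]; exact hw.nsmul y _

lemma PathL.nsmul (hw : Wt d w) (a : κ → Z) (i : κ) (k : ℕ) :
    PathL E w a k ((k + 3) * w (a i)) (k • a i) := by
  induction k with
  | zero => rw [zero_smul]; exact PathL.zero _ _
  | succ k ih =>
    rw [add_smul, one_smul]
    have h0 := hw.pos (a i)
    refine PathL.comp hw ih (PathL.single a i (hw.w0 (a i))) ?_ ?_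
    · push_cast; nlinarith
    · have := hw.nsmul (a i) k
      push_cast; nlinarith

lemma PathL.nsmul_neg (hw : Wt d w) (a : κ → Z) (i : κ) (k : ℕ) :
    PathL E w a k ((k + 3) * w (a i)) (-(k • a i)) := by
  induction k with
  | zero => rw [zero_smul, neg_zero]; exact PathL.zero _ _
  | succ k ih =>
    rw [add_smul, one_smul, neg_add]
    have h0 := hw.pos (a i)
    refine PathL.comp hw ih (PathL.single_neg a i (hw.neg (a i)).le) ?_ ?_
    · push_cast; nlinarith
    · have := hw.nsmul (a i) k
      rw [hw.neg]
      push_cast; nlinarith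

lemma PathL.zsmul (hw : Wt d w) (a : κ → Z) (i : κ) (c : ℤ) :
    PathL E w a c.natAbs ((c.natAbs + 3) * w (a i)) (c • a i) := by
  rcases Int.natAbs_eq c with h | h
  · have := PathL.nsmul (E := E) hw a i c.natAbs
    rwa [← natCast_zsmul, ← h] at this
  · have := PathL.nsmul_neg (E := E) hw a i c.natAbs
    rwa [← natCast_zsmul, ← neg_smul, ← h] at this

lemma PathL.sum (hw : Wt d w) (a : κ → Z) (c : κ → ℤ) (S : Finset κ) :
    PathL E w a (∑ i ∈ S, (c i).natAbs) (w 0 + ∑ i ∈ S, ((c i).natAbs + 3) * w (a i))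
      (∑ i ∈ S, c i • a i) ∧
    w (∑ i ∈ S, c i • a i) ≤ w 0 + ∑ i ∈ S, ((c i).natAbs + 3) * w (a i) := by
  classical
  induction S using Finset.induction_on with
  | empty => exact ⟨by simpa using PathL.zero _ _, by simp⟩
  | insert j S hj ih =>
    rw [Finset.sum_insert hj, Finset.sum_insert hj, Finset.sum_insert hj]
    have h1 := hw.zsmul (a j) (c j)
    have h2 := hw.add (c j • a j) (∑ i ∈ S, c i • a i)
    have h0 := hw.pos (a j)
    have hS : 0 ≤ w 0 + ∑ i ∈ S, ((c i).natAbs + 3) * w (a i) := (hw.pos _).le.trans ih.2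
    refine ⟨?_, ?_⟩
    · rw [add_comm (c j).natAbs, add_comm (c j • a j)]
      refine PathL.comp hw ih.1 (PathL.zsmul hw a j (c j)) ?_ ?_
      · have : 0 ≤ ((c j).natAbs + 3 : ℝ) * w (a j) := by positivity
        linarith
      · linarith [ih.2]
    · linarith [ih.2]

lemma pathProp_of_coord [Fintype κ] (hw : Wt d w) (a : κ → Z) {C : ℝ} (hC : 0 ≤ C)
    (h : ∀ m : Z, ∃ c : κ → ℤ, m = ∑ i, c i • a i ∧ ∀ i, ((c i).natAbs : ℝ) ≤ C * w m) :
    PathProp E w a := by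
  have hA : 0 ≤ ∑ i, (C + 3) * w (a i) := Finset.sum_nonneg fun i _ => by
    have := hw.pos (a i); positivity
  have hk : 0 ≤ (Fintype.card κ : ℝ) * C := by positivity
  refine ⟨1 + Fintype.card κ * C + 2 + ∑ i, (C + 3) * w (a i), by linarith, fun m => ?_⟩
  obtain ⟨c, hm, hc⟩ := h m
  have hwm := hw.one_le m
  have hwp := hw.pos m
  obtain ⟨l, h1, h2, h3⟩ := (PathL.sum (E := E) hw a c Finset.univ).1
  rw [← hm] at h3
  refine ⟨l.length, fun t => l[t].1, fun t => l[t].2.1, fun t => l[t].2.2, ?_, ?_, ?_, ?_⟩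
  · rw [h1]; push_cast
    calc ∑ i, ((c i).natAbs : ℝ) ≤ ∑ i : κ, C * w m := Finset.sum_le_sum fun i _ => hc i
      _ = Fintype.card κ * C * w m := by simp [mul_assoc]
      _ ≤ _ := by
        refine mul_le_mul_of_nonneg_right ?_ hwp.le
        linarith
  · intro t; exact (h2 _ (List.getElem_mem _)).1
  · intro t
    refine (h2 _ (List.getElem_mem _)).2.trans ?_
    have h5 : ∑ i, ((c i).natAbs + 3 : ℝ) * w (a i) ≤ (∑ i, (C + 3) * w (a i)) * w m := by
      rw [Finset.sum_mul]
      refine Finset.sum_le_sum fun i _ => ?_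
      have h6 := hc i
      have h7 := hw.pos (a i)
      have h8 : ((c i).natAbs + 3 : ℝ) ≤ (C + 3) * w m := by nlinarith
      calc _ ≤ (C + 3) * w m * w (a i) := mul_le_mul_of_nonneg_right h8 h7.le
        _ = _ := by ring
    have h9 := hw.w0 m
    nlinarith
  · intro f z
    rw [h3 f z]
    exact (Fin.sum_univ_fun_getElem l (fun t => t.1 • df (a t.2.1) f (z + t.2.2))).symm

end Path

section PathConc

variable {d : ℕ} {A : Matrix (Fin d) (Fin d) ℝ}

lemma exists_coord (hd : 2 ≤ d) (hA : IsUnit A.det) (s : Fin d → Vec d)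
    (hslat : ∀ i, s i ∈ Lattice d A) (hsind : LinearIndependent ℝ s)
    (hsspan : ∀ x ∈ Lattice d A, ∃ z : Fin d → ℤ, x = ∑ i, (z i : ℝ) • s i) (E : Type*)
    [NormedAddCommGroup E] [NormedSpace ℝ E] :
    ∃ a : Fin d → (Fin d → ℤ), (∀ i, latticePt d A (a i) = s i) ∧
      PathProp E (fun z => ang (latticePt d A z)) a := by
  choose a ha using hslat
  refine ⟨a, ha, ?_⟩
  haveI : Nonempty (Fin d) := ⟨⟨0, by omega⟩⟩
  let b := basisOfLinearIndependentOfCardEqFinrank hsind (by simp)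
  have hb : ∀ i, b i = s i := fun i => by simp [b]
  have hco : ∀ (c : Fin d → ℤ) i, b.coord i (∑ i, (c i : ℝ) • s i) = c i := by
    intro c i
    simp only [← hb]
    rw [Module.Basis.coord_apply, Module.Basis.repr_sum_self]
  let C : ℝ := ∑ i, ‖(b.coord i).toContinuousLinearMap‖
  have hC : 0 ≤ C := Finset.sum_nonneg fun i _ => norm_nonneg _
  refine pathProp_of_coord (ang_wt hd hA) a hC fun m => ?_
  obtain ⟨c, hc⟩ := hsspan _ ⟨m, rfl⟩
  refine ⟨c, ?_, fun i => ?_⟩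
  · refine pt_inj hA ?_
    have : latticePt d A (∑ i, c i • a i) = ptHom A (∑ i, c i • a i) := rfl
    rw [this, map_sum, hc]
    refine Finset.sum_congr rfl fun i _ => ?_
    rw [map_zsmul]
    change _ = c i • latticePt d A (a i)
    rw [ha, Int.cast_smul_eq_zsmul]
  · have h1 := (b.coord i).toContinuousLinearMap.le_opNorm (latticePt d A m)
    have h2 : (b.coord i).toContinuousLinearMap (latticePt d A m) = c i := by
      rw [hc]; exact hco c i
    rw [h2, Real.norm_eq_abs] at h1
    have h3 : ((c i).natAbs : ℝ) = |(c i : ℝ)| := by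
      rw [Nat.cast_natAbs]; push_cast; rfl
    rw [h3]
    refine h1.trans (mul_le_mul ?_ ?_ (norm_nonneg _) hC)
    · exact Finset.single_le_sum (f := fun i => ‖(b.coord i).toContinuousLinearMap‖)
        (fun i _ => norm_nonneg _) (Finset.mem_univ i)
    · refine (norm_le_enorm _).trans ?_
      simp only [ang]; linarith

end PathConc

section Cut

lemma hasFDerivAt_DD {X F : Type} [NormedAddCommGroup X] [NormedSpace ℝ X]
    [NormedAddCommGroup F] [NormedSpace ℝ F] (l : List X) : ∀ {f : X → F} {f' : X → X →L[ℝ] F},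
    (∀ x, HasFDerivAt f (f' x) x) → ∀ x, HasFDerivAt (DD l f) (DD l f' x) x := by
  induction l with
  | nil => intro f f' h x; exact h x
  | cons v l ih =>
    intro f f' h x
    refine ih (f := df v f) (f' := df v f') (fun y => ?_) x
    exact ((hasFDerivAt_comp_add_right v).2 (h (y + v))).sub (h y)

lemma DD_mvt {X : Type} [NormedAddCommGroup X] [NormedSpace ℝ X] (l : List X) :
    ∀ {F : Type} [NormedAddCommGroup F] [NormedSpace ℝ F] {f : X → F} {C : ℝ},
    ContDiff ℝ (l.length : ℕ∞) f → (∀ x, ‖iteratedFDeriv ℝ l.length f x‖ ≤ C) →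
    ∀ x, ‖DD l f x‖ ≤ C * (l.map norm).prod := by
  induction l with
  | nil => intro F _ _ f C hf hC x; simpa [DD] using hC x
  | cons v l ih =>
    intro F _ _ f C hf hC x
    have hf1 : ContDiff ℝ (l.length : ℕ∞) (fderiv ℝ f) := by
      refine hf.fderiv_right ?_
      simp
    have hd : ∀ x, HasFDerivAt f (fderiv ℝ f x) x := fun x =>
      (hf.differentiable (by simp) x).hasFDerivAt
    have h1 := ih hf1 (C := C) (fun x => by
      rw [norm_iteratedFDeriv_fderiv]; exact hC x)
    have h2 := hasFDerivAt_DD l hd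
    have e : DD (v :: l) f x = DD l f (x + v) - DD l f x := by
      have : DD (v :: l) f = df v (DD l f) := by simp only [DD]; rw [DD_df]
      rw [this]; rfl
    rw [e]
    have h3 := convex_univ.norm_image_sub_le_of_norm_hasFDerivWithin_le (f := DD l f)
      (f' := DD l (fderiv ℝ f)) (C := C * (l.map norm).prod) (x := x) (y := x + v)
      (fun x _ => (h2 x).hasFDerivWithinAt) (fun x _ => h1 x) (Set.mem_univ _) (Set.mem_univ _)
    rw [add_sub_cancel_left] at h3
    simp only [List.map_cons, List.prod_cons]
    calc _ ≤ _ := h3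
      _ = _ := by ring

lemma DD_affine {Z X F : Type*} [AddCommGroup Z] [AddCommGroup X] [AddCommGroup F] (T : Z →+ X)
    (x0 : X) (l : List Z) : ∀ (f : X → F) (m : Z),
    DD l (fun m => f (T m + x0)) m = DD (l.map T) f (T m + x0) := by
  induction l with
  | nil => intro f m; rfl
  | cons a l ih =>
    intro f m
    simp only [List.map_cons, DD]
    rw [← ih]
    congr 1
    funext y
    simp only [df, map_add, add_right_comm]

variable {d : ℕ} {A : Matrix (Fin d) (Fin d) ℝ}

lemma cutProp (hd : 2 ≤ d) (hA : IsUnit A.det) : CutProp (fun z => ang (latticePt d A z)) := by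
  classical
  have hw := ang_wt hd hA
  set w : (Fin d → ℤ) → ℝ := fun z => ang (latticePt d A z) with hwdef
  let X := EuclideanSpace ℝ (Fin d)
  let P : (Fin d → ℤ) →+ X :=
    { toFun := fun z => WithLp.toLp 2 (latticePt d A z)
      map_zero' := by rw [pt_zero]; rfl
      map_add' := fun z y => by rw [pt_add]; rfl }
  have hP : ∀ z, w z = ‖P z‖ + 2 := fun z => by
    change ang (latticePt d A z) = _
    rw [ang, enorm_eq]; rfl
  let θ : ContDiffBump (0 : X) := ⟨1 / 16, 1 / 4, by norm_num, by norm_num⟩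
  have hθb : ∀ n : ℕ, ∃ C, 0 ≤ C ∧ ∀ x, ‖iteratedFDeriv ℝ n θ x‖ ≤ C := by
    intro n
    obtain ⟨C, hC⟩ := (θ.hasCompactSupport.iteratedFDeriv (𝕜 := ℝ) n).exists_bound_of_continuous
      ((θ.contDiff (n := n)).continuous_iteratedFDeriv le_rfl)
    exact ⟨C, (norm_nonneg _).trans (hC 0), hC⟩
  let T : (Fin d → ℤ) → (Fin d → ℤ) →+ X := fun z =>
    { toFun := fun m => (w z)⁻¹ • P m
      map_zero' := by simp
      map_add' := fun m y => by simp }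
  let χ : (Fin d → ℤ) → (Fin d → ℤ) → ℝ := fun z m =>
    if w z < 16 then 0 else θ (T z m + -T z z)
  have hnorm : ∀ z m, ‖T z m + -T z z‖ = (w z)⁻¹ * ‖P (z - m)‖ := by
    intro z m
    have : T z m + -T z z = (w z)⁻¹ • (P m - P z) := by
      change (w z)⁻¹ • P m + -((w z)⁻¹ • P z) = _
      rw [smul_sub, sub_eq_add_neg]
    rw [this, norm_smul, Real.norm_of_nonneg (inv_nonneg.2 (hw.pos z).le), map_sub, norm_sub_rev]
  refine ⟨χ, fun n => Dec.of_DD fun l hl => ?_, fun z m h => ?_, 1 / 16, by norm_num,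
    fun z m h => ?_⟩
  · obtain ⟨C, hC, hb⟩ := hθb l.length
    have hpr : 0 ≤ (l.map fun τ => ‖P τ‖).prod := by
      refine List.prod_nonneg fun x hx => ?_
      obtain ⟨τ, _, rfl⟩ := List.mem_map.1 hx
      exact norm_nonneg _
    refine ⟨C * (l.map fun τ => ‖P τ‖).prod, by positivity, fun z m => ?_⟩
    have hmin : 0 < min (w m) (w z) := lt_min (hw.pos m) (hw.pos z)
    change ‖DD l (χ z) m‖ ≤ C * (l.map fun τ => ‖P τ‖).prod *
      (min (w m) (w z) ^ (0 + l.length))⁻¹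
    by_cases hz : w z < 16
    · have : χ z = fun _ => 0 := by funext m; simp only [χ, if_pos hz]
      rw [this, DD_zero, norm_zero]
      positivity
    · have : χ z = fun m => θ (T z m + -T z z) := by funext m; simp only [χ, if_neg hz]
      rw [this, DD_affine]
      have h1 := DD_mvt (l.map (T z)) (f := θ) (C := C) θ.contDiff
        (by rw [List.length_map]; exact hb) (T z m + -T z z)
      refine h1.trans ?_
      have h2 : ((l.map (T z)).map norm).prod = ((w z) ^ l.length)⁻¹ *
          (l.map fun τ => ‖P τ‖).prod := by
        clear h1 hpr hb hl
        induction l with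
        | nil => simp
        | cons a l ih =>
          simp only [List.map_cons, List.prod_cons, List.length_cons]
          rw [ih]
          have : ‖T z a‖ = (w z)⁻¹ * ‖P a‖ := by
            change ‖(w z)⁻¹ • P a‖ = _
            rw [norm_smul, Real.norm_of_nonneg (inv_nonneg.2 (hw.pos z).le)]
          rw [this, pow_succ, mul_inv]; ring
      rw [h2, zero_add]
      have h3 : (w z ^ l.length)⁻¹ ≤ (min (w m) (w z) ^ l.length)⁻¹ :=
        inv_anti₀ (by positivity) (pow_le_pow_left₀ hmin.le (min_le_right _ _) _)
      calc _ = C * (l.map fun τ => ‖P τ‖).prod * (w z ^ l.length)⁻¹ := by ring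
        _ ≤ _ := mul_le_mul_of_nonneg_left h3 (by positivity)
  · by_cases hz : w z < 16
    · exact absurd (by simp only [χ, if_pos hz]) h
    · simp only [χ, if_neg hz] at h
      have h1 : T z m + -T z z ∈ Function.support θ := h
      rw [θ.support_eq, Metric.mem_ball, dist_zero_right, hnorm] at h1
      have h2 : (w z)⁻¹ * ‖P (z - m)‖ < 1 / 4 := h1
      rw [inv_mul_lt_iff₀ (hw.pos z)] at h2
      change w (z - m) ≤ w z / 2
      rw [hP]; push Not at hz; linarith
  · have h' : w (z - m) < 1 / 16 * w z := h
    have h2 := hP (z - m)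
    have h3 := norm_nonneg (P (z - m))
    have hz : ¬ w z < 16 := by intro hz; linarith
    simp only [χ, if_neg hz]
    refine θ.one_of_mem_closedBall ?_
    rw [Metric.mem_closedBall, dist_zero_right, hnorm]
    change _ ≤ (1 / 16 : ℝ)
    rw [inv_mul_le_iff₀ (hw.pos z)]
    linarith

end Cut

section Link

lemma sum_powerset_DD {κ Y M : Type*} [DecidableEq κ] [AddCommGroup Y] [AddCommGroup M]
    [Module ℝ M] (ζ : κ → Y) (l : List κ) : l.Nodup → ∀ (f : Y → M) (z : Y),
    ∑ S ∈ l.toFinset.powerset, ((-1 : ℝ) ^ (l.length - S.card)) • f (z + ∑ i ∈ S, ζ i) =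
      DD (l.map ζ) f z := by
  induction l with
  | nil => intro _ f z; simp [DD]
  | cons a l ih =>
    intro hn f z
    rw [List.nodup_cons] at hn
    have ha : a ∉ l.toFinset := by simpa using hn.1
    simp only [List.toFinset_cons, List.map_cons, DD, List.length_cons]
    rw [Finset.sum_powerset_insert ha, ← ih hn.2, ← Finset.sum_add_distrib]
    refine Finset.sum_congr rfl fun S hS => ?_
    rw [Finset.mem_powerset] at hS
    have haS : a ∉ S := fun h => ha (hS h)
    have hc : S.card ≤ l.length := (Finset.card_le_card hS).trans (List.toFinset_card_le l)
    rw [Finset.card_insert_of_notMem haS, Finset.sum_insert haS,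
      show l.length + 1 - (S.card + 1) = l.length - S.card by omega,
      show l.length + 1 - S.card = (l.length - S.card) + 1 by omega, pow_succ]
    simp only [df]
    rw [show z + (ζ a + ∑ i ∈ S, ζ i) = z + ∑ i ∈ S, ζ i + ζ a by abel, smul_sub]
    simp only [mul_neg, mul_one, neg_smul]
    abel

variable {d : ℕ} {A : Matrix (Fin d) (Fin d) ℝ}

lemma Dmulti_eq {M : Type} [AddCommGroup M] [Module ℝ M] {j : ℕ} (ζ : Fin j → (Fin d → ℤ))
    {ρs : Fin j → Vec d} (hζ : ∀ i, latticePt d A (ζ i) = ρs i) (u : Vec d → M) (z : Fin d → ℤ) :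
    Dmulti ρs u (latticePt d A z) = DD (List.ofFn ζ) (fun z => u (latticePt d A z)) z := by
  have h := sum_powerset_DD ζ (List.finRange j) (List.nodup_finRange j)
    (fun z => u (latticePt d A z)) z
  rw [← List.ofFn_eq_map, List.length_finRange] at h
  rw [← h, List.toFinset_finRange, Finset.powerset_univ, Dmulti]
  refine Finset.sum_congr rfl fun S _ => ?_
  have : latticePt d A (z + ∑ i ∈ S, ζ i) = latticePt d A z + ∑ i ∈ S, ρs i := by
    rw [pt_add]
    congr 1
    change ptHom A _ = _
    rw [map_sum]
    exact Finset.sum_congr rfl fun i _ => hζ i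
  rw [this]

lemma gen_list {Z ι E : Type*} [AddCommGroup Z] [NormedAddCommGroup E] [NormedSpace ℝ E]
    [Fintype ι] {w : Z → ℝ}
    (hw : GoodW (fun _ : Unit => w)) (r : ι → Z) (hgen : AddSubgroup.closure (Set.range r) = ⊤)
    {f : Z → E} {s : ℕ} (h : ∀ l : List ι, l ≠ [] →
      Bd (fun _ : Unit => w) (s + l.length) (fun _ => DD (l.map r) f)) (l : List Z) :
    ∀ l' : List ι, (l ≠ [] ∨ l' ≠ []) →
      Bd (fun _ : Unit => w) (s + (l.length + l'.length)) (fun _ => DD (l ++ l'.map r) f) := by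
  induction l with
  | nil => intro l' hl'; simpa using h l' (by simpa using hl')
  | cons τ l ih =>
    intro l' hne
    clear hne
    have hcons : ∀ τ, DD (τ :: l ++ l'.map r) f = df τ (DD (l ++ l'.map r) f) := by
      intro τ
      rw [List.cons_append]; simp only [DD]; rw [DD_df]
    rw [hcons, List.length_cons]
    induction τ using gen_ind r hgen with
    | h0 => rw [df_dir_zero]; exact Bd.zero _
    | hr ρ =>
      have h1 := ih (ρ :: l') (Or.inr (by simp))
      rw [← hcons]
      have h2 : DD (r ρ :: l ++ l'.map r) f = DD (l ++ (ρ :: l').map r) f := by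
        rw [List.map_cons]
        exact DD_perm (List.perm_middle.symm) f
      rw [h2]
      rwa [show l.length + 1 + l'.length = l.length + (ρ :: l').length by
        rw [List.length_cons]; omega]
    | hadd a b ha hb =>
      rw [df_dir_add]
      exact (ha.shift hw b).add hb
    | hneg a ha =>
      rw [df_dir_neg]
      exact (ha.shift hw (-a)).neg

lemma enorm_le {n : ℕ} (v : Vec n) : Defect.enorm v ≤ n * ‖v‖ := by
  refine Real.sqrt_le_iff.2 ⟨by positivity, ?_⟩
  rw [← enorm_sq]
  refine (enorm_sq_le v).trans ?_
  rw [mul_pow]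
  refine mul_le_mul_of_nonneg_right ?_ (by positivity)
  exact_mod_cast Nat.le_self_pow (by norm_num) n

lemma sqrt_sum_sq_le {α : Type*} [Fintype α] {x : α → ℝ} (hx : ∀ i, 0 ≤ x i) :
    Real.sqrt (∑ i, x i ^ 2) ≤ ∑ i, x i := by
  refine Real.sqrt_le_iff.2 ⟨Finset.sum_nonneg fun i _ => hx i, ?_⟩
  exact Finset.sum_sq_le_sq_sum_of_nonneg fun i _ => hx i

lemma le_sqrt_sum_sq {α : Type*} [Fintype α] {x : α → ℝ} (i : α) :
    x i ≤ Real.sqrt (∑ i, x i ^ 2) := by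
  refine Real.le_sqrt_of_sq_le ?_
  exact Finset.single_le_sum (f := fun i => x i ^ 2) (fun i _ => by positivity) (Finset.mem_univ i)

lemma rpow_conv {x e : ℝ} (hx : 0 < x) {n : ℕ} (he : e = -(n : ℝ)) : x ^ e = (x ^ n)⁻¹ := by
  rw [he, Real.rpow_neg hx.le, Real.rpow_natCast]

lemma ang_pos {n : ℕ} (v : Vec n) : 0 < ang v := by
  have := enorm_nonneg v; simp only [ang]; linarith

variable {R : Finset (Vec d)} {r : {x // x ∈ R} → (Fin d → ℤ)}

lemma green_dec (hd : 2 ≤ d) (hA : IsUnit A.det) (hr : ∀ ρ, latticePt d A (r ρ) = ρ)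
    (hgen : AddSubgroup.closure (Set.range r) = ⊤) {N : ℕ} {G : Vec d → Fin N → Fin N → ℝ}
    (hG : ∀ j : ℕ, 1 ≤ j → ∃ cj : ℝ, ∀ z : Fin d → ℤ,
      DnormJmat R j G (latticePt d A z) ≤ cj * ang (latticePt d A z) ^ ((2 : ℝ) - d - j))
    (k : Fin N) (τ : Fin d → ℤ) (n : ℕ) :
    Dec (fun _ : Unit => fun z => ang (latticePt d A z)) n (d - 1)
      (fun _ => df τ (fun z => col G k (latticePt d A z))) := by
  have hw := ang_wt hd hA
  refine Dec.of_DD fun l _ => ?_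
  have := gen_list hw.good r hgen (f := fun z => col G k (latticePt d A z)) (s := d - 2)
    (fun l hl => ?_) (τ :: l) [] (by simp)
  · simp only [List.map_nil, List.append_nil, List.length_cons, List.length_nil, DD] at this
    rwa [show d - 2 + (l.length + 1 + 0) = d - 1 + l.length by omega] at this
  · obtain ⟨c, hc⟩ := hG l.length (List.length_pos_iff.2 hl)
    have hlen := List.length_pos_iff.2 hl
    refine ⟨|c|, abs_nonneg _, fun _ z => ?_⟩
    have h1 := hc z
    rw [rpow_conv (ang_pos _) (n := d - 2 + l.length) (by
      rw [Nat.cast_add, Nat.cast_sub hd]; push_cast; ring)] at h1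
    have hp := ang_pos (latticePt d A z)
    refine le_trans ?_ (h1.trans (mul_le_mul_of_nonneg_right (le_abs_self c) (by positivity)))
    have h2 : l.map r = List.ofFn (fun i => r (l.get i)) := by
      refine List.ext_getElem (by simp) (by intros; simp)
    change ‖DD (l.map r) (fun z => col G k (latticePt d A z)) z‖ ≤ _
    rw [h2, ← Dmulti_eq (A := A) (fun i => r (l.get i)) (fun i => hr (l.get i)) (col G k) z]
    refine (norm_le_enorm _).trans ?_
    refine le_trans ?_ (le_sqrt_sum_sq (x := fun k => DnormJ R l.length (col G k) _) k)
    exact le_sqrt_sum_sq (x := fun ρs : Fin l.length → {x // x ∈ R} =>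
      Defect.enorm (Dmulti (fun i => (ρs i : Vec d)) (col G k) (latticePt d A z))) l.get

lemma dnorm_bound (hr : ∀ ρ, latticePt d A (r ρ) = ρ) {N : ℕ} {u : Vec d → Vec N} {s j : ℕ}
    (h : ∀ l : List (Fin d → ℤ), l.length = j →
      Bd (fun _ : Unit => fun z => ang (latticePt d A z)) (s + j)
        (fun _ => DD l (fun z => u (latticePt d A z)))) {e : ℝ} (he : e = -((s + j : ℕ) : ℝ)) :
    ∃ Cj : ℝ, ∀ z : Fin d → ℤ,
      DnormJ R j u (latticePt d A z) ≤ Cj * ang (latticePt d A z) ^ e := by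
  have h' := fun ρs : Fin j → {x // x ∈ R} => h (List.ofFn fun i => r (ρs i)) (by simp)
  choose C hC hb using h'
  refine ⟨∑ ρs, N * C ρs, fun z => ?_⟩
  rw [rpow_conv (ang_pos _) he, Finset.sum_mul]
  refine (sqrt_sum_sq_le fun _ => enorm_nonneg _).trans (Finset.sum_le_sum fun ρs _ => ?_)
  refine (enorm_le _).trans ?_
  rw [mul_assoc]
  refine mul_le_mul_of_nonneg_left ?_ (by positivity)
  rw [Dmulti_eq (A := A) (fun i => r (ρs i)) (fun i => hr (ρs i)) u z]
  exact hb ρs () z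

lemma hgen_of (hA : IsUnit A.det) (hr : ∀ ρ, latticePt d A (r ρ) = ρ)
    (hRspan : ∀ x ∈ Lattice d A, ∃ c : Vec d → ℤ, x = ∑ ρ ∈ R, (c ρ : ℝ) • ρ) :
    AddSubgroup.closure (Set.range r) = ⊤ := by
  rw [eq_top_iff]
  intro z _
  obtain ⟨c, hc⟩ := hRspan _ ⟨z, rfl⟩
  have : z = ∑ ρ : {x // x ∈ R}, c ρ • r ρ := by
    refine pt_inj hA ?_
    rw [hc]
    change _ = ptHom A _
    rw [map_sum, ← Finset.sum_coe_sort R (fun ρ => (c ρ : ℝ) • ρ)]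
    refine Finset.sum_congr rfl fun ρ _ => ?_
    rw [map_zsmul]
    change _ = c ρ • latticePt d A (r ρ)
    rw [hr, Int.cast_smul_eq_zsmul]
  rw [this]
  exact sum_mem fun ρ _ => zsmul_mem (AddSubgroup.subset_closure (Set.mem_range_self ρ)) _

end Link

section Setup

/-- The bilinear form of a matrix. -/
def bil {N : ℕ} (M : Fin N → Fin N → ℝ) : (Fin N → ℝ) →L[ℝ] (Fin N → ℝ) →L[ℝ] ℝ :=
  ∑ i, ∑ j, M i j • (ContinuousLinearMap.proj (R := ℝ) (φ := fun _ : Fin N => ℝ) i).smulRight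
    (ContinuousLinearMap.proj (R := ℝ) (φ := fun _ : Fin N => ℝ) j)

lemma bil_apply {N : ℕ} (M : Fin N → Fin N → ℝ) (x y : Fin N → ℝ) :
    bil M x y = ∑ i, ∑ j, M i j * (x i * y j) := by
  simp [bil]

lemma bil_eq {N : ℕ} (M : Fin N → Fin N → ℝ) (x y : Fin N → ℝ) :
    bil M x y = dotV x (mulV M y) := by
  rw [bil_apply, dotV]
  refine Finset.sum_congr rfl fun i _ => ?_
  rw [mulV, Finset.mul_sum]
  exact Finset.sum_congr rfl fun j _ => by ring

variable {d : ℕ} {A : Matrix (Fin d) (Fin d) ℝ}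
variable {R : Finset (Vec d)} {r : {x // x ∈ R} → (Fin d → ℤ)}

lemma D1_eq {N : ℕ} (hr : ∀ ρ, latticePt d A (r ρ) = ρ) (u : Vec d → Vec N) (ρ : {x // x ∈ R})
    (z : Fin d → ℤ) :
    D1 (ρ : Vec d) u (latticePt d A z) = df (r ρ) (fun z => u (latticePt d A z)) z := by
  simp only [D1, df, pt_add, hr]

lemma inHc_of {N : ℕ} (hA : IsUnit A.det) (hr : ∀ ρ, latticePt d A (r ρ) = ρ) {v : Vec d → Vec N}
    (hv : (Function.support fun z => v (latticePt d A z)).Finite) : InHc A R v := by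
  have hf : (⋃ ρ, Function.support (df (r ρ) fun z => v (latticePt d A z))).Finite :=
    Set.finite_iUnion fun ρ => df_supp_finite hv (r ρ)
  obtain ⟨rad, hrad⟩ := exists_rad (A := A) hf
  refine ⟨rad, fun z hz ρ hρ => ?_⟩
  have := hrad z hz
  rw [show ρ = ((⟨ρ, hρ⟩ : {x // x ∈ R}) : Vec d) from rfl, D1_eq hr]
  by_contra hne
  exact this (Set.mem_iUnion.2 ⟨⟨ρ, hρ⟩, hne⟩)

lemma stabW_of (hA : IsUnit A.det) (hr : ∀ ρ, latticePt d A (r ρ) = ρ) {N : ℕ}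
    {C : Vec d → Vec d → Fin N → Fin N → ℝ} (hst : IsStable d N A R C) :
    StabW r (fun σ ρ : {x // x ∈ R} => bil (C σ ρ)) := by
  obtain ⟨c, hc, h⟩ := hst
  refine ⟨c, hc, fun u hu => ?_⟩
  set U : Vec d → Vec N := Function.extend (latticePt d A) u 0 with hU
  have hUz : (fun z => U (latticePt d A z)) = u := by
    funext z
    exact (pt_inj hA).extend_apply u 0 z
  have h1 := h U (inHc_of (r := r) hA hr (by rw [hUz]; exact hu))
  have e2 : ∀ z, ∑ σ ∈ R, ∑ ρ ∈ R,
        dotV (D1 σ U (latticePt d A z)) (mulV (C σ ρ) (D1 ρ U (latticePt d A z))) =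
      ∑ σ : {x // x ∈ R}, ∑ ρ : {x // x ∈ R}, bil (C σ ρ) (df (r σ) u z) (df (r ρ) u z) := by
    intro z
    rw [← Finset.sum_coe_sort]
    refine Finset.sum_congr rfl fun σ _ => ?_
    rw [← Finset.sum_coe_sort]
    refine Finset.sum_congr rfl fun ρ _ => ?_
    rw [bil_eq, D1_eq hr, D1_eq hr, hUz]
  have e1 : ∀ z, Dnorm1Sq R U (latticePt d A z) =
      ∑ ρ : {x // x ∈ R}, Defect.enorm (df (r ρ) u z) ^ 2 := by
    intro z
    rw [Dnorm1Sq, ← Finset.sum_coe_sort]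
    refine Finset.sum_congr rfl fun ρ _ => ?_
    rw [D1_eq hr, hUz]
  simp only [e1, e2] at h1
  refine le_trans ?_ h1
  refine mul_le_mul_of_nonneg_left ?_ hc.le
  have hf : (⋃ ρ, Function.support (df (r ρ) u)).Finite :=
    Set.finite_iUnion fun ρ => df_supp_finite hu (r ρ)
  refine Summable.tsum_le_tsum (fun z => Finset.sum_le_sum fun ρ _ => ?_) ?_ ?_
  · exact pow_le_pow_left₀ (norm_nonneg _) (norm_le_enorm _) 2
  · refine summable_of_hasFiniteSupport (hf.subset ?_)
    intro z hz
    by_contra hn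
    refine hz (Finset.sum_eq_zero fun ρ _ => ?_)
    have : df (r ρ) u z = 0 := by
      by_contra h'
      exact hn (Set.mem_iUnion.2 ⟨ρ, h'⟩)
    simp [this]
  · refine summable_of_hasFiniteSupport (hf.subset ?_)
    intro z hz
    by_contra hn
    refine hz (Finset.sum_eq_zero fun ρ _ => ?_)
    have : df (r ρ) u z = 0 := by
      by_contra h'
      exact hn (Set.mem_iUnion.2 ⟨ρ, h'⟩)
    simp [this, Defect.enorm]

lemma dotV_add {n : ℕ} (e x y : Vec n) : dotV e (x + y) = dotV e x + dotV e y := by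
  simp [dotV, mul_add, Finset.sum_add_distrib]

lemma dotV_sub {n : ℕ} (e x y : Vec n) : dotV e (x - y) = dotV e x - dotV e y := by
  simp [dotV, mul_sub, Finset.sum_sub_distrib]

lemma dotV_sum {n : ℕ} {α : Type*} (t : Finset α) (e : Vec n) (f : α → Vec n) :
    dotV e (∑ i ∈ t, f i) = ∑ i ∈ t, dotV e (f i) := by
  simp only [dotV, Finset.sum_apply, Finset.mul_sum]
  rw [Finset.sum_comm]

lemma dotV_comm {n : ℕ} (x y : Vec n) : dotV x y = dotV y x := by
  simp [dotV, mul_comm]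

lemma Lw_eq (hr : ∀ ρ, latticePt d A (r ρ) = ρ) {N : ℕ}
    (C : Vec d → Vec d → Fin N → Fin N → ℝ) (u : Vec d → Vec N) (e : Vec N) (z : Fin d → ℤ) :
    Lw r (fun σ ρ : {x // x ∈ R} => bil (C σ ρ)) e (fun z => u (latticePt d A z)) z =
      dotV e (Hop d N R C u (latticePt d A z)) := by
  rw [Hop, dotV_sum, Lw]
  refine Eq.trans ?_ (Finset.sum_coe_sort R _)
  refine Finset.sum_congr rfl fun σ _ => ?_
  rw [dotV_sum]
  refine Eq.trans ?_ (Finset.sum_coe_sort R _)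
  refine Finset.sum_congr rfl fun ρ _ => ?_
  rw [dotV_sub, bil_eq, bil_eq, ← hr σ, ← pt_sub, hr σ, D1_eq hr, D1_eq hr]

lemma green_eq (hA : IsUnit A.det) (hr : ∀ ρ, latticePt d A (r ρ) = ρ) {N : ℕ}
    {C : Vec d → Vec d → Fin N → Fin N → ℝ} {G : Vec d → Fin N → Fin N → ℝ}
    (hG : ∀ (k : Fin N) (z : Fin d → ℤ), Hop d N R C (col G k) (latticePt d A z) =
        if latticePt d A z = 0 then Pi.single k 1 else 0) (k : Fin N) (e : Fin N → ℝ)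
    (z : Fin d → ℤ) :
    Lw r (fun σ ρ : {x // x ∈ R} => bil (C σ ρ)) e (fun z => col G k (latticePt d A z)) z =
      if z = 0 then e k else 0 := by
  rw [Lw_eq hr, hG]
  by_cases hz : z = 0
  · rw [if_pos hz, if_pos ((pt_eq_zero hA z).2 hz)]
    simp [dotV, Pi.single_apply]
  · rw [if_neg hz, if_neg (fun h => hz ((pt_eq_zero hA z).1 h))]
    simp [dotV]

lemma h1_summable (hr : ∀ ρ, latticePt d A (r ρ) = ρ) {N : ℕ} {u : Vec d → Vec N}
    (hu : InH1 A R u) (ρ : {x // x ∈ R}) :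
    Summable fun z => ‖df (r ρ) (fun z => u (latticePt d A z)) z‖ ^ 2 := by
  refine Summable.of_nonneg_of_le (fun z => by positivity) (fun z => ?_) hu
  rw [Dnorm1Sq, ← Finset.sum_coe_sort]
  refine le_trans ?_ (Finset.single_le_sum
    (f := fun ρ : {x // x ∈ R} => Defect.enorm (D1 (ρ : Vec d) u (latticePt d A z)) ^ 2)
    (fun _ _ => by positivity) (Finset.mem_univ ρ))
  rw [← D1_eq hr]
  exact pow_le_pow_left₀ (norm_nonneg _) (norm_le_enorm _) 2

end Setup

section Equation

variable {d : ℕ} {A : Matrix (Fin d) (Fin d) ℝ}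
variable {R : Finset (Vec d)} {r : {x // x ∈ R} → (Fin d → ℤ)} {N : ℕ}

/-- The superlinear part of the site force. -/
def Phi (R : Finset (Vec d)) (V : ({x // x ∈ R} → Vec N) → ℝ) (ρ : {x // x ∈ R}) (k : Fin N)
    (x : {x // x ∈ R} → Fin N → ℝ) : ℝ :=
  gradV R V ρ x k - gradV R V ρ 0 k - ∑ ρ' : {x // x ∈ R}, ∑ j, CofV R V ρ ρ' k j * x ρ' j

lemma pi_expand (x : {x // x ∈ R} → Fin N → ℝ) :
    x = ∑ ρ' : {x // x ∈ R}, ∑ j, x ρ' j •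
      (Pi.single ρ' (Pi.single j 1) : {x // x ∈ R} → Vec N) := by
  funext ρ i
  simp only [Finset.sum_apply, Pi.smul_apply, smul_eq_mul]
  rw [Finset.sum_eq_single ρ]
  · rw [Finset.sum_eq_single i]
    · simp
    · intro j _ hj; simp [Pi.single_eq_of_ne hj.symm]
    · simp
  · intro ρ' _ hρ'
    refine Finset.sum_eq_zero fun j _ => ?_
    rw [Pi.single_eq_of_ne hρ'.symm]; simp
  · simp

lemma lin_eq (V : ({x // x ∈ R} → Vec N) → ℝ) (ρ : {x // x ∈ R}) (k : Fin N)
    (x : {x // x ∈ R} → Fin N → ℝ) :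
    ∑ ρ' : {x // x ∈ R}, ∑ j, CofV R V ρ ρ' k j * x ρ' j =
      fderiv ℝ (fderiv ℝ V) 0 (Pi.single ρ (Pi.single k 1)) x := by
  conv_rhs => rw [pi_expand x]
  rw [map_sum]
  refine Finset.sum_congr rfl fun ρ' _ => ?_
  rw [map_sum]
  refine Finset.sum_congr rfl fun j _ => ?_
  rw [map_smul, smul_eq_mul, mul_comm, CofV, dif_pos ρ.2, dif_pos ρ'.2, iteratedFDeriv_two_apply]
  rfl

lemma Phi_zero (V : ({x // x ∈ R} → Vec N) → ℝ) (ρ : {x // x ∈ R}) (k : Fin N) :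
    Phi R V ρ k 0 = 0 := by simp [Phi]

lemma Phi_contDiff {V : ({x // x ∈ R} → Vec N) → ℝ} {n K : ℕ} (hK : n + 1 ≤ K)
    (hV : ContDiff ℝ (K : ℕ∞) V) (ρ : {x // x ∈ R}) (k : Fin N) :
    ContDiff ℝ ((n : ℕ) : ℕ∞) (Phi R V ρ k) := by
  have h1 : ContDiff ℝ ((n : ℕ) : ℕ∞) (fderiv ℝ V) := by
    refine hV.fderiv_right ?_
    exact_mod_cast hK
  have h2 : Phi R V ρ k = fun x => fderiv ℝ V x (Pi.single ρ (Pi.single k 1)) - gradV R V ρ 0 k -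
      fderiv ℝ (fderiv ℝ V) 0 (Pi.single ρ (Pi.single k 1)) x := by
    funext x
    rw [Phi, lin_eq, gradV]
  rw [h2]
  exact ((h1.clm_apply contDiff_const).sub contDiff_const).sub (ContinuousLinearMap.contDiff _)

lemma Phi_fderiv {V : ({x // x ∈ R} → Vec N) → ℝ} {K : ℕ} (hK : 2 ≤ K)
    (hV : ContDiff ℝ (K : ℕ∞) V) (ρ : {x // x ∈ R}) (k : Fin N) :
    fderiv ℝ (Phi R V ρ k) 0 = 0 := by
  have hV2 : ContDiff ℝ (2 : ℕ∞) V := hV.of_le (by exact_mod_cast hK)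
  have h1 : ContDiff ℝ (1 : ℕ∞) (fderiv ℝ V) := by
    refine hV2.fderiv_right ?_
    norm_cast
  have h2 : Phi R V ρ k = fun x => fderiv ℝ V x (Pi.single ρ (Pi.single k 1)) - gradV R V ρ 0 k -
      fderiv ℝ (fderiv ℝ V) 0 (Pi.single ρ (Pi.single k 1)) x := by
    funext x
    rw [Phi, lin_eq, gradV]
  have hsym : IsSymmSndFDerivAt ℝ V 0 := by
    refine hV2.contDiffAt.isSymmSndFDerivAt ?_
    simp
  have hd1 : HasFDerivAt (fderiv ℝ V) (fderiv ℝ (fderiv ℝ V) 0) 0 :=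
    (h1.differentiable (by norm_num)).differentiableAt.hasFDerivAt
  have hd2 := ((hd1.clm_apply (hasFDerivAt_const
    (Pi.single ρ (Pi.single k 1) : {x // x ∈ R} → Vec N) 0)).sub_const (gradV R V ρ 0 k)).sub
      (fderiv ℝ (fderiv ℝ V) 0 (Pi.single ρ (Pi.single k 1))).hasFDerivAt
  rw [h2]
  refine (hd2.fderiv).trans ?_
  ext x
  simp [hsym.eq x]

lemma test_sum {ι Z : Type*} [Fintype ι] [AddCommGroup Z] [DecidableEq Z] (r : ι → Z)
    (F : ι → Z → Vec N) (e : Vec N) (z0 : Z) :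
    ∑' z, ∑ ρ, dotV (F ρ z) (df (r ρ) (fun z => if z = z0 then e else 0) z) =
      ∑ ρ, dotV e (F ρ (z0 - r ρ) - F ρ z0) := by
  refine HasSum.tsum_eq (hasSum_sum fun ρ _ => ?_)
  have h := (hasSum_ite_eq (z0 - r ρ) (dotV e (F ρ (z0 - r ρ)))).sub
    (hasSum_ite_eq z0 (dotV e (F ρ z0)))
  rw [dotV_sub]
  refine Eq.mp (congrArg (fun f => HasSum f _) (funext fun z => Eq.symm ?_)) h
  change dotV (F ρ z) ((if z + r ρ = z0 then e else 0) - (if z = z0 then e else 0)) = _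
  rw [dotV_sub]
  congr 1
  · by_cases hz : z = z0 - r ρ
    · rw [if_pos hz, if_pos (by rw [hz]; abel), hz, dotV_comm]
    · rw [if_neg hz, if_neg (fun h => hz (by rw [← h]; abel))]
      simp [dotV]
  · by_cases hz : z = z0
    · rw [if_pos hz, if_pos hz, hz, dotV_comm]
    · rw [if_neg hz, if_neg hz]
      simp [dotV]

lemma equ_of (hA : IsUnit A.det) (hr : ∀ ρ, latticePt d A (r ρ) = ρ)
    {V : ({x // x ∈ R} → Vec N) → ℝ} {g : Vec d → {x // x ∈ R} → Vec N} {u : Vec d → Vec N}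
    (hequil : ∀ v : Vec d → Vec N, InHc A R v →
      (∑' z : Fin d → ℤ, deltaEsite R V u v (latticePt d A z)) =
        ∑' z : Fin d → ℤ, ∑ ρ ∈ R.attach,
          dotV (g (latticePt d A z) ρ) (D1 (ρ : Vec d) v (latticePt d A z)))
    (e : Fin N → ℝ) (z : Fin d → ℤ) :
    Lw r (fun σ ρ : {x // x ∈ R} => bil (CofV R V σ ρ)) e (fun z => u (latticePt d A z)) z =
      ∑ ρ, ∑ k, e k *
      ((g (latticePt d A (z - r ρ)) ρ k -
          Phi R V ρ k (fun ρ' => df (r ρ') (fun z => u (latticePt d A z)) (z - r ρ))) -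
        (g (latticePt d A z) ρ k -
          Phi R V ρ k (fun ρ' => df (r ρ') (fun z => u (latticePt d A z)) z))) := by
  classical
  set v : Vec d → Vec N := fun x => if x = latticePt d A z then e else 0 with hv
  have hvz : (fun y => v (latticePt d A y)) = fun y => if y = z then e else 0 := by
    funext y
    simp only [hv, (pt_inj hA).eq_iff]
  have h1 := hequil v (inHc_of (r := r) hA hr (by
    rw [hvz]
    refine (Set.finite_singleton z).subset fun y hy => ?_
    by_contra hne
    exact hy (if_neg hne)))
  simp only [deltaEsite, D1_eq hr, hvz, ← Finset.univ_eq_attach] at h1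
  rw [test_sum r (fun ρ y => gradV R V ρ (Dstencil R u (latticePt d A y))),
    test_sum r (fun ρ y => g (latticePt d A y) ρ)] at h1
  have hD : ∀ y, Dstencil R u (latticePt d A y) =
      fun ρ' => df (r ρ') (fun z => u (latticePt d A z)) y := by
    intro y; funext ρ'; exact D1_eq hr u ρ' y
  simp only [hD] at h1
  have key : ∀ ρ : {x // x ∈ R}, ∀ y, ∑ ρ' : {x // x ∈ R}, bil (CofV R V ρ ρ') e
      (df (r ρ') (fun z => u (latticePt d A z)) y) = ∑ k, e k *
        ∑ ρ' : {x // x ∈ R}, ∑ j, CofV R V ρ ρ' k j *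
          df (r ρ') (fun z => u (latticePt d A z)) y j := by
    intro ρ y
    simp only [bil_apply]
    rw [Finset.sum_comm]
    refine Finset.sum_congr rfl fun k _ => ?_
    simp only [Finset.mul_sum]
    exact Finset.sum_congr rfl fun ρ' _ => Finset.sum_congr rfl fun j _ => by ring
  have h2 := sub_eq_zero.2 h1.symm
  rw [← Finset.sum_sub_distrib] at h2
  rw [Lw, ← add_zero (∑ σ : {x // x ∈ R}, _), ← h2, ← Finset.sum_add_distrib]
  refine Finset.sum_congr rfl fun ρ _ => ?_
  rw [Finset.sum_sub_distrib, key, key, dotV, dotV, ← Finset.sum_sub_distrib,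
    ← Finset.sum_sub_distrib, ← Finset.sum_add_distrib]
  refine Finset.sum_congr rfl fun k _ => ?_
  simp only [Phi, Pi.sub_apply]
  ring

lemma g_dec (hd : 2 ≤ d) (hA : IsUnit A.det) {g : Vec d → {x // x ∈ R} → Vec N}
    (hgsupp : ∃ rad : ℝ, ∀ z : Fin d → ℤ, rad ≤ Defect.enorm (latticePt d A z) →
      ∀ ρ : {x // x ∈ R}, g (latticePt d A z) ρ = 0) (ρ : {x // x ∈ R}) (k : Fin N) (n s : ℕ) :
    Dec (fun _ : Unit => fun z => ang (latticePt d A z)) n s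
      (fun _ z => g (latticePt d A z) ρ k) := by
  have hw := ang_wt hd hA
  refine Dec.of_bd hw.good ?_
  obtain ⟨rad, hrad⟩ := hgsupp
  have hf := finite_ball hA rad
  have hp : ∀ z, 0 < ang (latticePt d A z) := fun z => ang_pos _
  have hnn : ∀ z, 0 ≤ ‖g (latticePt d A z) ρ k‖ * ang (latticePt d A z) ^ (s + n) := fun z => by
    have := hp z; positivity
  refine ⟨∑ z ∈ hf.toFinset, ‖g (latticePt d A z) ρ k‖ * ang (latticePt d A z) ^ (s + n),
    Finset.sum_nonneg fun z _ => hnn z, fun _ z => ?_⟩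
  have hpz := hp z
  by_cases hz : Defect.enorm (latticePt d A z) < rad
  · have := Finset.single_le_sum
      (f := fun z => ‖g (latticePt d A z) ρ k‖ * ang (latticePt d A z) ^ (s + n))
      (fun z _ => hnn z) (hf.mem_toFinset.2 hz)
    rw [← div_eq_mul_inv, le_div_iff₀ (by positivity)]
    exact this
  · change ‖g (latticePt d A z) ρ k‖ ≤ _
    rw [hrad z (not_lt.1 hz) ρ, Pi.zero_apply, norm_zero]
    exact mul_nonneg (Finset.sum_nonneg fun z _ => hnn z) (by positivity)

end Equation

section Final

lemma SpS_arrays {Z E : Type*} [AddCommGroup Z] [NormedAddCommGroup E] [NormedSpace ℝ E]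
    {d N p : ℕ} {a : Fin d → Z} {h : Fin N → Z → E} {x : Z → E} (hx : x ∈ SpS a p h) :
    ∃ b : (i : ℕ) → Fin N → (Fin i → Fin d) → ℝ, (∀ i k, SymArr (b i k)) ∧
      x = fun z => ∑ i ∈ Finset.Icc 1 p, ∑ k, ∑ σv : Fin i → Fin d,
        b i k σv • DD (List.ofFn fun m => a (σv m)) (h k) z := by
  classical
  induction hx using Submodule.span_induction with
  | mem x hx =>
    obtain ⟨σ, k0, h1, h2, rfl⟩ := hx
    set T : Finset (Fin σ.length → Fin d) :=
      Finset.univ.filter fun τ => (List.ofFn τ).Perm σ with hT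
    have hT0 : (T.card : ℝ) ≠ 0 := by
      have : σ.get ∈ T := by
        rw [hT, Finset.mem_filter]
        exact ⟨Finset.mem_univ _, by rw [List.ofFn_get]⟩
      exact_mod_cast (Finset.card_pos.2 ⟨_, this⟩).ne'
    refine ⟨fun i k τ => if k = k0 ∧ (List.ofFn τ).Perm σ then (T.card : ℝ)⁻¹ else 0,
      fun i k π τ => ?_, ?_⟩
    · have hp : (List.ofFn (τ ∘ π)).Perm (List.ofFn τ) := Equiv.Perm.ofFn_comp_perm π τ
      have : (List.ofFn (τ ∘ π)).Perm σ ↔ (List.ofFn τ).Perm σ :=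
        ⟨fun hh => hp.symm.trans hh, fun hh => hp.trans hh⟩
      simp only [this]
    · funext z
      rw [Finset.sum_eq_single σ.length]
      · rw [Finset.sum_eq_single k0]
        · simp only [true_and, ite_smul, zero_smul]
          rw [← Finset.sum_filter]
          have : ∀ τ ∈ T, (T.card : ℝ)⁻¹ • DD (List.ofFn fun m => a (τ m)) (h k0) z =
              (T.card : ℝ)⁻¹ • DD (σ.map a) (h k0) z := by
            intro τ hτ
            have hτ' := (Finset.mem_filter.1 hτ).2
            have : (List.ofFn fun m => a (τ m)).Perm (σ.map a) := by
              have e : (List.ofFn fun m => a (τ m)) = (List.ofFn τ).map a := by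
                rw [List.map_ofFn]; rfl
              rw [e]
              exact hτ'.map a
            rw [DD_perm this]
          rw [Finset.sum_congr rfl this, Finset.sum_const, ← Nat.cast_smul_eq_nsmul ℝ, smul_smul,
            mul_inv_cancel₀ hT0, one_smul]
        · intro k _ hk
          exact Finset.sum_eq_zero fun τ _ => by simp [hk]
        · simp
      · intro i _ hi
        refine Finset.sum_eq_zero fun k _ => Finset.sum_eq_zero fun τ _ => ?_
        beta_reduce
        rw [if_neg, zero_smul]
        rintro ⟨-, hp⟩
        exact hi (by simpa using hp.length_eq)
      · intro hn
        exact absurd (Finset.mem_Icc.2 ⟨h1, h2⟩) hn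
  | zero => exact ⟨fun _ _ _ => 0, fun _ _ _ _ => rfl, by funext z; simp⟩
  | add x y _ _ hx hy =>
    obtain ⟨b, hb, rfl⟩ := hx
    obtain ⟨c, hc, rfl⟩ := hy
    refine ⟨fun i k τ => b i k τ + c i k τ, fun i k π τ => ?_, ?_⟩
    · change b i k (τ ∘ π) + c i k (τ ∘ π) = _
      rw [hb i k π τ, hc i k π τ]
    · funext z
      simp only [Pi.add_apply, add_smul, Finset.sum_add_distrib]
  | smul t x _ hx =>
    obtain ⟨b, hb, rfl⟩ := hx
    refine ⟨fun i k τ => t * b i k τ, fun i k π τ => ?_, ?_⟩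
    · change t * b i k (τ ∘ π) = _
      rw [hb i k π τ]
    · funext z
      simp only [Pi.smul_apply, Finset.smul_sum, smul_smul]

end Final

/-- Remark: low-order pure multipole expansion for point
defects, with no logarithmic factor. -/
theorem point_defect_pure_multipole_expansion
    (d : ℕ) (hd : 2 ≤ d)
    (A : Matrix (Fin d) (Fin d) ℝ) (hA : IsUnit A.det)
    (R : Finset (Vec d)) (hR0 : (0 : Vec d) ∉ R)
    (hRlat : ∀ ρ ∈ R, ρ ∈ Lattice d A)
    (hRsym : ∀ ρ ∈ R, -ρ ∈ R)
    (hRspan : ∀ x ∈ Lattice d A, ∃ c : Vec d → ℤ, x = ∑ ρ ∈ R, (c ρ : ℝ) • ρ)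
    (p J K : ℕ) (hp : p < d) (hK : J + 2 ≤ K)
    (V : ({x // x ∈ R} → Vec d) → ℝ)
    (hV : ContDiff ℝ (K : ℕ∞) V)
    (hVsym : PointSym R hRsym V)
    (hstab : IsStable d d A R (CofV R V))
    (G : Vec d → Fin d → Fin d → ℝ) (hG : IsLatticeGreen d d A R (CofV R V) G)
    (g : Vec d → {x // x ∈ R} → Vec d)
    (hgsupp : ∃ rad : ℝ, ∀ z : Fin d → ℤ, rad ≤ enorm (latticePt d A z) →
      ∀ ρ : {x // x ∈ R}, g (latticePt d A z) ρ = 0)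
    (ubar : Vec d → Vec d) (hubar : InH1 A R ubar)
    (hequil : ∀ v : Vec d → Vec d, InHc A R v →
      (∑' z : Fin d → ℤ, deltaEsite R V ubar v (latticePt d A z)) =
        ∑' z : Fin d → ℤ, ∑ ρ ∈ R.attach,
          dotV (g (latticePt d A z) ρ) (D1 (ρ : Vec d) v (latticePt d A z)))
    (s : Fin d → Vec d) (hslat : ∀ i, s i ∈ Lattice d A)
    (hsind : LinearIndependent ℝ s)
    (hsspan : ∀ x ∈ Lattice d A, ∃ z : Fin d → ℤ, x = ∑ i, (z i : ℝ) • s i) :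
    ∃ b : (i : ℕ) → Fin d → (Fin i → Fin d) → ℝ,
      (∀ (i : ℕ) (k : Fin d), SymArr (b i k)) ∧
      (∀ j : ℕ, 1 ≤ j → j ≤ J → ∃ Cj : ℝ, ∀ z : Fin d → ℤ,
        DnormJ R j
          (fun ℓ => ubar ℓ -
            ∑ i ∈ Finset.Icc 1 p, ∑ k : Fin d,
              multipole d d s i (b i k) (col G k) ℓ)
          (latticePt d A z) ≤
          Cj * ang (latticePt d A z) ^ ((1 : ℝ) - d - p - j)) := by
  obtain _ | n := J
  · exact ⟨fun _ _ _ => 0, fun _ _ _ _ => rfl, fun j h1 h2 => by omega⟩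
  classical
  have hinf : Infinite (Fin d → ℤ) := by
    haveI : Nonempty (Fin d) := ⟨⟨0, by omega⟩⟩
    infer_instance
  choose r' hr' using hRlat
  let r : {x // x ∈ R} → (Fin d → ℤ) := fun ρ => r' ρ.1 ρ.2
  have hr : ∀ ρ, latticePt d A (r ρ) = ρ := fun ρ => hr' ρ.1 ρ.2
  have hgen := hgen_of hA hr hRspan
  obtain ⟨a, ha, hpath⟩ := exists_coord hd hA s hslat hsind hsspan (Fin d → ℝ)
  have hmain := bootstrap (ang_wt hd hA) hd r hgen
    (fun σ ρ : {x // x ∈ R} => bil (CofV R V σ ρ)) (stabW_of hA hr hstab)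
    (G := fun k z => col G k (latticePt d A z)) (green_eq hA hr hG.1)
    (green_dec hd hA hr hgen hG.2) (u := fun z => ubar (latticePt d A z)) (h1_summable hr hubar)
    n (Φ := Phi R V) (Phi_contDiff (by omega) hV) (Phi_zero V) (Phi_fderiv (by omega) hV)
    (g := fun ρ k z => g (latticePt d A z) ρ k)
    (fun ρ k n => g_dec hd hA hgsupp ρ k n (2 * d)) (equ_of hA hr hequil)
    hpath (cutProp hd hA) (p := p) (by omega)
  obtain ⟨y, hy, q, hq, hyq⟩ := Submodule.mem_sup.1 hmain
  obtain ⟨b, hb, hyb⟩ := SpS_arrays hy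
  refine ⟨b, hb, fun j h1 h2 => ?_⟩
  refine dnorm_bound hr (s := d - 1 + p) (fun l hl => ?_) (by
    rw [Nat.cast_add, Nat.cast_add, Nat.cast_sub (by omega)]; push_cast; ring)
  have hrem : (fun z => ubar (latticePt d A z) - ∑ i ∈ Finset.Icc 1 p, ∑ k : Fin d,
      multipole d d s i (b i k) (col G k) (latticePt d A z)) = q := by
    funext z
    have h3 := congrFun hyq z
    rw [hyb] at h3
    simp only [Pi.add_apply] at h3
    rw [← h3, sub_eq_iff_eq_add, add_comm]
    congr 1
    refine Finset.sum_congr rfl fun i _ => Finset.sum_congr rfl fun k _ => ?_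
    refine Finset.sum_congr rfl fun σv _ => ?_
    rw [Dmulti_eq (A := A) (fun m => a (σv m)) (fun m => ha (σv m)) (col G k) z]
  change Bd _ _ (fun _ => DD l (fun z => ubar (latticePt d A z) - ∑ i ∈ Finset.Icc 1 p,
    ∑ k : Fin d, multipole d d s i (b i k) (col G k) (latticePt d A z)))
  rw [hrem, ← hl]
  exact hq l (by omega) (by omega)

end Defect
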